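/- Let N ≥ 3 and let K = ⋃_{i=1}^k \bar{B}_{ρ_i}(x_i) be a finite union of k ≥ 1 pairwise disjoint closed balls in ℝ^N with radii ρ_i > 0. Let γ ∈ (0,1), let φ : (0,∞) → (0,∞) be nonincreasing and locally γ-Hölder continuous with ∫₀^∞ r·φ(r) dr < ∞, and let f : (0,∞) → (0,∞) be C¹ and strictly decreasing. Then there exists a function ũ : ℝ^N \ int(K) → ℝ which is continuous on ℝ^N \ int(K), twice continuously differentiable on ℝ^N \ K, and satisfies: −Δũ(x) = φ(δ_K(x)) f(ũ(x)) and ũ(x) > 0 for all x ∈ ℝ^N \ K; ũ = 0 on ∂K; ũ(x) → 0 as |x| → ∞; and ũ is minimal, i.e. for every C² positive solution u of the inequality −Δu ≥ φ(δ_K(x)) f(u) on ℝ^N \ K one has ũ(x) ≤ u(x) for all x ∈ ℝ^N \ K. -/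

import Mathlib

open Metric Set MeasureTheory Filter

noncomputable def laplacian {N : ℕ} (u : EuclideanSpace ℝ (Fin N) → ℝ)
    (x : EuclideanSpace ℝ (Fin N)) : ℝ :=
  ∑ i, iteratedFDeriv ℝ 2 u x ![EuclideanSpace.single i 1, EuclideanSpace.single i 1]

section PartA

open scoped Topology

abbrev Eu (N : ℕ) := EuclideanSpace ℝ (Fin N)

lemma hda_of {f g : ℝ → ℝ} {a b x : ℝ} (h : HasDerivAt f a x) (hf : ∀ t, g t = f t)
    (hab : b = a) : HasDerivAt g b x := by
  have : g = f := funext hf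
  rw [this, hab]; exact h

/-- Second derivative along a line. -/
def D2At (q : ℝ → ℝ) (s : ℝ) : Prop :=
  ∃ d : ℝ → ℝ, (∀ᶠ t in 𝓝 (0:ℝ), HasDerivAt q (d t) t) ∧ HasDerivAt d s 0

lemma D2At.add {p q : ℝ → ℝ} {a b : ℝ} (hp : D2At p a) (hq : D2At q b) :
    D2At (fun t => p t + q t) (a + b) := by
  obtain ⟨d, h1, h2⟩ := hp
  obtain ⟨e, h3, h4⟩ := hq
  refine ⟨fun t => d t + e t, ?_, h2.add h4⟩
  filter_upwards [h1, h3] with t ht ht'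
  exact ht.add ht'

lemma D2At.const_mul {p : ℝ → ℝ} {a : ℝ} (c : ℝ) (hp : D2At p a) :
    D2At (fun t => c * p t) (c * a) := by
  obtain ⟨d, h1, h2⟩ := hp
  refine ⟨fun t => c * d t, ?_, h2.const_mul c⟩
  filter_upwards [h1] with t ht
  exact ht.const_mul c

lemma D2At.const (c : ℝ) : D2At (fun _ => c) 0 :=
  ⟨fun _ => 0, Eventually.of_forall fun t => hasDerivAt_const t c, hasDerivAt_const _ _⟩

lemma D2At.nonpos {p : ℝ → ℝ} {a : ℝ} (hp : D2At p a) (hm : IsLocalMax p 0) : a ≤ 0 := by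
  obtain ⟨d, h1, h2⟩ := hp
  by_contra hlt
  push Not at hlt
  have hd0 : deriv p =ᶠ[𝓝 0] d := by
    filter_upwards [h1] with t ht using ht.deriv
  have hdd : deriv (deriv p) 0 = a := by
    rw [hd0.deriv_eq]; exact h2.deriv
  have hmin : IsLocalMin p 0 :=
    isLocalMin_of_deriv_deriv_pos (by rw [hdd]; exact hlt) hm.deriv_eq_zero
      h1.self_of_nhds.continuousAt
  have hconst : p =ᶠ[𝓝 0] fun _ => p 0 := by
    filter_upwards [hm, hmin] with t h h' using le_antisymm h h'
  have hd00 : d =ᶠ[𝓝 0] fun _ => 0 := by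
    have := hconst.eventuallyEq_nhds
    filter_upwards [this, hd0] with t h h'
    rw [← h', h.deriv_eq]; simp
  have : a = 0 := by
    rw [← h2.deriv, hd00.deriv_eq]; simp
  linarith

/-- `u` has line Laplacian `L` at `x`. -/
def LapAt {N : ℕ} (u : Eu N → ℝ) (x : Eu N) (L : ℝ) : Prop :=
  ∃ s : Fin N → ℝ, ∑ i, s i = L ∧
    ∀ i, D2At (fun t => u (x + t • (EuclideanSpace.single i (1:ℝ) : Eu N))) (s i)

variable {N : ℕ}

lemma LapAt.add {u v : Eu N → ℝ} {x : Eu N} {a b : ℝ} (hu : LapAt u x a) (hv : LapAt v x b) :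
    LapAt (fun y => u y + v y) x (a + b) := by
  obtain ⟨s, rfl, hs⟩ := hu
  obtain ⟨s', rfl, hs'⟩ := hv
  exact ⟨fun i => s i + s' i, Finset.sum_add_distrib, fun i => (hs i).add (hs' i)⟩

lemma LapAt.const_mul {u : Eu N → ℝ} {x : Eu N} {a : ℝ} (c : ℝ) (hu : LapAt u x a) :
    LapAt (fun y => c * u y) x (c * a) := by
  obtain ⟨s, rfl, hs⟩ := hu
  exact ⟨fun i => c * s i, by rw [Finset.mul_sum], fun i => (hs i).const_mul c⟩

lemma LapAt.const (c : ℝ) (x : Eu N) : LapAt (fun _ => c) x 0 :=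
  ⟨fun _ => 0, by simp, fun _ => D2At.const c⟩

lemma LapAt.sub {u v : Eu N → ℝ} {x : Eu N} {a b : ℝ} (hu : LapAt u x a) (hv : LapAt v x b) :
    LapAt (fun y => u y - v y) x (a - b) := by
  have := hu.add (hv.const_mul (-1))
  simpa [sub_eq_add_neg] using this

lemma LapAt.sum {ι : Type*} (S : Finset ι) {u : ι → Eu N → ℝ} {x : Eu N} {a : ι → ℝ}
    (hu : ∀ i ∈ S, LapAt (u i) x (a i)) :
    LapAt (fun y => ∑ i ∈ S, u i y) x (∑ i ∈ S, a i) := by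
  classical
  induction S using Finset.induction_on with
  | empty => simpa using LapAt.const 0 x
  | insert i S hi ih =>
    simp only [Finset.sum_insert hi]
    exact (hu i (by simp)).add (ih fun j hj => hu j (by simp [hj]))

lemma LapAt.nonpos {u : Eu N → ℝ} {x : Eu N} {a : ℝ} (hu : LapAt u x a) (hm : IsLocalMax u x) :
    a ≤ 0 := by
  obtain ⟨s, rfl, hs⟩ := hu
  refine Finset.sum_nonpos fun i _ => (hs i).nonpos ?_
  have hc : ContinuousAt (fun t : ℝ => x + t • (EuclideanSpace.single i (1:ℝ) : Eu N)) 0 := by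
    fun_prop
  have : Tendsto (fun t : ℝ => x + t • (EuclideanSpace.single i (1:ℝ) : Eu N)) (𝓝 0) (𝓝 x) := by
    have := hc.tendsto; simpa using this
  have h2 := this.eventually hm
  filter_upwards [h2] with t ht
  simpa using ht

lemma LapAt.of_contDiffAt {u : Eu N → ℝ} {x : Eu N} (hu : ContDiffAt ℝ 2 u x) :
    LapAt u x (laplacian u x) := by
  refine ⟨_, rfl, fun i => ?_⟩
  set e : Eu N := EuclideanSpace.single i (1:ℝ) with he
  have hl : ∀ t : ℝ, HasDerivAt (fun t : ℝ => x + t • e) e t := fun t => by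
    simpa using ((hasDerivAt_id t).smul_const e).const_add x
  have htend : Tendsto (fun t : ℝ => x + t • e) (𝓝 0) (𝓝 x) := by
    have := (hl 0).continuousAt.tendsto; simpa using this
  refine ⟨fun t => fderiv ℝ u (x + t • e) e, ?_, ?_⟩
  · have : ∀ᶠ y in 𝓝 x, ContDiffAt ℝ 2 u y := hu.eventually (by simp)
    filter_upwards [htend.eventually this] with t ht
    exact (ht.differentiableAt (by norm_num)).hasFDerivAt.comp_hasDerivAt t (hl t)
  · rw [iteratedFDeriv_two_apply]
    have h1 : ContDiffAt ℝ 1 (fderiv ℝ u) x := hu.fderiv_right (by norm_num)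
    have h2 : HasFDerivAt (fderiv ℝ u) (fderiv ℝ (fderiv ℝ u) x) (x + (0:ℝ) • e) := by
      simpa using (h1.differentiableAt (by norm_num)).hasFDerivAt
    have h3 := h2.comp_hasDerivAt (0:ℝ) (hl 0)
    have h4 := h3.clm_apply (hasDerivAt_const (0:ℝ) e)
    simpa using h4

lemma norm_add_single_sq (y : Eu N) (i : Fin N) (t : ℝ) :
    ‖y + t • (EuclideanSpace.single i (1:ℝ) : Eu N)‖ ^ 2 = ‖y‖ ^ 2 + 2 * t * y i + t ^ 2 := by
  rw [norm_add_sq_real, norm_smul, inner_smul_right, EuclideanSpace.inner_single_right]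
  simp
  ring

/-- Laplacian of a function of the squared distance. -/
lemma LapAt.comp_norm_sq {a a1 : ℝ → ℝ} {a2 : ℝ} (c x : Eu N)
    (h1 : ∀ᶠ q in 𝓝 (‖x - c‖ ^ 2), HasDerivAt a (a1 q) q)
    (h2 : HasDerivAt a1 a2 (‖x - c‖ ^ 2)) :
    LapAt (fun y => a (‖y - c‖ ^ 2)) x (4 * ‖x - c‖ ^ 2 * a2 + 2 * N * a1 (‖x - c‖ ^ 2)) := by
  set y := x - c with hy
  refine ⟨fun i => a2 * (2 * y i) * (2 * y i) + a1 (‖y‖ ^ 2) * 2, ?_, fun i => ?_⟩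
  · rw [Finset.sum_add_distrib, EuclideanSpace.norm_sq_eq]
    simp only [Finset.sum_const, Finset.card_univ, Fintype.card_fin, nsmul_eq_mul,
      Real.norm_eq_abs, sq_abs]
    rw [Finset.mul_sum, Finset.sum_mul]
    congr 1
    · exact Finset.sum_congr rfl fun i _ => by ring
    · ring
  · have key : (fun t : ℝ => a (‖x + t • (EuclideanSpace.single i (1:ℝ) : Eu N) - c‖ ^ 2))
        = fun t => a (‖y‖ ^ 2 + 2 * t * y i + t ^ 2) := by
      funext t
      rw [← norm_add_single_sq]
      congr 3
      rw [hy]; abel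
    rw [key]
    have hp : ∀ t : ℝ, HasDerivAt (fun t : ℝ => ‖y‖ ^ 2 + 2 * t * y i + t ^ 2)
        (2 * y i + 2 * t) t := fun t => by
      have := ((((hasDerivAt_id t).const_mul 2).mul_const (y i)).const_add (‖y‖ ^ 2)).add
        ((hasDerivAt_id t).pow 2)
      exact hda_of this (fun t => by simp) (by simp)
    have htend : Tendsto (fun t : ℝ => ‖y‖ ^ 2 + 2 * t * y i + t ^ 2) (𝓝 0) (𝓝 (‖y‖ ^ 2)) := by
      have := (hp 0).continuousAt.tendsto; simpa using this
    refine ⟨fun t => a1 (‖y‖ ^ 2 + 2 * t * y i + t ^ 2) * (2 * y i + 2 * t), ?_, ?_⟩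
    · filter_upwards [htend.eventually h1] with t ht
      exact HasDerivAt.comp t ht (hp t)
    · have h2' : HasDerivAt a1 a2 (‖y‖ ^ 2 + 2 * (0:ℝ) * y i + (0:ℝ) ^ 2) := by simpa using h2
      have h3 := HasDerivAt.comp (0:ℝ) h2' (hp 0)
      have h4 : HasDerivAt (fun t : ℝ => 2 * y i + 2 * t) 2 0 := by
        simpa using ((hasDerivAt_id (0:ℝ)).const_mul 2).const_add (2 * y i)
      have h5 := h3.mul h4
      exact hda_of h5 (fun t => by simp) (by simp)

lemma LapAt.norm_sq (c x : Eu N) : LapAt (fun y => ‖y - c‖ ^ 2) x (2 * N) := by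
  have := LapAt.comp_norm_sq (a := fun q => q) (a1 := fun _ => 1) (a2 := 0) c x
    (Eventually.of_forall fun q => hasDerivAt_id q) (hasDerivAt_const _ _)
  simpa using this

/-- Laplacian of a radial function. -/
lemma LapAt.radial {v v1 : ℝ → ℝ} {v2 : ℝ} (c x : Eu N) (hx : x ≠ c)
    (h1 : ∀ᶠ r in 𝓝 ‖x - c‖, HasDerivAt v (v1 r) r)
    (h2 : HasDerivAt v1 v2 ‖x - c‖) :
    LapAt (fun y => v ‖y - c‖) x (v2 + (N - 1) / ‖x - c‖ * v1 ‖x - c‖) := by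
  set R := ‖x - c‖ with hR
  have hRpos : 0 < R := norm_pos_iff.2 (sub_ne_zero.2 hx)
  have hsq : Real.sqrt (R ^ 2) = R := Real.sqrt_sq hRpos.le
  have hcont : Tendsto Real.sqrt (𝓝 (R ^ 2)) (𝓝 R) := by
    have := Real.continuous_sqrt.tendsto (R ^ 2); rwa [hsq] at this
  have hne : ∀ᶠ q in 𝓝 (R ^ 2), 0 < q := lt_mem_nhds (by positivity)
  have H1 : ∀ᶠ q in 𝓝 (R ^ 2), HasDerivAt (fun q => v (Real.sqrt q))
      (v1 (Real.sqrt q) * (1 / (2 * Real.sqrt q))) q := by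
    filter_upwards [hcont.eventually h1, hne] with q hq hq0
    exact HasDerivAt.comp q hq (Real.hasDerivAt_sqrt hq0.ne')
  have H2 : HasDerivAt (fun q => v1 (Real.sqrt q) * (1 / (2 * Real.sqrt q)))
      (v2 * (1 / (2 * R)) * (1 / (2 * R)) + v1 R * (-(2 * (1 / (2 * R))) / (2 * R) ^ 2)) (R ^ 2) := by
    have hs : HasDerivAt Real.sqrt (1 / (2 * R)) (R ^ 2) := by
      have := Real.hasDerivAt_sqrt (x := R ^ 2) (by positivity); rwa [hsq] at this
    have h2' : HasDerivAt v1 v2 (Real.sqrt (R ^ 2)) := by rwa [hsq]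
    have h3 := HasDerivAt.comp (R ^ 2) h2' hs
    have h4 := (hs.const_mul 2).inv (c := fun q => 2 * Real.sqrt q) (by rw [hsq]; positivity)
    have h5 := h3.mul h4
    exact hda_of h5 (fun q => by simp) (by simp [hsq])
  have := LapAt.comp_norm_sq (a := fun q => v (Real.sqrt q)) c x H1 H2
  convert this using 1
  · funext y; rw [Real.sqrt_sq (norm_nonneg _)]
  · simp only [← hR, hsq]
    field_simp
    ring

/-- Whole-space comparison principle. -/
lemma compare_whole {v : Eu N → ℝ} (hc : Continuous v) {B κ : ℝ} (hκ : 0 < κ)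
    (hB : ∀ x, v x ≤ B) (h : ∀ x, 0 < v x → ∃ L, LapAt v x L ∧ κ * v x ≤ L) :
    ∀ x, v x ≤ 0 := by
  intro x1
  by_contra hlt
  push Not at hlt
  set σ := v x1 with hσ
  set ε : ℝ := κ * σ / (4 * (N + 1)) with hε
  have hεpos : 0 < ε := by positivity
  set ψ : Eu N → ℝ := fun x => v x - ε * ‖x - x1‖ ^ 2 with hψ
  have hψc : Continuous ψ := by fun_prop
  have hψ1 : ψ x1 = σ := by simp [hψ, hσ]
  obtain ⟨x0, hx0⟩ : ∃ x0, ∀ y, ψ y ≤ ψ x0 := by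
    have hcpt : IsCompact {x | σ ≤ ψ x} := by
      refine Metric.isCompact_of_isClosed_isBounded (isClosed_le continuous_const hψc) ?_
      refine (Metric.isBounded_closedBall (x := x1) (r := Real.sqrt (B / ε))).subset ?_
      intro y hy
      rw [mem_closedBall, dist_eq_norm]
      apply Real.le_sqrt_of_sq_le
      rw [le_div_iff₀ hεpos]
      have h1 : σ ≤ v y - ε * ‖y - x1‖ ^ 2 := hy
      nlinarith [hB y]
    obtain ⟨x0, hx0, hmax⟩ := hcpt.exists_isMaxOn ⟨x1, hψ1.ge⟩ hψc.continuousOn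
    refine ⟨x0, fun y => ?_⟩
    by_cases hy : σ ≤ ψ y
    · exact hmax hy
    · exact (not_le.1 hy).le.trans hx0
  have hv0 : σ ≤ v x0 := by
    have h1 : ψ x1 ≤ v x0 - ε * ‖x0 - x1‖ ^ 2 := hx0 x1
    have : 0 ≤ ε * ‖x0 - x1‖ ^ 2 := by positivity
    linarith
  obtain ⟨L, hL, hκL⟩ := h x0 (lt_of_lt_of_le hlt hv0)
  have h1 := (hL.sub ((LapAt.norm_sq x1 x0).const_mul ε)).nonpos
    (Eventually.of_forall hx0)
  have h2 : ε * (2 * N) < κ * σ := by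
    rw [hε]
    have : κ * σ / (4 * (N + 1)) * (2 * N) = κ * σ * (2 * N / (4 * (N + 1))) := by ring
    rw [this]
    have h3 : (2 * N / (4 * (N + 1)) : ℝ) < 1 := by
      rw [div_lt_one (by positivity)]; have : (0:ℝ) ≤ N := by positivity
      linarith
    have h4 : 0 < κ * σ := by positivity
    nlinarith
  nlinarith

end PartA

section PartB

open scoped Topology
variable {N : ℕ}

/-- the bump `ζ` -/
noncomputable def zt (z : Eu N) : ℝ := expNegInvGlue (1 - ‖z‖ ^ 2)
/-- the bump `η`, with `∇ζ = - η z` -/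
noncomputable def et (z : Eu N) : ℝ := 2 * deriv expNegInvGlue (1 - ‖z‖ ^ 2)

lemma zt_contDiff : ContDiff ℝ 2 (zt : Eu N → ℝ) := by
  have h : ContDiff ℝ 2 expNegInvGlue := expNegInvGlue.contDiff (n := 2)
  exact h.comp (contDiff_const.sub (contDiff_norm_sq ℝ))

lemma et_contDiff : ContDiff ℝ 2 (et : Eu N → ℝ) := by
  have h3 : ContDiff ℝ 3 expNegInvGlue := expNegInvGlue.contDiff (n := 3)
  have h : ContDiff ℝ 2 (deriv expNegInvGlue) := by
    have : ContDiff ℝ (2 + 1) expNegInvGlue := by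
      convert h3 using 1; norm_num
    exact (contDiff_succ_iff_deriv.1 this).2.2
  exact contDiff_const.mul (h.comp (contDiff_const.sub (contDiff_norm_sq ℝ)))

lemma zt_nonneg (z : Eu N) : 0 ≤ zt z := expNegInvGlue.nonneg _

lemma et_nonneg (z : Eu N) : 0 ≤ et z := by
  have : 0 ≤ deriv expNegInvGlue (1 - ‖z‖ ^ 2) := expNegInvGlue.monotone.deriv_nonneg
  unfold et; linarith

lemma zt_zero {z : Eu N} (hz : 1 ≤ ‖z‖) : zt z = 0 :=
  expNegInvGlue.zero_of_nonpos (by nlinarith)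

lemma et_zero {z : Eu N} (hz : 1 ≤ ‖z‖) : et z = 0 := by
  have h : IsLocalMin expNegInvGlue (1 - ‖z‖ ^ 2) := by
    refine Eventually.of_forall fun t => ?_
    rw [expNegInvGlue.zero_of_nonpos (x := 1 - ‖z‖ ^ 2) (by nlinarith)]
    exact expNegInvGlue.nonneg _
  unfold et; rw [h.deriv_eq_zero]; simp

lemma hcs_of_zero {F : Type*} [NormedAddCommGroup F] {k : Eu N → F}
    (h : ∀ z, 1 ≤ ‖z‖ → k z = 0) : HasCompactSupport k := by
  refine HasCompactSupport.intro (isCompact_closedBall (0:Eu N) 1) fun z hz => h z ?_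
  rw [mem_closedBall, dist_zero_right] at hz
  linarith

lemma zt_hcs : HasCompactSupport (zt : Eu N → ℝ) := hcs_of_zero fun _ => zt_zero
lemma et_hcs : HasCompactSupport (et : Eu N → ℝ) := hcs_of_zero fun _ => et_zero
lemma zt_cont : Continuous (zt : Eu N → ℝ) := zt_contDiff.continuous
lemma et_cont : Continuous (et : Eu N → ℝ) := et_contDiff.continuous
lemma zt_int : Integrable (zt : Eu N → ℝ) := zt_cont.integrable_of_hasCompactSupport zt_hcs
lemma et_int : Integrable (et : Eu N → ℝ) := et_cont.integrable_of_hasCompactSupport et_hcs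

lemma zt_grad (z v : Eu N) : fderiv ℝ zt z v = - et z * inner ℝ z v := by
  have h1 : HasFDerivAt (fun z : Eu N => 1 - ‖z‖ ^ 2) (-(2 • innerSL ℝ z)) z := by
    simpa using ((hasStrictFDerivAt_norm_sq z).hasFDerivAt).const_sub (1:ℝ)
  have hd : Differentiable ℝ expNegInvGlue :=
    (expNegInvGlue.contDiff (n := 1)).differentiable (by norm_num)
  have h2 := (hd (1 - ‖z‖ ^ 2)).hasDerivAt.comp_hasFDerivAt z h1
  have h3 : fderiv ℝ zt z = _ := h2.fderiv
  rw [h3]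
  simp [et]
  ring

lemma zt_integral_pos : 0 < ∫ z : Eu N, zt z := by
  refine (zt_cont).integral_pos_of_hasCompactSupport_nonneg_nonzero zt_hcs zt_nonneg (x := 0) ?_
  have : 0 < zt (0 : Eu N) := expNegInvGlue.pos_of_pos (by simp)
  exact this.ne'

lemma et_integral_pos (hN : 0 < N) : 0 < ∫ z : Eu N, et z := by
  obtain ⟨z, hz⟩ : ∃ z : Eu N, et z ≠ 0 := by
    by_contra hcon
    push Not at hcon
    have h1 : ∀ z : Eu N, fderiv ℝ zt z = 0 := fun z => by
      ext v; rw [zt_grad, hcon]; simp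
    have h2 := is_const_of_fderiv_eq_zero (𝕜 := ℝ) (f := (zt : Eu N → ℝ))
      (zt_contDiff.differentiable (by norm_num)) h1 0 (EuclideanSpace.single ⟨0, hN⟩ 1)
    rw [zt_zero (z := EuclideanSpace.single ⟨0, hN⟩ 1) (by simp)] at h2
    have : 0 < zt (0 : Eu N) := expNegInvGlue.pos_of_pos (by simp)
    exact this.ne' h2
  exact (et_cont).integral_pos_of_hasCompactSupport_nonneg_nonzero et_hcs et_nonneg hz

lemma eu_sum (z : Eu N) : z = ∑ i, z i • (EuclideanSpace.single i (1:ℝ) : Eu N) := by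
  ext j
  simp [Pi.single_apply]

lemma bd_int {k : Eu N → ℝ} (hk : Integrable k) {g : Eu N → ℝ} (hg : Continuous g) {M : ℝ}
    (hb : ∀ x, |g x| ≤ M) : Integrable (fun z => g z * k z) :=
  hk.bdd_mul hg.aestronglyMeasurable (Eventually.of_forall hb)

/-- Derivative in the scale of the spherical-type mean. -/
lemma mean_deriv {η ζ φ : Eu N → ℝ} (hη : Continuous η) (hζ : ContDiff ℝ 1 ζ)
    (iη : Integrable η) (iζ : Integrable ζ) (iη1 : Integrable (fun z => ‖z‖ * η z))
    (hgrad : ∀ z v, fderiv ℝ ζ z v = - η z * inner ℝ z v)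
    (hφ : ContDiff ℝ 2 φ) {B0 B1 B2 : ℝ} (h0 : ∀ x, |φ x| ≤ B0) (h1 : ∀ x, ‖fderiv ℝ φ x‖ ≤ B1)
    (h2 : ∀ x, ‖fderiv ℝ (fderiv ℝ φ) x‖ ≤ B2) (x : Eu N) (s : ℝ) :
    HasDerivAt (fun s : ℝ => ∫ z, φ (x - s • z) * η z)
      (s * ∫ z, laplacian φ (x - s • z) * ζ z) s := by
  have hφd : Differentiable ℝ φ := hφ.differentiable (by norm_num)
  have hφ1 : ContDiff ℝ 1 (fderiv ℝ φ) := hφ.fderiv_right (by norm_num)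
  have hphid : Differentiable ℝ (fderiv ℝ φ) := hφ1.differentiable (by norm_num)
  have hphicc : Continuous (fderiv ℝ (fderiv ℝ φ)) := hφ1.continuous_fderiv (by norm_num)
  have hφc := hφ.continuous
  have hphic := hφ1.continuous
  have key := (hasDerivAt_integral_of_dominated_loc_of_deriv_le (μ := volume)
    (F := fun (s : ℝ) z => φ (x - s • z) * η z)
    (F' := fun (s : ℝ) z => fderiv ℝ φ (x - s • z) (-z) * η z)
    (bound := fun z => B1 * ‖‖z‖ * η z‖) (x₀ := s) (s := univ) univ_mem
    (Eventually.of_forall fun s => Continuous.aestronglyMeasurable (by fun_prop))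
    (bd_int iη (by fun_prop) (fun z => h0 _))
    (Continuous.aestronglyMeasurable (by fun_prop))
    (Eventually.of_forall fun z s _ => ?_) (iη1.norm.const_mul B1)
    (Eventually.of_forall fun z s _ => ?_)).2
  · refine key.congr_deriv ?_
    have e1 : ∀ z, fderiv ℝ φ (x - s • z) (-z) * η z
        = ∑ i, fderiv ℝ φ (x - s • z) (EuclideanSpace.single i 1)
            * fderiv ℝ ζ z (EuclideanSpace.single i 1) := by
      intro z
      conv_lhs => rw [eu_sum z]
      rw [← eu_sum z, map_neg]
      conv_lhs => enter [1, 1, 2]; rw [eu_sum z]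
      rw [map_sum, neg_mul, Finset.sum_mul, ← Finset.sum_neg_distrib]
      refine Finset.sum_congr rfl fun i _ => ?_
      rw [map_smul, hgrad, EuclideanSpace.inner_single_right]
      simp
      ring
    have hg : ∀ i : Fin N, ∀ z, ‖fderiv ℝ ζ z (EuclideanSpace.single i 1)‖ ≤ ‖‖z‖ * η z‖ := by
      intro i z
      rw [hgrad, norm_mul, norm_mul, norm_neg, mul_comm]
      gcongr
      refine (abs_real_inner_le_norm _ _).trans ?_
      simp
    have hζc : Continuous (fderiv ℝ ζ) := hζ.continuous_fderiv (by norm_num)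
    have ig : ∀ i : Fin N, Integrable (fun z => fderiv ℝ ζ z (EuclideanSpace.single i 1)) :=
      fun i => iη1.mono (Continuous.aestronglyMeasurable (by fun_prop))
        (Eventually.of_forall (hg i))
    have hcomp : ∀ (i : Fin N) z, HasFDerivAt
        (fun z => fderiv ℝ φ (x - s • z) (EuclideanSpace.single i 1))
        (((fderiv ℝ (fderiv ℝ φ) (x - s • z)).comp
          (-(s • ContinuousLinearMap.id ℝ (Eu N)))).flip (EuclideanSpace.single i 1)) z := by
      intro i z
      have hin : HasFDerivAt (fun z : Eu N => x - s • z)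
          (-(s • ContinuousLinearMap.id ℝ (Eu N))) z := by
        simpa using (((hasFDerivAt_id z).const_smul s).const_sub x)
      have h := (hphid (x - s • z)).hasFDerivAt.comp z hin
      have h' := h.clm_apply (hasFDerivAt_const (EuclideanSpace.single i (1:ℝ) : Eu N) z)
      refine h'.congr_fderiv ?_
      ext v; simp
    have hb1 : ∀ (i : Fin N) y, |fderiv ℝ φ y (EuclideanSpace.single i 1)| ≤ B1 := by
      intro i y
      refine ((fderiv ℝ φ y).le_opNorm _).trans ?_
      simpa using h1 y
    have hb2 : ∀ (i : Fin N) y, |fderiv ℝ (fderiv ℝ φ) y (EuclideanSpace.single i 1)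
        (EuclideanSpace.single i 1)| ≤ B2 := by
      intro i y
      refine ((fderiv ℝ (fderiv ℝ φ) y _).le_opNorm _).trans ?_
      refine (mul_le_mul_of_nonneg_right ((fderiv ℝ (fderiv ℝ φ) y).le_opNorm _)
        (norm_nonneg _)).trans ?_
      simpa using h2 y
    have i2 : ∀ i : Fin N, Integrable (fun z => fderiv ℝ (fderiv ℝ φ) (x - s • z)
        (EuclideanSpace.single i 1) (EuclideanSpace.single i 1) * ζ z) :=
      fun i => bd_int iζ (by fun_prop) (fun z => hb2 i _)
    have e2 : ∀ i : Fin N, ∫ z, fderiv ℝ φ (x - s • z) (EuclideanSpace.single i 1)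
            * fderiv ℝ ζ z (EuclideanSpace.single i 1)
        = s * ∫ z, fderiv ℝ (fderiv ℝ φ) (x - s • z) (EuclideanSpace.single i 1)
            (EuclideanSpace.single i 1) * ζ z := by
      intro i
      have hfd : ∀ z, fderiv ℝ (fun z => fderiv ℝ φ (x - s • z) (EuclideanSpace.single i 1)) z
          (EuclideanSpace.single i 1) = - s * fderiv ℝ (fderiv ℝ φ) (x - s • z)
          (EuclideanSpace.single i 1) (EuclideanSpace.single i 1) := by
        intro z; rw [(hcomp i z).fderiv]; simp
      rw [integral_mul_fderiv_eq_neg_fderiv_mul_of_integrable]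
      · simp_rw [hfd]
        rw [← integral_neg, ← integral_const_mul]
        congr 1; ext z; ring
      · simp_rw [hfd, mul_assoc]
        exact (i2 i).const_mul _
      · exact bd_int (ig i) (by fun_prop) (fun z => hb1 i _)
      · exact bd_int iζ (by fun_prop) (fun z => hb1 i _)
      · exact fun z _ => (hcomp i z).differentiableAt
      · exact fun z _ => hζ.differentiable (by norm_num) z
    simp_rw [e1]
    rw [integral_finsetSum _ (fun i _ => bd_int (ig i) (by fun_prop) (fun z => hb1 i _))]
    simp_rw [e2]
    rw [← Finset.mul_sum, ← integral_finsetSum _ (fun i _ => i2 i)]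
    congr 2
    ext z
    rw [laplacian, Finset.sum_mul]
    refine Finset.sum_congr rfl fun i _ => ?_
    rw [iteratedFDeriv_two_apply]
    simp
  · rw [norm_mul, norm_mul, ← mul_assoc]
    gcongr
    refine ((fderiv ℝ φ _).le_opNorm _).trans ?_
    rw [norm_neg, norm_norm]
    gcongr
    exact h1 _
  · refine HasDerivAt.mul_const ?_ _
    have hin : HasDerivAt (fun s : ℝ => x - s • z) (-z) s := by
      simpa using ((hasDerivAt_id s).smul_const z).const_sub x
    exact (hφd (x - s • z)).hasFDerivAt.comp_hasDerivAt s hin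

end PartB

section PartC

open scoped Topology
variable {N : ℕ}

set_option linter.unusedSectionVars false
section J
variable {F : Type*} [NormedAddCommGroup F] [NormedSpace ℝ F]

noncomputable def Jk (g : Eu N → ℝ) (k : Eu N → F) (s : ℝ) (x : Eu N) : F :=
  ∫ z, g (x - s • z) • k z

lemma Jk_eq (g : Eu N → ℝ) (k : Eu N → F) {s : ℝ} (hs : 0 < s) (x : Eu N) :
    Jk g k s x = (s ^ N)⁻¹ •
      (convolution g (fun z => k (s⁻¹ • z)) (ContinuousLinearMap.lsmul ℝ ℝ) volume) x := by
  have h1 := Measure.integral_comp_smul (volume : Measure (Eu N))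
    (fun y => g (x - y) • k (s⁻¹ • y)) s
  simp only [smul_smul, inv_mul_cancel₀ hs.ne', one_smul, finrank_euclideanSpace_fin] at h1
  rw [Jk, h1, abs_of_pos (by positivity)]
  congr 1
  rw [convolution]
  have h2 := integral_sub_left_eq_self (fun t => g t • k (s⁻¹ • (x - t))) (volume : Measure (Eu N)) x
  simp only [sub_sub_cancel] at h2
  rw [h2]; rfl

lemma locInt_of_bdd {g : Eu N → ℝ} (hg : Measurable g) {M : ℝ} (hM : ∀ x, |g x| ≤ M) :
    LocallyIntegrable g := by
  intro x
  refine ⟨ball x 1, ball_mem_nhds x one_pos, ?_⟩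
  refine Measure.integrableOn_of_bounded (M := M) measure_ball_lt_top.ne hg.aestronglyMeasurable ?_
  exact Eventually.of_forall fun x => hM x

lemma smul_hcs {k : Eu N → F} (hk : HasCompactSupport k) {s : ℝ} (hs : 0 < s) :
    HasCompactSupport (fun z => k (s⁻¹ • z)) :=
  hk.comp_homeomorph (Homeomorph.smulOfNeZero s⁻¹ (inv_ne_zero hs.ne'))

lemma Jk_hasFDerivAt [CompleteSpace F] {g : Eu N → ℝ} (hg : Measurable g) {M : ℝ} (hM : ∀ x, |g x| ≤ M)
    {k : Eu N → F} (hk : ContDiff ℝ 1 k) (hc : HasCompactSupport k) {s : ℝ} (hs : 0 < s) (x : Eu N) :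
    HasFDerivAt (Jk g k s) (s⁻¹ • Jk g (fderiv ℝ k) s x) x := by
  have h := HasCompactSupport.hasFDerivAt_convolution_right (ContinuousLinearMap.lsmul ℝ ℝ)
    (smul_hcs hc hs) (locInt_of_bdd hg hM) (hk.comp (contDiff_id.const_smul s⁻¹)) x
  have h2 := h.const_smul (s ^ N)⁻¹
  have e : Jk g k s = fun x => (s ^ N)⁻¹ •
      (convolution g (fun z => k (s⁻¹ • z)) (ContinuousLinearMap.lsmul ℝ ℝ) volume) x :=
    funext fun x => Jk_eq g k hs x
  rw [e]
  refine h2.congr_fderiv ?_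
  rw [Jk_eq g _ hs, smul_comm]
  congr 1
  rw [convolution, convolution, ← integral_smul]
  refine integral_congr_ae (Eventually.of_forall fun t => ?_)
  have : fderiv ℝ (fun z => k (s⁻¹ • z)) = fun y => s⁻¹ • fderiv ℝ k (s⁻¹ • y) := by
    funext y
    have := fderiv_comp_smul (𝕜 := ℝ) (f := k) (x := y) s⁻¹
    exact this
  simp only []
  rw [this]
  ext v
  simp only [ContinuousLinearMap.precompR_apply, ContinuousLinearMap.lsmul_apply, smul_apply]
  rw [smul_comm]
  rfl

lemma Jk_cont {g : Eu N → ℝ} (hg : Measurable g) {M : ℝ} (hM : ∀ x, |g x| ≤ M)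
    {k : Eu N → F} (hk : Continuous k) (hc : HasCompactSupport k) {s : ℝ} (hs : 0 < s) :
    Continuous (Jk g k s) := by
  have e : Jk g k s = fun x => (s ^ N)⁻¹ •
      (convolution g (fun z => k (s⁻¹ • z)) (ContinuousLinearMap.lsmul ℝ ℝ) volume) x :=
    funext fun x => Jk_eq g k hs x
  rw [e]
  exact (HasCompactSupport.continuous_convolution_right _ (smul_hcs hc hs)
    (locInt_of_bdd hg hM) (hk.comp (continuous_const_smul _))).const_smul _

lemma Jk_bound {g : Eu N → ℝ} {M : ℝ} (hM : ∀ x, |g x| ≤ M)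
    {k : Eu N → F} (hk : Integrable k) (s : ℝ) (x : Eu N) :
    ‖Jk g k s x‖ ≤ M * ∫ z, ‖k z‖ := by
  rw [Jk, ← integral_const_mul]
  refine norm_integral_le_of_norm_le (hk.norm.const_mul M) (Eventually.of_forall fun z => ?_)
  rw [norm_smul]
  exact mul_le_mul_of_nonneg_right (hM _) (norm_nonneg _)

lemma Jk_meas [CompleteSpace F] {g : Eu N → ℝ} (hg : Measurable g)
    {k : Eu N → F} (hk : Continuous k) (hc : HasCompactSupport k) (x : Eu N) :
    StronglyMeasurable (fun s => Jk g k s x) := by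
  apply StronglyMeasurable.integral_prod_right' (f := fun p : ℝ × Eu N => g (x - p.1 • p.2) • k p.2)
  have h1 : StronglyMeasurable k := hk.stronglyMeasurable_of_hasCompactSupport hc
  have h2 : Measurable (fun p : ℝ × Eu N => g (x - p.1 • p.2)) := by
    apply hg.comp; fun_prop
  exact h2.stronglyMeasurable.smul (h1.comp_measurable measurable_snd)

/-- Hölder cancellation bound -/
lemma Jk_holder [CompleteSpace F] {g : Eu N → ℝ} (hg : Measurable g) {M : ℝ} (hM : ∀ x, |g x| ≤ M)
    {C γ : ℝ} (hγ : 0 ≤ γ) (hC : 0 ≤ C) (hH : ∀ x y, |g x - g y| ≤ C * ‖x - y‖ ^ γ)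
    {k : Eu N → F} (hk : Integrable k) (h1 : ∀ z, 1 ≤ ‖z‖ → k z = 0) (h0 : ∫ z, k z = 0)
    {s : ℝ} (hs : 0 < s) (x : Eu N) :
    ‖Jk g k s x‖ ≤ C * s ^ γ * ∫ z, ‖k z‖ := by
  have e : Jk g k s x = ∫ z, (g (x - s • z) - g x) • k z := by
    simp_rw [sub_smul]
    rw [integral_sub, integral_smul, h0, smul_zero, sub_zero, Jk]
    · refine Integrable.mono' (hk.norm.const_mul M) ?_ (Eventually.of_forall fun z => ?_)
      · exact ((hg.comp (by fun_prop)).aestronglyMeasurable).smul hk.aestronglyMeasurable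
      · rw [norm_smul]
        exact mul_le_mul_of_nonneg_right (hM _) (norm_nonneg _)
    · exact hk.smul _
  rw [e, ← integral_const_mul]
  refine norm_integral_le_of_norm_le (hk.norm.const_mul _) (Eventually.of_forall fun z => ?_)
  rw [norm_smul]
  by_cases hz : 1 ≤ ‖z‖
  · simp [h1 z hz]
  · push Not at hz
    refine mul_le_mul_of_nonneg_right ((hH _ _).trans ?_) (norm_nonneg _)
    refine mul_le_mul_of_nonneg_left ?_ hC
    refine Real.rpow_le_rpow (norm_nonneg _) ?_ hγ
    have : x - s • z - x = - (s • z) := by abel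
    rw [this, norm_neg, norm_smul, Real.norm_of_nonneg hs.le]
    nlinarith

lemma pot_hasFDerivAt [CompleteSpace F] {g : Eu N → ℝ} (hg : Measurable g) {M : ℝ} (hM : ∀ x, |g x| ≤ M)
    {k : Eu N → F} (hk : ContDiff ℝ 1 k) (hc : HasCompactSupport k) {a b : ℝ → ℝ} {r : ℝ} (hr : 0 < r)
    (ha : ContinuousOn a (Icc 0 r)) (hb : IntervalIntegrable b volume 0 r)
    (hbd : ∀ s ∈ Ioc 0 r, ∀ x, ‖(a s * s⁻¹) • Jk g (fderiv ℝ k) s x‖ ≤ b s) (x : Eu N) :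
    HasFDerivAt (fun x => ∫ s in 0..r, a s • Jk g k s x)
      (∫ s in 0..r, (a s * s⁻¹) • Jk g (fderiv ℝ k) s x) x := by
  have ik : Integrable k := hk.continuous.integrable_of_hasCompactSupport hc
  have hcd : HasCompactSupport (fderiv ℝ k) := hc.fderiv ℝ
  have hkd : Continuous (fderiv ℝ k) := hk.continuous_fderiv one_ne_zero
  have ham : AEStronglyMeasurable a (volume.restrict (Ioc 0 r)) :=
    (ha.mono Ioc_subset_Icc_self).aestronglyMeasurable measurableSet_Ioc
  have hm : ∀ x, AEStronglyMeasurable (fun s => a s • Jk g k s x) (volume.restrict (Ioc 0 r)) :=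
    fun x => ham.smul (Jk_meas hg hk.continuous hc x).aestronglyMeasurable
  simp_rw [intervalIntegral.integral_of_le hr.le]
  refine hasFDerivAt_integral_of_dominated_of_fderiv_le (𝕜 := ℝ) (bound := b) (s := univ)
    (F' := fun x s => (a s * s⁻¹) • Jk g (fderiv ℝ k) s x)
    univ_mem (Eventually.of_forall hm) ?_ ?_ ?_ ?_ ?_
  · obtain ⟨A, hA⟩ := isCompact_Icc.exists_bound_of_continuousOn ha
    refine Integrable.of_bound (hm x) (A * (M * ∫ z, ‖k z‖)) ?_
    refine (ae_restrict_iff' measurableSet_Ioc).2 (Eventually.of_forall fun s hs => ?_)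
    rw [norm_smul]
    exact mul_le_mul (hA s ⟨hs.1.le, hs.2⟩) (Jk_bound hM ik _ _) (norm_nonneg _)
      ((norm_nonneg _).trans (hA s ⟨hs.1.le, hs.2⟩))
  · refine AEStronglyMeasurable.smul (ham.mul measurable_inv.aestronglyMeasurable) ?_
    exact (Jk_meas hg hkd hcd x).aestronglyMeasurable
  · exact (ae_restrict_iff' measurableSet_Ioc).2 (Eventually.of_forall fun s hs x _ => hbd s hs x)
  · exact (intervalIntegrable_iff_integrableOn_Ioc_of_le hr.le).1 hb
  · refine (ae_restrict_iff' measurableSet_Ioc).2 (Eventually.of_forall fun s hs x _ => ?_)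
    refine ((Jk_hasFDerivAt hg hM hk hc hs.1 x).const_smul (a s)).congr_fderiv ?_
    rw [smul_smul]

lemma pot_cont [CompleteSpace F] {g : Eu N → ℝ} (hg : Measurable g) {M : ℝ} (hM : ∀ x, |g x| ≤ M)
    {k : Eu N → F} (hk : Continuous k) (hc : HasCompactSupport k) {a b : ℝ → ℝ} {r : ℝ} (hr : 0 < r)
    (ham : AEStronglyMeasurable a (volume.restrict (Ioc 0 r))) (hb : IntervalIntegrable b volume 0 r)
    (hbd : ∀ s ∈ Ioc 0 r, ∀ x, ‖a s • Jk g k s x‖ ≤ b s) :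
    Continuous (fun x => ∫ s in 0..r, a s • Jk g k s x) := by
  simp_rw [intervalIntegral.integral_of_le hr.le]
  refine continuous_of_dominated (bound := b) ?_ ?_ ?_ ?_
  · exact fun x => ham.smul (Jk_meas hg hk hc x).aestronglyMeasurable
  · exact fun x => (ae_restrict_iff' measurableSet_Ioc).2 (Eventually.of_forall fun s hs => hbd s hs x)
  · exact (intervalIntegrable_iff_integrableOn_Ioc_of_le hr.le).1 hb
  · exact (ae_restrict_iff' measurableSet_Ioc).2 (Eventually.of_forall fun s hs =>
      (Jk_cont hg hM hk hc hs.1).const_smul _)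

end J

end PartC

section PartC2

open scoped Topology
variable {N : ℕ}

def HasID (U : Set (Eu N)) (w g : Eu N → ℝ) : Prop :=
  ∀ x r, 0 < r → closedBall x r ⊆ U →
    (∫ z : Eu N, et z) * w x =
      (∫ z, w (x - r • z) * et z) + ∫ s in (0:ℝ)..r, s * ∫ z, g (x - s • z) * zt z

lemma Jk_congr {g g' : Eu N → ℝ} {F : Type*} [NormedAddCommGroup F] [NormedSpace ℝ F]
    {k : Eu N → F} (h1 : ∀ z, 1 ≤ ‖z‖ → k z = 0) {s : ℝ} {x : Eu N}
    (hs : 0 ≤ s) (h : ∀ y, ‖y - x‖ ≤ s → g y = g' y) : Jk g k s x = Jk g' k s x := by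
  refine integral_congr_ae (Eventually.of_forall fun z => ?_)
  by_cases hz : 1 ≤ ‖z‖
  · simp [h1 z hz]
  · simp only []
    push Not at hz
    rw [h]
    have : x - s • z - x = - (s • z) := by abel
    rw [this, norm_neg, norm_smul, Real.norm_of_nonneg hs]
    nlinarith

lemma ID_local {U : Set (Eu N)} {w g χ : Eu N → ℝ} (h : HasID U w g) {x0 : Eu N} {r : ℝ} (hr : 0 < r)
    (hU : closedBall x0 (2 * r) ⊆ U) (hχ : ∀ x ∈ ball x0 (2 * r), χ x = 1) {x : Eu N}
    (hx : x ∈ ball x0 r) :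
    (∫ z : Eu N, et z) * w x = Jk (fun y => χ y * w y) et r x +
      ∫ s in (0:ℝ)..r, s • Jk (fun y => χ y * g y) zt s x := by
  rw [mem_ball, dist_eq_norm] at hx
  have hb : ∀ y, ‖y - x‖ ≤ r → y ∈ ball x0 (2 * r) := by
    intro y hy
    rw [mem_ball, dist_eq_norm]
    have : y - x0 = (y - x) + (x - x0) := by abel
    rw [this]
    refine (norm_add_le _ _).trans_lt (by linarith)
  have := h x r hr ((fun y hy => hU (ball_subset_closedBall (hb y (by rwa [← dist_eq_norm])))))
  rw [this]
  congr 1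
  · refine Jk_congr (g := w) (fun z => et_zero) hr.le fun y hy => ?_
    rw [hχ y (hb y hy), one_mul]
  · refine intervalIntegral.integral_congr fun s hs => ?_
    rw [uIcc_of_le hr.le] at hs
    simp only [smul_eq_mul]
    congr 1
    refine Jk_congr (g := g) (fun z => zt_zero) hs.1 fun y hy => ?_
    rw [hχ y (hb y (hy.trans hs.2)), one_mul]

lemma ID_lipschitz (hN : 0 < N) {U : Set (Eu N)} {w g : Eu N → ℝ} (h : HasID U w g)
    (hw : Measurable w) (hg : Measurable g) {x0 : Eu N} {r M : ℝ} (hr : 0 < r)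
    (hU : closedBall x0 (2 * r) ⊆ U) (hwM : ∀ x ∈ ball x0 (2 * r), |w x| ≤ M)
    (hgM : ∀ x ∈ ball x0 (2 * r), |g x| ≤ M) :
    ∃ C : NNReal, LipschitzOnWith C w (ball x0 r) := by
  have hM : 0 ≤ M := (abs_nonneg _).trans (hwM x0 (mem_ball_self (by positivity)))
  set c := ∫ z : Eu N, et z with hc
  have hcpos : 0 < c := et_integral_pos hN
  set χ : Eu N → ℝ := (ball x0 (2 * r)).indicator 1 with hχ
  have hχm : Measurable χ := measurable_one.indicator measurableSet_ball
  have hχ1 : ∀ x ∈ ball x0 (2 * r), χ x = 1 := fun x hx => by simp [hχ, indicator_of_mem hx]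
  have hχ0 : ∀ x ∉ ball x0 (2 * r), χ x = 0 := fun x hx => by simp only [hχ, indicator_of_notMem hx]
  have bd : ∀ q : Eu N → ℝ, (∀ x ∈ ball x0 (2 * r), |q x| ≤ M) → ∀ x, |χ x * q x| ≤ M := by
    intro q hq x
    by_cases hx : x ∈ ball x0 (2 * r)
    · rw [hχ1 x hx, one_mul]; exact hq x hx
    · rw [hχ0 x hx, zero_mul, abs_zero]; exact hM
  have m1 : Measurable (fun y => χ y * w y) := hχm.mul hw
  have m2 : Measurable (fun y => χ y * g y) := hχm.mul hg
  have b1 := bd w hwM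
  have b2 := bd g hgM
  have ce : ContDiff ℝ 1 (et : Eu N → ℝ) := et_contDiff.of_le (by norm_num)
  have cz : ContDiff ℝ 1 (zt : Eu N → ℝ) := zt_contDiff.of_le (by norm_num)
  have ie : Integrable (fderiv ℝ (et : Eu N → ℝ)) :=
    (ce.continuous_fderiv one_ne_zero).integrable_of_hasCompactSupport (et_hcs.fderiv ℝ)
  have iz : Integrable (fderiv ℝ (zt : Eu N → ℝ)) :=
    (cz.continuous_fderiv one_ne_zero).integrable_of_hasCompactSupport (zt_hcs.fderiv ℝ)
  have hbd : ∀ s ∈ Ioc 0 r, ∀ x, ‖(s * s⁻¹) • Jk (fun y => χ y * g y) (fderiv ℝ zt) s x‖ ≤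
      M * ∫ z, ‖fderiv ℝ (zt : Eu N → ℝ) z‖ := by
    intro s hs x
    rw [mul_inv_cancel₀ hs.1.ne', one_smul]
    exact Jk_bound b2 iz s x
  have hd := fun x => (Jk_hasFDerivAt m1 b1 ce et_hcs hr x).add
    (pot_hasFDerivAt m2 b2 cz zt_hcs hr continuousOn_id intervalIntegrable_const hbd x)
  have hd2 := fun x => (hd x).const_smul c⁻¹
  have key : ∀ x ∈ ball x0 r, ‖c⁻¹ • (r⁻¹ • Jk (fun y => χ y * w y) (fderiv ℝ et) r x +
      ∫ s in (0:ℝ)..r, (id s * s⁻¹) • Jk (fun y => χ y * g y) (fderiv ℝ zt) s x)‖ ≤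
      c⁻¹ * (r⁻¹ * (M * ∫ z, ‖fderiv ℝ (et : Eu N → ℝ) z‖)
        + M * (∫ z, ‖fderiv ℝ (zt : Eu N → ℝ) z‖) * |r - 0|) := by
    intro x _
    rw [norm_smul, norm_inv, Real.norm_of_nonneg hcpos.le]
    refine mul_le_mul_of_nonneg_left ?_ (by positivity)
    refine (norm_add_le _ _).trans (add_le_add ?_ ?_)
    · rw [norm_smul, norm_inv, Real.norm_of_nonneg hr.le]
      exact mul_le_mul_of_nonneg_left (Jk_bound b1 ie _ _) (by positivity)
    · refine intervalIntegral.norm_integral_le_of_norm_le_const fun s hs => ?_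
      rw [uIoc_of_le hr.le] at hs
      exact hbd s hs x
  set L := c⁻¹ * (r⁻¹ * (M * ∫ z, ‖fderiv ℝ (et : Eu N → ℝ) z‖)
        + M * (∫ z, ‖fderiv ℝ (zt : Eu N → ℝ) z‖) * |r - 0|) with hL
  refine ⟨L.toNNReal, ?_⟩
  have hlip := (convex_ball x0 r).lipschitzOnWith_of_nnnorm_hasFDerivWithin_le (𝕜 := ℝ) (C := L.toNNReal)
    (fun x _ => (hd2 x).hasFDerivWithinAt) (fun x hx => by
      rw [← NNReal.coe_le_coe, coe_nnnorm]
      exact (key x hx).trans (Real.le_coe_toNNReal L))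
  intro x hx y hy
  have := hlip hx hy
  have e : ∀ x ∈ ball x0 r, w x = c⁻¹ • (Jk (fun y => χ y * w y) et r x +
      ∫ s in (0:ℝ)..r, s • Jk (fun y => χ y * g y) zt s x) := by
    intro x hx
    rw [← ID_local h hr hU hχ1 hx, smul_eq_mul, inv_mul_cancel_left₀ hcpos.ne']
  rw [e x hx, e y hy]
  exact this

end PartC2

section PartC3

open scoped Topology
variable {N : ℕ}

lemma contDiff_two_of {F : Type*} [NormedAddCommGroup F] [NormedSpace ℝ F] {f : Eu N → F}
    {f1 : Eu N → (Eu N →L[ℝ] F)} {f2 : Eu N → (Eu N →L[ℝ] Eu N →L[ℝ] F)}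
    (h1 : ∀ x, HasFDerivAt f (f1 x) x) (h2 : ∀ x, HasFDerivAt f1 (f2 x) x) (h3 : Continuous f2) :
    ContDiff ℝ 2 f := by
  have c1 : ContDiff ℝ 1 f1 := by
    rw [contDiff_one_iff_fderiv]
    have e : fderiv ℝ f1 = f2 := funext fun x => (h2 x).fderiv
    exact ⟨fun x => (h2 x).differentiableAt, e ▸ h3⟩
  have : (2 : WithTop ℕ∞) = 1 + 1 := by norm_num
  rw [this, contDiff_succ_iff_fderiv]
  have e : fderiv ℝ f = f1 := funext fun x => (h1 x).fderiv
  refine ⟨fun x => (h1 x).differentiableAt, by simp, e ▸ c1⟩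

lemma Jk_contDiff {g : Eu N → ℝ} (hg : Measurable g) {M : ℝ} (hM : ∀ x, |g x| ≤ M)
    {k : Eu N → ℝ} (hk : ContDiff ℝ 2 k) (hc : HasCompactSupport k) {s : ℝ} (hs : 0 < s) :
    ContDiff ℝ 2 (Jk g k s) := by
  have hk1 : ContDiff ℝ 1 (fderiv ℝ k) := hk.fderiv_right (by norm_num)
  refine contDiff_two_of (fun x => Jk_hasFDerivAt hg hM (hk.of_le (by norm_num)) hc hs x)
    (fun x => (Jk_hasFDerivAt hg hM hk1 (hc.fderiv ℝ) hs x).const_smul s⁻¹) ?_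
  exact ((Jk_cont hg hM (hk1.continuous_fderiv one_ne_zero) ((hc.fderiv ℝ).fderiv ℝ) hs).const_smul s⁻¹).const_smul s⁻¹

lemma integral_fderiv_zero {F : Type*} [NormedAddCommGroup F] [NormedSpace ℝ F] [CompleteSpace F]
    {k : Eu N → F} (hk : ContDiff ℝ 1 k) (hc : HasCompactSupport k) :
    ∫ z, fderiv ℝ k z = 0 := by
  have h := Jk_hasFDerivAt (g := fun _ => (1:ℝ)) measurable_const (M := 1) (by simp) hk hc one_pos (0 : Eu N)
  have e : Jk (fun _ : Eu N => (1:ℝ)) k 1 = fun _ => ∫ z, k z := by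
    funext x; simp [Jk]
  rw [e] at h
  have := h.unique (hasFDerivAt_const _ _)
  simpa [Jk] using this

lemma zt_dd_zero : ∀ z : Eu N, 1 ≤ ‖z‖ → fderiv ℝ (fderiv ℝ (zt : Eu N → ℝ)) z = 0 := by
  have hk : ContDiff ℝ 2 (zt : Eu N → ℝ) := zt_contDiff
  have hk1 : ContDiff ℝ 1 (fderiv ℝ (zt : Eu N → ℝ)) := hk.fderiv_right (by norm_num)
  have hk2 : Continuous (fderiv ℝ (fderiv ℝ (zt : Eu N → ℝ))) := hk1.continuous_fderiv one_ne_zero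
  have out : ∀ z : Eu N, 1 < ‖z‖ → fderiv ℝ (fderiv ℝ (zt : Eu N → ℝ)) z = 0 := by
    intro z hz
    have h0 : (zt : Eu N → ℝ) =ᶠ[𝓝 z] fun _ => 0 := by
      filter_upwards [(isOpen_lt continuous_const continuous_norm).mem_nhds hz] with y hy
      exact zt_zero (le_of_lt hy)
    have h1 := h0.fderiv (𝕜 := ℝ)
    have h2 := h1.fderiv_eq (𝕜 := ℝ)
    rw [h2]; simp
  intro z hz
  rcases hz.lt_or_eq with h | h
  · exact out z h
  · have hz' : Tendsto (fun t : ℝ => t • z) (𝓝[>] 1) (𝓝 z) := by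
      have : Tendsto (fun t : ℝ => t • z) (𝓝 1) (𝓝 ((1:ℝ) • z)) :=
        (continuous_id.smul continuous_const).tendsto 1
      rw [one_smul] at this
      exact this.mono_left nhdsWithin_le_nhds
    have l1 := (hk2.tendsto z).comp hz'
    have l2 : Tendsto (fun t : ℝ => fderiv ℝ (fderiv ℝ (zt : Eu N → ℝ)) (t • z)) (𝓝[>] 1) (𝓝 0) := by
      refine tendsto_const_nhds.congr' ?_
      filter_upwards [self_mem_nhdsWithin] with t ht
      rw [out]
      rw [norm_smul, ← h, mul_one, Real.norm_eq_abs]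
      exact lt_of_lt_of_le ht (le_abs_self t)
    exact tendsto_nhds_unique l1 l2

lemma pot_second {F : Type*} [NormedAddCommGroup F] [NormedSpace ℝ F] [CompleteSpace F]
    {g : Eu N → ℝ} (hg : Measurable g) {M : ℝ} (hM : ∀ x, |g x| ≤ M)
    {C γ : ℝ} (hγ : 0 < γ) (hC : 0 ≤ C) (hH : ∀ x y, |g x - g y| ≤ C * ‖x - y‖ ^ γ)
    {k : Eu N → F} (hk1 : ContDiff ℝ 1 k) (c1 : HasCompactSupport k)
    (v2 : ∀ z : Eu N, 1 ≤ ‖z‖ → fderiv ℝ k z = 0) {r : ℝ} (hr : 0 < r) :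
    (∀ x, HasFDerivAt (fun x => ∫ s in (0:ℝ)..r, (1:ℝ) • Jk g k s x)
      (∫ s in (0:ℝ)..r, ((1:ℝ) * s⁻¹) • Jk g (fderiv ℝ k) s x) x) ∧
    Continuous (fun x => ∫ s in (0:ℝ)..r, ((1:ℝ) * s⁻¹) • Jk g (fderiv ℝ k) s x) := by
  have hk2 : Continuous (fderiv ℝ k) := hk1.continuous_fderiv one_ne_zero
  have c2 : HasCompactSupport (fderiv ℝ k) := c1.fderiv ℝ
  have i2 : Integrable (fderiv ℝ k) := hk2.integrable_of_hasCompactSupport c2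
  have z2 : ∫ z, fderiv ℝ k z = 0 := integral_fderiv_zero hk1 c1
  set D := ∫ z, ‖fderiv ℝ k z‖ with hD
  have B2 : ∀ s ∈ Ioc 0 r, ∀ x, ‖((1:ℝ) * s⁻¹) • Jk g (fderiv ℝ k) s x‖ ≤
      (C * D) * s ^ (γ - 1) := by
    intro s hs x
    rw [one_mul, norm_smul, norm_inv, Real.norm_of_nonneg hs.1.le]
    have := Jk_holder hg hM hγ.le hC hH i2 v2 z2 hs.1 x
    calc _ ≤ s⁻¹ * (C * s ^ γ * D) := mul_le_mul_of_nonneg_left this (inv_nonneg.2 hs.1.le)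
      _ = _ := by rw [Real.rpow_sub_one hs.1.ne']; field_simp
  have ib2 : IntervalIntegrable (fun s : ℝ => (C * D) * s ^ (γ - 1)) volume 0 r :=
    (intervalIntegral.intervalIntegrable_rpow' (by linarith)).const_mul _
  constructor
  · intro x
    exact pot_hasFDerivAt (a := fun _ => (1:ℝ)) hg hM hk1 c1 hr continuousOn_const ib2 B2 x
  · refine pot_cont hg hM hk2 c2 hr ?_ ib2 B2
    exact (measurable_const.mul measurable_inv).aestronglyMeasurable

lemma pot_first {F : Type*} [NormedAddCommGroup F] [NormedSpace ℝ F] [CompleteSpace F]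
    {g : Eu N → ℝ} (hg : Measurable g) {M : ℝ} (hM : ∀ x, |g x| ≤ M)
    {k : Eu N → F} (hk : ContDiff ℝ 1 k) (hc : HasCompactSupport k)
    {r : ℝ} (hr : 0 < r) (x : Eu N) :
    HasFDerivAt (fun x => ∫ s in (0:ℝ)..r, s • Jk g k s x)
      (∫ s in (0:ℝ)..r, (1:ℝ) • Jk g (fderiv ℝ k) s x) x := by
  have i1 : Integrable (fderiv ℝ k) :=
    (hk.continuous_fderiv one_ne_zero).integrable_of_hasCompactSupport (hc.fderiv ℝ)
  have B1 : ∀ s ∈ Ioc 0 r, ∀ x, ‖(s * s⁻¹) • Jk g (fderiv ℝ k) s x‖ ≤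
      M * ∫ z, ‖fderiv ℝ k z‖ := by
    intro s hs x
    rw [mul_inv_cancel₀ hs.1.ne', one_smul]
    exact Jk_bound hM i1 s x
  have e1 : ∫ s in (0:ℝ)..r, (id s * s⁻¹) • Jk g (fderiv ℝ k) s x =
      ∫ s in (0:ℝ)..r, (1:ℝ) • Jk g (fderiv ℝ k) s x := by
    refine intervalIntegral.integral_congr_ae (Eventually.of_forall fun s hs => ?_)
    rw [uIoc_of_le hr.le] at hs
    simp only [id]
    rw [mul_inv_cancel₀ hs.1.ne']
  rw [← e1]
  exact pot_hasFDerivAt hg hM hk hc hr continuousOn_id intervalIntegrable_const B1 x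

lemma pot_contDiff {g : Eu N → ℝ} (hg : Measurable g) {M : ℝ} (hM : ∀ x, |g x| ≤ M)
    {C γ : ℝ} (hγ : 0 < γ) (hC : 0 ≤ C) (hH : ∀ x y, |g x - g y| ≤ C * ‖x - y‖ ^ γ)
    {r : ℝ} (hr : 0 < r) :
    ContDiff ℝ 2 (fun x => ∫ s in (0:ℝ)..r, s • Jk g zt s x) :=
  have hk1 : ContDiff ℝ 1 (fderiv ℝ (zt : Eu N → ℝ)) := zt_contDiff.fderiv_right (by norm_num)
  have h := pot_second hg hM hγ hC hH hk1 (zt_hcs.fderiv ℝ) zt_dd_zero hr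
  contDiff_two_of (fun x => pot_first hg hM (zt_contDiff.of_le (by norm_num)) zt_hcs hr x) h.1 h.2

/-- the Lipschitz cutoff -/
noncomputable def cut (x0 : Eu N) (r : ℝ) (x : Eu N) : ℝ := max 0 (min 1 (3 - ‖x - x0‖ / r))

lemma cut_one {x0 x : Eu N} {r : ℝ} (hr : 0 < r) (hx : x ∈ ball x0 (2 * r)) : cut x0 r x = 1 := by
  rw [mem_ball, dist_eq_norm] at hx
  have : ‖x - x0‖ / r < 2 := by rw [div_lt_iff₀ hr]; exact hx
  rw [cut, min_eq_left (by linarith), max_eq_right zero_le_one]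

lemma cut_zero {x0 x : Eu N} {r : ℝ} (hr : 0 < r) (hx : x ∉ ball x0 (3 * r)) : cut x0 r x = 0 := by
  rw [mem_ball, dist_eq_norm, not_lt] at hx
  have : 3 ≤ ‖x - x0‖ / r := by rw [le_div_iff₀ hr]; exact hx
  rw [cut, max_eq_left]
  exact (min_le_right _ _).trans (by linarith)

lemma cut_mem (x0 x : Eu N) (r : ℝ) : 0 ≤ cut x0 r x ∧ cut x0 r x ≤ 1 :=
  ⟨le_max_left _ _, max_le zero_le_one (min_le_left _ _)⟩

lemma cut_lip (x0 x y : Eu N) {r : ℝ} (hr : 0 < r) : |cut x0 r x - cut x0 r y| ≤ ‖x - y‖ / r := by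
  have h1 : |cut x0 r x - cut x0 r y| ≤ |(3 - ‖x - x0‖ / r) - (3 - ‖y - x0‖ / r)| := by
    have a1 := abs_max_sub_max_le_abs (min 1 (3 - ‖x - x0‖ / r)) (min 1 (3 - ‖y - x0‖ / r)) 0
    have a2 := abs_min_sub_min_le_max 1 (3 - ‖x - x0‖ / r) 1 (3 - ‖y - x0‖ / r)
    rw [sub_self, abs_zero, max_eq_right (abs_nonneg _)] at a2
    rw [cut, cut, max_comm 0, max_comm 0]
    exact a1.trans a2
  refine h1.trans ?_
  have : (3 - ‖x - x0‖ / r) - (3 - ‖y - x0‖ / r) = (‖y - x0‖ - ‖x - x0‖) / r := by ring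
  rw [this, abs_div, abs_of_pos hr]
  gcongr
  have := abs_norm_sub_norm_le (y - x0) (x - x0)
  rwa [sub_sub_sub_cancel_right, norm_sub_rev y x] at this

lemma cut_holder {g : Eu N → ℝ} {x0 : Eu N} {r M C γ : ℝ} (hr : 0 < r) (hγ : 0 < γ) (hγ1 : γ ≤ 1)
    (hM : 0 ≤ M) (hC : 0 ≤ C)
    (hgM : ∀ x ∈ ball x0 (3 * r), |g x| ≤ M)
    (hH : ∀ x ∈ ball x0 (3 * r), ∀ y ∈ ball x0 (3 * r), |g x - g y| ≤ C * ‖x - y‖ ^ γ) (x y : Eu N) :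
    |cut x0 r x * g x - cut x0 r y * g y| ≤ (C + M * (r ^ γ)⁻¹) * ‖x - y‖ ^ γ := by
  have hd : |cut x0 r x - cut x0 r y| ≤ (r ^ γ)⁻¹ * ‖x - y‖ ^ γ := by
    have e : (r ^ γ)⁻¹ * ‖x - y‖ ^ γ = (‖x - y‖ / r) ^ γ := by
      rw [Real.div_rpow (norm_nonneg _) hr.le]; field_simp
    rw [e]
    have t0 : 0 ≤ ‖x - y‖ / r := by positivity
    by_cases ht : ‖x - y‖ / r ≤ 1
    · refine (cut_lip x0 x y hr).trans ?_
      exact Real.self_le_rpow_of_le_one t0 ht hγ1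
    · push Not at ht
      refine le_trans ?_ (Real.one_le_rpow ht.le hγ.le)
      have := cut_mem x0 x r
      have := cut_mem x0 y r
      rw [abs_le]; constructor <;> linarith
  have hp : 0 ≤ ‖x - y‖ ^ γ := by positivity
  have hr' : 0 ≤ (r ^ γ)⁻¹ := by positivity
  by_cases hy : y ∈ ball x0 (3 * r)
  · by_cases hx : x ∈ ball x0 (3 * r)
    · have e : cut x0 r x * g x - cut x0 r y * g y =
        cut x0 r x * (g x - g y) + (cut x0 r x - cut x0 r y) * g y := by ring
      rw [e]
      refine (abs_add_le _ _).trans ?_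
      rw [abs_mul, abs_mul, abs_of_nonneg (cut_mem x0 x r).1]
      have h1 : cut x0 r x * |g x - g y| ≤ 1 * (C * ‖x - y‖ ^ γ) :=
        mul_le_mul (cut_mem x0 x r).2 (hH x hx y hy) (abs_nonneg _) zero_le_one
      have h2 : |cut x0 r x - cut x0 r y| * |g y| ≤ ((r ^ γ)⁻¹ * ‖x - y‖ ^ γ) * M :=
        mul_le_mul hd (hgM y hy) (abs_nonneg _) (by positivity)
      linarith
    · rw [cut_zero hr hx] at hd ⊢
      rw [zero_mul, zero_sub, abs_neg, abs_mul]
      rw [zero_sub, abs_neg] at hd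
      have h2 := mul_le_mul hd (hgM y hy) (abs_nonneg _) (by positivity)
      have := mul_nonneg hC hp
      linarith
  · rw [cut_zero hr hy] at hd ⊢
    by_cases hx : x ∈ ball x0 (3 * r)
    · rw [zero_mul, sub_zero, abs_mul]
      rw [sub_zero] at hd
      have h2 := mul_le_mul hd (hgM x hx) (abs_nonneg _) (by positivity)
      have := mul_nonneg hC hp
      linarith
    · rw [cut_zero hr hx]; simp; positivity

lemma cut_cont (x0 : Eu N) (r : ℝ) : Continuous (cut x0 r) := by unfold cut; fun_prop

lemma cut_bd {q : Eu N → ℝ} {x0 : Eu N} {r M : ℝ} (hr : 0 < r) (hM : 0 ≤ M)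
    (hq : ∀ x ∈ ball x0 (3 * r), |q x| ≤ M) (x : Eu N) : |cut x0 r x * q x| ≤ M := by
  by_cases hx : x ∈ ball x0 (3 * r)
  · rw [abs_mul, abs_of_nonneg (cut_mem x0 x r).1]
    have := mul_le_mul (cut_mem x0 x r).2 (hq x hx) (abs_nonneg _) zero_le_one
    linarith
  · rw [cut_zero hr hx]; simpa using hM

lemma ID_contDiffOn (hN : 0 < N) {U : Set (Eu N)} {w g : Eu N → ℝ} (h : HasID U w g)
    (hw : Measurable w) (hg : Measurable g) {x0 : Eu N} {r M C γ : ℝ} (hr : 0 < r)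
    (hγ : 0 < γ) (hγ1 : γ ≤ 1) (hC : 0 ≤ C)
    (hU : closedBall x0 (2 * r) ⊆ U) (hwM : ∀ x ∈ ball x0 (3 * r), |w x| ≤ M)
    (hgM : ∀ x ∈ ball x0 (3 * r), |g x| ≤ M)
    (hH : ∀ x ∈ ball x0 (3 * r), ∀ y ∈ ball x0 (3 * r), |g x - g y| ≤ C * ‖x - y‖ ^ γ) :
    ContDiffOn ℝ 2 w (ball x0 r) := by
  have hM : 0 ≤ M := (abs_nonneg _).trans (hwM x0 (mem_ball_self (by positivity)))
  set c := ∫ z : Eu N, et z with hc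
  have hcpos : 0 < c := et_integral_pos hN
  have cm : Measurable (cut x0 r) := (cut_cont x0 r).measurable
  have r1 := Jk_contDiff (cm.mul hw) (cut_bd hr hM hwM) et_contDiff et_hcs hr
  have r2 := pot_contDiff (cm.mul hg) (cut_bd hr hM hgM) hγ (by positivity)
    (cut_holder hr hγ hγ1 hM hC hgM hH) hr
  refine (((r1.add r2).const_smul c⁻¹).contDiffOn (s := ball x0 r)).congr fun x hx => ?_
  have := ID_local h hr hU (fun x hx => cut_one hr hx) hx
  simp only [smul_eq_mul] at this ⊢
  rw [← hc] at this
  erw [← this]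
  rw [inv_mul_cancel_left₀ hcpos.ne']

end PartC3

section PartC4

open scoped Topology
variable {N : ℕ}

lemma laplacian_cont {φ : Eu N → ℝ} (hφ : ContDiff ℝ 2 φ) : Continuous (laplacian φ) := by
  unfold laplacian
  refine continuous_finsetSum _ fun i _ => ?_
  have := hφ.continuous_iteratedFDeriv (m := 2) le_rfl
  exact (ContinuousMultilinearMap.apply ℝ (fun _ : Fin 2 => Eu N) ℝ _).continuous.comp this

lemma laplacian_hcs {φ : Eu N → ℝ} (hφ : HasCompactSupport φ) : HasCompactSupport (laplacian φ) := by
  have := hφ.iteratedFDeriv (𝕜 := ℝ) 2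
  refine this.mono fun x hx => ?_
  rw [Function.mem_support] at hx ⊢
  contrapose! hx
  simp [laplacian, hx]

lemma laplacian_congr {φ ψ : Eu N → ℝ} {x : Eu N} (h : φ =ᶠ[𝓝 x] ψ) : laplacian φ x = laplacian ψ x := by
  unfold laplacian
  rw [(h.iteratedFDeriv ℝ 2).self_of_nhds]

lemma Jk_cont_s {q k : Eu N → ℝ} (hq : Continuous q) {M : ℝ} (hM : ∀ x, |q x| ≤ M)
    (hk : Integrable k) (x : Eu N) :
    Continuous (fun s : ℝ => ∫ z, q (x - s • z) * k z) := by
  refine continuous_of_dominated (bound := fun z => M * ‖k z‖) ?_ ?_ (hk.norm.const_mul M) ?_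
  · intro s
    exact (Continuous.aestronglyMeasurable (by fun_prop)).mul hk.aestronglyMeasurable
  · intro s
    refine Eventually.of_forall fun z => ?_
    rw [norm_mul]
    exact mul_le_mul_of_nonneg_right (hM _) (norm_nonneg _)
  · exact Eventually.of_forall fun z => by fun_prop

lemma mean_formula {φ : Eu N → ℝ} (hφ : ContDiff ℝ 2 φ) {B0 B1 B2 B3 : ℝ} (h0 : ∀ x, |φ x| ≤ B0)
    (h1 : ∀ x, ‖fderiv ℝ φ x‖ ≤ B1)
    (h2 : ∀ x, ‖fderiv ℝ (fderiv ℝ φ) x‖ ≤ B2) (h3 : ∀ x, |laplacian φ x| ≤ B3) (x : Eu N) (s : ℝ) :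
    ∫ t in (0:ℝ)..s, t * ∫ z, laplacian φ (x - t • z) * zt z =
      (∫ z, φ (x - s • z) * et z) - (∫ z : Eu N, et z) * φ x := by
  have i1 : Integrable (fun z : Eu N => ‖z‖ * et z) := by
    refine Continuous.integrable_of_hasCompactSupport (continuous_norm.mul et_cont) ?_
    exact et_hcs.mul_left
  have hd := mean_deriv et_cont (zt_contDiff.of_le (by norm_num)) et_int zt_int i1 zt_grad hφ h0 h1 h2 x
  have := intervalIntegral.integral_eq_sub_of_hasDerivAt (a := 0) (b := s) (fun t _ => hd t)
    ((continuous_id.mul (Jk_cont_s (laplacian_cont hφ) h3 zt_int x)).intervalIntegrable _ _)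
  rw [this]
  simp only [zero_smul, sub_zero]
  rw [integral_const_mul, mul_comm (φ x)]

lemma mean_formula_cs {φ : Eu N → ℝ} (hφ : ContDiff ℝ 2 φ) (hc : HasCompactSupport φ) (x : Eu N) (s : ℝ) :
    ∫ t in (0:ℝ)..s, t * ∫ z, laplacian φ (x - t • z) * zt z =
      (∫ z, φ (x - s • z) * et z) - (∫ z : Eu N, et z) * φ x := by
  have k1 : ContDiff ℝ 1 (fderiv ℝ φ) := hφ.fderiv_right (by norm_num)
  obtain ⟨B0, h0⟩ := hφ.continuous.bounded_above_of_compact_support hc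
  obtain ⟨B1, h1⟩ := k1.continuous.bounded_above_of_compact_support (hc.fderiv ℝ)
  obtain ⟨B2, h2⟩ := (k1.continuous_fderiv one_ne_zero).bounded_above_of_compact_support
    ((hc.fderiv ℝ).fderiv ℝ)
  obtain ⟨B3, h3⟩ := (laplacian_cont hφ).bounded_above_of_compact_support (laplacian_hcs hc)
  exact mean_formula hφ h0 h1 h2 h3 x s

lemma cutoff_contDiff {n : WithTop ℕ∞} {w β : Eu N → ℝ} {U : Set (Eu N)} (hU : IsOpen U)
    (hw : ContDiffOn ℝ n w U) (hβ : ContDiff ℝ n β) (hs : tsupport β ⊆ U) :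
    ContDiff ℝ n (fun x => β x * w x) := by
  rw [contDiff_iff_contDiffAt]
  intro x
  by_cases hx : x ∈ U
  · exact hβ.contDiffAt.mul (hw.contDiffAt (hU.mem_nhds hx))
  · have : (fun x => β x * w x) =ᶠ[𝓝 x] fun _ => 0 := by
      have hx' : x ∉ tsupport β := fun h => hx (hs h)
      filter_upwards [(isClosed_tsupport β).isOpen_compl.mem_nhds hx'] with y hy
      rw [image_eq_zero_of_notMem_tsupport hy, zero_mul]
    exact contDiffAt_const.congr_of_eventuallyEq this

lemma ID_equation (hN : 0 < N) {U : Set (Eu N)} {w g : Eu N → ℝ} (h : HasID U w g)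
    {x0 : Eu N} {r : ℝ} (hr : 0 < r)
    (hU : closedBall x0 (2 * r) ⊆ U) (hw : ContDiffOn ℝ 2 w (ball x0 r))
    (hg : ContinuousOn g (ball x0 r)) : laplacian w x0 = - g x0 := by
  let β : ContDiffBump x0 := ⟨r / 4, r / 2, by positivity, by linarith⟩
  have hts : tsupport β ⊆ ball x0 r := by
    rw [β.tsupport_eq]
    exact closedBall_subset_ball (by change r / 2 < r; linarith)
  have hβc : HasCompactSupport (β : Eu N → ℝ) := β.hasCompactSupport
  have hφ : ContDiff ℝ 2 (fun x => β x * w x) := cutoff_contDiff isOpen_ball hw β.contDiff hts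
  have hq : Continuous (fun x => β x * g x) := by
    rw [← contDiff_zero (𝕜 := ℝ)]
    exact cutoff_contDiff isOpen_ball (contDiffOn_zero.2 hg) β.contDiff hts
  have hφc : HasCompactSupport (fun x => β x * w x) := hβc.mul_right
  have hqc : HasCompactSupport (fun x => β x * g x) := hβc.mul_right
  set φ := fun x => β x * w x with hφdef
  set q := fun x => β x * g x with hqdef
  have hβ1 : ∀ x ∈ closedBall x0 (r / 4), β x = 1 := fun x hx => β.one_of_mem_closedBall hx
  have hl : laplacian w x0 = laplacian φ x0 := by
    refine laplacian_congr ?_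
    filter_upwards [closedBall_mem_nhds x0 (show 0 < r / 4 by positivity)] with x hx
    simp only [hφdef, hβ1 x hx, one_mul]
  have hx0 : β x0 = 1 := hβ1 x0 (mem_closedBall_self (by positivity))
  set p := fun x => laplacian φ x + q x with hp
  have hpc : Continuous p := (laplacian_cont hφ).add hq
  have hpcs : HasCompactSupport p := (laplacian_hcs hφc).add hqc
  obtain ⟨Bp, hBp⟩ := hpc.bounded_above_of_compact_support hpcs
  obtain ⟨Bl, hBl⟩ := (laplacian_cont hφ).bounded_above_of_compact_support (laplacian_hcs hφc)
  obtain ⟨Bq, hBq⟩ := hq.bounded_above_of_compact_support hqc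
  have hhc := Jk_cont_s hpc hBp zt_int x0
  have c1 := Jk_cont_s (laplacian_cont hφ) hBl zt_int x0
  have c2 := Jk_cont_s hq hBq zt_int x0
  set H := fun s : ℝ => ∫ z, p (x0 - s • z) * zt z with hH
  have hHs : ∀ s, H s = (∫ z, laplacian φ (x0 - s • z) * zt z) + ∫ z, q (x0 - s • z) * zt z := by
    intro s
    rw [← integral_add]
    · simp only [hH, hp, add_mul]
    · refine bd_int zt_int ?_ (fun z => hBl _)
      exact (laplacian_cont hφ).comp (by fun_prop)
    · exact bd_int zt_int (hq.comp (by fun_prop)) (fun z => hBq _)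
  have hzint : ∀ s ∈ Ioc 0 (r / 8), ∫ t in (0:ℝ)..s, t * H t = 0 := by
    intro s hs
    have e1 := ID_local (χ := β) h (x0 := x0) hs.1
      ((closedBall_subset_closedBall (by linarith [hs.2])).trans hU)
      (fun x hx => hβ1 x (ball_subset_closedBall (ball_subset_ball (by linarith [hs.2]) hx)))
      (mem_ball_self hs.1)
    have e2 := mean_formula_cs hφ hφc x0 s
    have e3 : φ x0 = w x0 := by simp only [hφdef, hx0, one_mul]
    have e4 : ∫ t in (0:ℝ)..s, t * H t = (∫ t in (0:ℝ)..s, t * ∫ z, laplacian φ (x0 - t • z) * zt z) +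
        ∫ t in (0:ℝ)..s, t * ∫ z, q (x0 - t • z) * zt z := by
      have ii := intervalIntegral.integral_add (μ := volume) (a := 0) (b := s)
        ((continuous_id.mul c1).intervalIntegrable 0 s)
        ((continuous_id.mul c2).intervalIntegrable 0 s)
      refine Eq.trans ?_ ii
      refine intervalIntegral.integral_congr fun t _ => ?_
      simp only [hHs]; rw [mul_add]; rfl
    rw [e4, e2, e3, e1]
    simp only [Jk, smul_eq_mul]
    ring
  have hz : ∀ s ∈ Ioo 0 (r / 8), H s = 0 := by
    intro s hs
    have d1 := ((continuous_id.mul hhc).integral_hasStrictDerivAt 0 s).hasDerivAt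
    have d2 : HasDerivAt (fun s => ∫ t in (0:ℝ)..s, t * H t) 0 s := by
      refine (hasDerivAt_const s (0:ℝ)).congr_of_eventuallyEq ?_
      filter_upwards [isOpen_Ioo.mem_nhds hs] with t ht
      exact hzint t ⟨ht.1, ht.2.le⟩
    have := d1.unique d2
    rcases mul_eq_zero.1 this with h' | h'
    · exact absurd h' hs.1.ne'
    · exact h'
  have hH0 : H 0 = 0 := by
    have l1 : Tendsto H (𝓝[>] 0) (𝓝 (H 0)) := (hhc.tendsto 0).mono_left nhdsWithin_le_nhds
    have l2 : Tendsto H (𝓝[>] 0) (𝓝 0) := by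
      refine tendsto_const_nhds.congr' ?_
      filter_upwards [Ioo_mem_nhdsGT (show (0:ℝ) < r / 8 by positivity)] with s hs
      exact (hz s hs).symm
    exact tendsto_nhds_unique l1 l2
  simp only [hH, zero_smul, sub_zero] at hH0
  rw [integral_const_mul] at hH0
  rcases mul_eq_zero.1 hH0 with h' | h'
  · simp only [hp, hqdef, hx0, one_mul] at h'
    rw [hl]; linarith
  · exact absurd h' zt_integral_pos.ne'

end PartC4

section PartD1

open scoped Topology
variable {N : ℕ}

def IDat (w g : Eu N → ℝ) (x : Eu N) (r : ℝ) : Prop :=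
    (∫ z : Eu N, et z) * w x =
      (∫ z, w (x - r • z) * et z) + ∫ s in (0:ℝ)..r, s * ∫ z, g (x - s • z) * zt z

lemma sub_smul_mem {x z : Eu N} {s r : ℝ} (hs : 0 ≤ s) (hsr : s ≤ r) (hz : ¬ 1 ≤ ‖z‖) :
    x - s • z ∈ closedBall x r := by
  push Not at hz
  rw [mem_closedBall, dist_eq_norm]
  have : x - s • z - x = - (s • z) := by abel
  rw [this, norm_neg, norm_smul, Real.norm_of_nonneg hs]
  nlinarith

lemma Jk_tendsto {g : Eu N → ℝ} {gk : ℕ → Eu N → ℝ} {k : Eu N → ℝ} (hk : Integrable k)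
    (h1 : ∀ z, 1 ≤ ‖z‖ → k z = 0) (hm : ∀ n, Measurable (gk n)) {x : Eu N} {s r M : ℝ}
    (hs : 0 ≤ s) (hsr : s ≤ r)
    (hM : ∀ᶠ n in atTop, ∀ y ∈ closedBall x r, |gk n y| ≤ M)
    (hl : ∀ y ∈ closedBall x r, Tendsto (fun n => gk n y) atTop (𝓝 (g y))) :
    Tendsto (fun n => ∫ z, gk n (x - s • z) * k z) atTop (𝓝 (∫ z, g (x - s • z) * k z)) := by
  refine tendsto_integral_filter_of_dominated_convergence (fun z => M * ‖k z‖) ?_ ?_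
    (hk.norm.const_mul M) ?_
  · refine Eventually.of_forall fun n => ?_
    exact ((hm n).comp (by fun_prop)).aestronglyMeasurable.mul hk.aestronglyMeasurable
  · filter_upwards [hM] with n hn
    refine Eventually.of_forall fun z => ?_
    by_cases hz : 1 ≤ ‖z‖
    · simp [h1 z hz]
    · rw [norm_mul]
      exact mul_le_mul_of_nonneg_right (hn _ (sub_smul_mem hs hsr hz)) (norm_nonneg _)
  · refine Eventually.of_forall fun z => ?_
    by_cases hz : 1 ≤ ‖z‖
    · simp [h1 z hz]
    · exact (hl _ (sub_smul_mem hs hsr hz)).mul_const _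

lemma Jk_abs_le {g k : Eu N → ℝ} (hk : Integrable k) (h1 : ∀ z, 1 ≤ ‖z‖ → k z = 0) {x : Eu N} {s r M : ℝ}
    (hs : 0 ≤ s) (hsr : s ≤ r) (hM : ∀ y ∈ closedBall x r, |g y| ≤ M) :
    |∫ z, g (x - s • z) * k z| ≤ M * ∫ z, ‖k z‖ := by
  rw [← integral_const_mul, ← Real.norm_eq_abs]
  refine norm_integral_le_of_norm_le (hk.norm.const_mul M) (Eventually.of_forall fun z => ?_)
  by_cases hz : 1 ≤ ‖z‖
  · simp [h1 z hz]
  · rw [norm_mul]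
    exact mul_le_mul_of_nonneg_right (hM _ (sub_smul_mem hs hsr hz)) (norm_nonneg _)

lemma IDat_limit {w g : Eu N → ℝ} {wk gk : ℕ → Eu N → ℝ} (hwm : ∀ n, Measurable (wk n))
    (hgm : ∀ n, Measurable (gk n)) {x : Eu N} {r M : ℝ} (hr : 0 < r)
    (hwM : ∀ᶠ n in atTop, ∀ y ∈ closedBall x r, |wk n y| ≤ M)
    (hgM : ∀ᶠ n in atTop, ∀ y ∈ closedBall x r, |gk n y| ≤ M)
    (hw : ∀ y ∈ closedBall x r, Tendsto (fun n => wk n y) atTop (𝓝 (w y)))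
    (hg : ∀ y ∈ closedBall x r, Tendsto (fun n => gk n y) atTop (𝓝 (g y)))
    (h : ∀ᶠ n in atTop, IDat (wk n) (gk n) x r) : IDat w g x r := by
  have t1 := (hw x (mem_closedBall_self hr.le)).const_mul (∫ z : Eu N, et z)
  have t2 := Jk_tendsto et_int (fun z => et_zero) hwm hr.le le_rfl hwM hw
  have t3 : Tendsto (fun n => ∫ s in (0:ℝ)..r, s * ∫ z, gk n (x - s • z) * zt z) atTop
      (𝓝 (∫ s in (0:ℝ)..r, s * ∫ z, g (x - s • z) * zt z)) := by
    refine intervalIntegral.tendsto_integral_filter_of_dominated_convergence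
      (fun s => r * (M * ∫ z : Eu N, ‖zt z‖)) ?_ ?_ intervalIntegrable_const ?_
    · refine Eventually.of_forall fun n => ?_
      have := (Jk_meas (hgm n) zt_cont zt_hcs x).aestronglyMeasurable (μ := volume.restrict (uIoc 0 r))
      exact measurable_id.aestronglyMeasurable.mul this
    · filter_upwards [hgM] with n hn
      refine Eventually.of_forall fun s hs => ?_
      rw [uIoc_of_le hr.le] at hs
      rw [norm_mul, Real.norm_of_nonneg hs.1.le]
      exact mul_le_mul hs.2 (Jk_abs_le zt_int (fun z => zt_zero) hs.1.le hs.2 hn) (norm_nonneg _) hr.le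
    · refine Eventually.of_forall fun s hs => ?_
      rw [uIoc_of_le hr.le] at hs
      exact (Jk_tendsto zt_int (fun z => zt_zero) hgm hs.1.le hs.2 hgM hg).const_mul s
  refine tendsto_nhds_unique (t1.congr' ?_) (t2.add t3)
  filter_upwards [h] with n hn using hn

/-- averages of translates -/
lemma avg_hasFDerivAt {P F : Type*} [TopologicalSpace P] [SecondCountableTopology P] [MeasurableSpace P]
    [OpensMeasurableSpace P]
    [NormedAddCommGroup F] [NormedSpace ℝ F] {μ : Measure P} {W : P → ℝ} (hW : Integrable W μ)
    {τ : P → Eu N} (hτ : Continuous τ) {h : Eu N → F} (hh : ContDiff ℝ 1 h) {B0 B1 : ℝ}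
    (h0 : ∀ x, ‖h x‖ ≤ B0) (h1 : ∀ x, ‖fderiv ℝ h x‖ ≤ B1) (x : Eu N) :
    HasFDerivAt (fun x => ∫ p, W p • h (x - τ p) ∂μ) (∫ p, W p • fderiv ℝ h (x - τ p) ∂μ) x := by
  have hc := hh.continuous
  have hd := hh.continuous_fderiv one_ne_zero
  refine hasFDerivAt_integral_of_dominated_of_fderiv_le (𝕜 := ℝ) (s := univ)
    (bound := fun p => ‖W p‖ * B1)
    (F' := fun x p => W p • fderiv ℝ h (x - τ p)) univ_mem ?_ ?_ ?_ ?_ (hW.norm.mul_const _) ?_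
  · refine Eventually.of_forall fun x => hW.aestronglyMeasurable.smul ?_
    exact Continuous.aestronglyMeasurable (by fun_prop)
  · refine Integrable.mono' (hW.norm.mul_const B0) (hW.aestronglyMeasurable.smul
      (Continuous.aestronglyMeasurable (by fun_prop))) (Eventually.of_forall fun p => ?_)
    rw [norm_smul]; exact mul_le_mul_of_nonneg_left (h0 _) (norm_nonneg _)
  · exact hW.aestronglyMeasurable.smul (Continuous.aestronglyMeasurable (by fun_prop))
  · refine Eventually.of_forall fun p x _ => ?_
    rw [norm_smul]; exact mul_le_mul_of_nonneg_left (h1 _) (norm_nonneg _)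
  · refine Eventually.of_forall fun p x _ => ?_
    have a1 := (hh.differentiable one_ne_zero (x - τ p)).hasFDerivAt.comp x
      ((hasFDerivAt_id x).sub_const (τ p))
    exact a1.const_smul (W p)

lemma avg_cont {P F : Type*} [TopologicalSpace P] [SecondCountableTopology P] [MeasurableSpace P]
    [OpensMeasurableSpace P]
    [NormedAddCommGroup F] [NormedSpace ℝ F] {μ : Measure P} {W : P → ℝ} (hW : Integrable W μ)
    {τ : P → Eu N} (hτ : Continuous τ) {h : Eu N → F} (hh : Continuous h) {B0 : ℝ}
    (h0 : ∀ x, ‖h x‖ ≤ B0) : Continuous (fun x => ∫ p, W p • h (x - τ p) ∂μ) := by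
  refine continuous_of_dominated (bound := fun p => ‖W p‖ * B0) ?_ ?_ (hW.norm.mul_const _) ?_
  · exact fun x => hW.aestronglyMeasurable.smul (Continuous.aestronglyMeasurable (by fun_prop))
  · refine fun x => Eventually.of_forall fun p => ?_
    rw [norm_smul]; exact mul_le_mul_of_nonneg_left (h0 _) (norm_nonneg _)
  · exact Eventually.of_forall fun p => by fun_prop

lemma avg_bound {P F : Type*} [MeasurableSpace P]
    [NormedAddCommGroup F] [NormedSpace ℝ F] {μ : Measure P} {W : P → ℝ} (hW : Integrable W μ)
    {τ : P → Eu N} {h : Eu N → F} {B0 : ℝ}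
    (h0 : ∀ x, ‖h x‖ ≤ B0) (x : Eu N) : ‖∫ p, W p • h (x - τ p) ∂μ‖ ≤ (∫ p, ‖W p‖ ∂μ) * B0 := by
  rw [← integral_mul_const]
  refine norm_integral_le_of_norm_le (hW.norm.mul_const _) (Eventually.of_forall fun p => ?_)
  rw [norm_smul]; exact mul_le_mul_of_nonneg_left (h0 _) (norm_nonneg _)

lemma avg_int {P F : Type*} [TopologicalSpace P] [SecondCountableTopology P] [MeasurableSpace P]
    [OpensMeasurableSpace P]
    [NormedAddCommGroup F] [NormedSpace ℝ F] {μ : Measure P} {W : P → ℝ} (hW : Integrable W μ)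
    {τ : P → Eu N} (hτ : Continuous τ) {h : Eu N → F} (hh : Continuous h) {B0 : ℝ}
    (h0 : ∀ x, ‖h x‖ ≤ B0) (x : Eu N) : Integrable (fun p => W p • h (x - τ p)) μ := by
  refine Integrable.mono' (hW.norm.mul_const B0) (hW.aestronglyMeasurable.smul
      (Continuous.aestronglyMeasurable (by fun_prop))) (Eventually.of_forall fun p => ?_)
  rw [norm_smul]; exact mul_le_mul_of_nonneg_left (h0 _) (norm_nonneg _)

lemma avg_apply {P F : Type*} [TopologicalSpace P] [SecondCountableTopology P] [MeasurableSpace P]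
    [OpensMeasurableSpace P]
    [NormedAddCommGroup F] [NormedSpace ℝ F] [CompleteSpace F] {μ : Measure P} {W : P → ℝ} (hW : Integrable W μ)
    {τ : P → Eu N} (hτ : Continuous τ) {h : Eu N → (Eu N →L[ℝ] F)} (hh : Continuous h) {B0 : ℝ}
    (h0 : ∀ x, ‖h x‖ ≤ B0) (x v : Eu N) :
    (∫ p, W p • h (x - τ p) ∂μ) v = ∫ p, W p • h (x - τ p) v ∂μ := by
  rw [ContinuousLinearMap.integral_apply (avg_int hW hτ hh h0 x)]
  rfl

lemma laplacian_eq_fderiv (u : Eu N → ℝ) (x : Eu N) :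
    laplacian u x = ∑ i, fderiv ℝ (fderiv ℝ u) x (EuclideanSpace.single i 1) (EuclideanSpace.single i 1) := by
  simp [laplacian, iteratedFDeriv_two_apply]

lemma avg_contDiff {P : Type*} [TopologicalSpace P] [SecondCountableTopology P] [MeasurableSpace P]
    [OpensMeasurableSpace P] {μ : Measure P} {W : P → ℝ} (hW : Integrable W μ)
    {τ : P → Eu N} (hτ : Continuous τ) {h : Eu N → ℝ} (hh : ContDiff ℝ 2 h) {B0 B1 B2 : ℝ}
    (h0 : ∀ x, ‖h x‖ ≤ B0) (h1 : ∀ x, ‖fderiv ℝ h x‖ ≤ B1)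
    (h2 : ∀ x, ‖fderiv ℝ (fderiv ℝ h) x‖ ≤ B2) :
    ContDiff ℝ 2 (fun x => ∫ p, W p • h (x - τ p) ∂μ) ∧
    (∀ x, ‖fderiv ℝ (fun x => ∫ p, W p • h (x - τ p) ∂μ) x‖ ≤ (∫ p, ‖W p‖ ∂μ) * B1) ∧
    (∀ x, ‖fderiv ℝ (fderiv ℝ (fun x => ∫ p, W p • h (x - τ p) ∂μ)) x‖ ≤ (∫ p, ‖W p‖ ∂μ) * B2) ∧
    (∀ x, laplacian (fun x => ∫ p, W p • h (x - τ p) ∂μ) x = ∫ p, W p • laplacian h (x - τ p) ∂μ) := by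
  have k1 : ContDiff ℝ 1 (fderiv ℝ h) := hh.fderiv_right (by norm_num)
  have k2 := k1.continuous_fderiv one_ne_zero
  have d1 := fun x => avg_hasFDerivAt hW hτ (hh.of_le (by norm_num)) h0 h1 x
  have d2 := fun x => avg_hasFDerivAt hW hτ k1 h1 h2 x
  have e1 : fderiv ℝ (fun x => ∫ p, W p • h (x - τ p) ∂μ) = fun x => ∫ p, W p • fderiv ℝ h (x - τ p) ∂μ :=
    funext fun x => (d1 x).fderiv
  have e2 : ∀ x, fderiv ℝ (fun x => ∫ p, W p • fderiv ℝ h (x - τ p) ∂μ) x =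
      ∫ p, W p • fderiv ℝ (fderiv ℝ h) (x - τ p) ∂μ := fun x => (d2 x).fderiv
  have k3 : ∀ v, Continuous (fun x => fderiv ℝ (fderiv ℝ h) x v) := fun v => k2.clm_apply continuous_const
  have h3 : ∀ v x, ‖fderiv ℝ (fderiv ℝ h) x v‖ ≤ B2 * ‖v‖ := fun v x =>
    (ContinuousLinearMap.le_opNorm _ _).trans (mul_le_mul_of_nonneg_right (h2 x) (norm_nonneg _))
  have k4 : ∀ v, Continuous (fun x => fderiv ℝ (fderiv ℝ h) x v v) := fun v => (k3 v).clm_apply continuous_const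
  have h4 : ∀ v x, ‖fderiv ℝ (fderiv ℝ h) x v v‖ ≤ B2 * ‖v‖ * ‖v‖ := fun v x =>
    (ContinuousLinearMap.le_opNorm _ _).trans (mul_le_mul_of_nonneg_right (h3 v x) (norm_nonneg _))
  refine ⟨contDiff_two_of d1 d2 (avg_cont hW hτ k2 h2), ?_, ?_, ?_⟩
  · intro x; rw [e1]; exact avg_bound hW h1 x
  · intro x; rw [e1, e2]; exact avg_bound hW h2 x
  · intro x
    rw [laplacian_eq_fderiv, e1, e2]
    simp_rw [laplacian_eq_fderiv, Finset.smul_sum]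
    rw [integral_finsetSum]
    · refine Finset.sum_congr rfl fun i _ => ?_
      rw [avg_apply hW hτ k2 h2, avg_apply hW hτ (k3 _) (h3 _)]
    · intro i _
      exact avg_int hW hτ (k4 _) (h4 _) x

end PartD1

section PartD2

open scoped Topology
variable {N : ℕ}

noncomputable def gG (z : Eu N) : ℝ := Real.exp (-(1/4) * ‖z‖ ^ 2)

lemma gauss_int {b : ℝ} (hb : 0 < b) : Integrable (fun z : Eu N => Real.exp (-b * ‖z‖ ^ 2)) := by
  have h := GaussianFourier.integrable_cexp_neg_mul_sq_norm_add (V := Eu N) (b := (b : ℂ))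
    (by simpa using hb) 0 0
  have h2 := h.norm
  refine h2.congr (Eventually.of_forall fun z => ?_)
  simp only [zero_mul, add_zero, Complex.norm_exp]
  congr 1
  norm_cast

lemma gG_int : Integrable (gG : Eu N → ℝ) := gauss_int (by norm_num)

lemma gG_contDiff : ContDiff ℝ 2 (gG : Eu N → ℝ) := by
  unfold gG
  exact (contDiff_const.mul (contDiff_norm_sq ℝ)).exp

lemma gG_pos (z : Eu N) : 0 < gG z := Real.exp_pos _

lemma gG_int1 : Integrable (fun z : Eu N => ‖z‖ * gG z) := by
  refine Integrable.mono' ((gauss_int (N := N) (b := 1/8) (by norm_num)).const_mul 2)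
    ((continuous_norm.mul gG_contDiff.continuous).aestronglyMeasurable) (Eventually.of_forall fun z => ?_)
  rw [norm_mul, norm_norm, Real.norm_of_nonneg (gG_pos z).le]
  have e : gG z = Real.exp (-(1/8) * ‖z‖ ^ 2) * Real.exp (-(1/8) * ‖z‖ ^ 2) := by
    rw [gG, ← Real.exp_add]; congr 1; ring
  rw [e, ← mul_assoc]
  refine mul_le_mul_of_nonneg_right ?_ (Real.exp_pos _).le
  have h1 : Real.exp (-(1/8) * ‖z‖ ^ 2) * Real.exp ((1/8) * ‖z‖ ^ 2) = 1 := by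
    rw [← Real.exp_add]; simp
  have h2 := Real.add_one_le_exp ((1/8) * ‖z‖ ^ 2)
  have h3 : ‖z‖ ≤ 2 * Real.exp ((1/8) * ‖z‖ ^ 2) := by nlinarith [sq_nonneg (‖z‖ - 2)]
  have h4 := Real.exp_pos (-(1/8) * ‖z‖ ^ 2)
  calc ‖z‖ * Real.exp (-(1/8) * ‖z‖ ^ 2) ≤ 2 * Real.exp ((1/8) * ‖z‖ ^ 2) * Real.exp (-(1/8) * ‖z‖ ^ 2) :=
        mul_le_mul_of_nonneg_right h3 h4.le
    _ = 2 := by rw [mul_assoc, mul_comm (Real.exp ((1/8) * ‖z‖ ^ 2)), h1, mul_one]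

lemma gG_grad (z v : Eu N) : fderiv ℝ (fun z => 2 * gG z) z v = - gG z * inner ℝ z v := by
  have h1 : HasFDerivAt (fun z : Eu N => ‖z‖ ^ 2) (2 • (innerSL ℝ z)) z :=
    (hasStrictFDerivAt_norm_sq z).hasFDerivAt
  have h2 := ((h1.const_mul (-(1/4))).exp).const_mul 2
  have h3 : HasFDerivAt (fun z : Eu N => 2 * gG z) _ z := h2
  rw [h3.fderiv]
  simp [gG]
  ring

noncomputable def cG (N : ℕ) : ℝ := ∫ z : Eu N, gG z

lemma cG_pos : 0 < cG N := by
  have : (cG N) = ∫ z : Eu N, Real.exp (-(1/4) * ‖z‖ ^ 2) := rfl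
  rw [this, GaussianFourier.integral_rexp_neg_mul_sq_norm (by norm_num)]
  positivity

noncomputable def rW (N : ℕ) (l : ℝ) (p : ℝ × Eu N) : ℝ :=
  (p.1 * Real.exp (-l * p.1 ^ 2)) * (2 * (cG N)⁻¹ * gG p.2)

noncomputable def rμ (N : ℕ) : Measure (ℝ × Eu N) := (volume.restrict (Ioi 0)).prod volume

lemma rW_int {l : ℝ} (hl : 0 < l) : Integrable (rW N l) (rμ N) :=
  ((integrable_mul_exp_neg_mul_sq hl).restrict).mul_prod (gG_int.const_mul _)

noncomputable def Res (l : ℝ) (g : Eu N → ℝ) (x : Eu N) : ℝ :=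
  ∫ p, rW N l p • g (x - p.1 • p.2) ∂(rμ N)

lemma rτ_cont : Continuous (fun p : ℝ × Eu N => p.1 • p.2) := by fun_prop

lemma Res_iter {l : ℝ} (hl : 0 < l) {g : Eu N → ℝ} (hg : Continuous g) {B : ℝ} (hB : ∀ x, |g x| ≤ B)
    (x : Eu N) : Res l g x =
      ∫ s in Ioi (0:ℝ), 2 * (cG N)⁻¹ * (s * Real.exp (-l * s ^ 2) * ∫ z, g (x - s • z) * gG z) := by
  have hi := avg_int (rW_int hl) rτ_cont hg hB x
  rw [Res, rμ, integral_prod _ hi]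
  refine integral_congr_ae (Eventually.of_forall fun s => ?_)
  simp only [rW, smul_eq_mul]
  rw [← integral_const_mul, ← integral_const_mul]
  refine integral_congr_ae (Eventually.of_forall fun z => ?_)
  simp only []; ring

lemma Res_integrand_int {l : ℝ} (hl : 0 < l) {g : Eu N → ℝ} (hg : Continuous g) {B : ℝ} (hB : ∀ x, |g x| ≤ B)
    (x : Eu N) : IntegrableOn (fun s => s * Real.exp (-l * s ^ 2) * ∫ z, g (x - s • z) * gG z) (Ioi 0) := by
  have := (integrable_mul_exp_neg_mul_sq hl).integrableOn (s := Ioi 0)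
  have hc := Jk_cont_s hg hB gG_int x
  refine Integrable.mono' (this.norm.mul_const (B * ∫ z : Eu N, ‖gG z‖)) ?_ (Eventually.of_forall fun s => ?_)
  · exact (Continuous.aestronglyMeasurable (by fun_prop))
  · rw [norm_mul]
    exact mul_le_mul_of_nonneg_left (Jk_bound (g := g) hB gG_int s x) (norm_nonneg _)

lemma Res_lap {l : ℝ} (hl : 0 < l) {g : Eu N → ℝ} (hg : ContDiff ℝ 2 g) {B0 B1 B2 B3 : ℝ}
    (h0 : ∀ x, |g x| ≤ B0) (h1 : ∀ x, ‖fderiv ℝ g x‖ ≤ B1)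
    (h2 : ∀ x, ‖fderiv ℝ (fderiv ℝ g) x‖ ≤ B2) (h3 : ∀ x, |laplacian g x| ≤ B3) (x : Eu N) :
    Res l (laplacian g) x = l * Res l g x - g x := by
  set m := fun s : ℝ => ∫ z, g (x - s • z) * gG z with hm
  set n := fun s : ℝ => ∫ z, laplacian g (x - s • z) * gG z with hn
  have i2 : Integrable (fun z : Eu N => 2 * gG z) := gG_int.const_mul 2
  have hd : ∀ s, HasDerivAt m (2 * s * n s) s := by
    intro s
    refine (mean_deriv gG_contDiff.continuous
      ((contDiff_const.mul gG_contDiff).of_le (by norm_num)) gG_int i2 gG_int1 gG_grad hg h0 h1 h2 x s).congr_deriv ?_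
    simp only [hn]
    rw [← integral_const_mul, ← integral_const_mul]
    refine integral_congr_ae (Eventually.of_forall fun z => ?_)
    simp only []; ring
  have he : ∀ s : ℝ, HasDerivAt (fun s : ℝ => Real.exp (-l * s ^ 2)) (Real.exp (-l * s ^ 2) * (-l * (2 * s))) s := by
    intro s
    have := ((hasDerivAt_pow 2 s).const_mul (-l)).exp
    refine this.congr_deriv ?_
    norm_num
  have hP : ∀ s : ℝ, HasDerivAt (fun s : ℝ => Real.exp (-l * s ^ 2) * m s)
      (2 * (s * Real.exp (-l * s ^ 2) * n s) - 2 * l * (s * Real.exp (-l * s ^ 2) * m s)) s := by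
    intro s
    refine ((he s).mul (hd s)).congr_deriv ?_
    ring
  have ia := Res_integrand_int hl hg.continuous h0 x
  have ib := Res_integrand_int hl (laplacian_cont hg) h3 x
  have ht : Tendsto (fun s : ℝ => Real.exp (-l * s ^ 2) * m s) atTop (𝓝 0) := by
    have hb : ∀ s, |m s| ≤ B0 * ∫ z : Eu N, ‖gG z‖ := fun s => Jk_bound (g := g) h0 gG_int s x
    have t1 : Tendsto (fun s : ℝ => Real.exp (-l * s ^ 2)) atTop (𝓝 0) := by
      refine Real.tendsto_exp_atBot.comp ?_
      exact (tendsto_pow_atTop two_ne_zero).const_mul_atTop_of_neg (by linarith)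
    have t2 := t1.mul_const (B0 * ∫ z : Eu N, ‖gG z‖)
    rw [zero_mul] at t2
    refine squeeze_zero_norm (fun s => ?_) t2
    rw [norm_mul, Real.norm_of_nonneg (Real.exp_pos _).le]
    exact mul_le_mul_of_nonneg_left (hb s) (Real.exp_pos _).le
  have key := integral_Ioi_of_hasDerivAt_of_tendsto (a := 0) (hP 0).continuousAt.continuousWithinAt
    (fun s _ => hP s) ((ib.const_mul 2).sub (ia.const_mul (2 * l))) ht
  have hsub : ∫ s in Ioi (0:ℝ), (2 * (s * Real.exp (-l * s ^ 2) * n s) - 2 * l * (s * Real.exp (-l * s ^ 2) * m s))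
      = 2 * (∫ s in Ioi (0:ℝ), (s * Real.exp (-l * s ^ 2) * n s))
        - 2 * l * ∫ s in Ioi (0:ℝ), (s * Real.exp (-l * s ^ 2) * m s) := by
    rw [← integral_const_mul, ← integral_const_mul]
    exact integral_sub (ib.const_mul 2) (ia.const_mul (2 * l))
  rw [hsub] at key
  have hm0 : m 0 = g x * cG N := by
    simp only [hm, zero_smul, sub_zero]
    rw [integral_const_mul]; rfl
  rw [Res_iter hl (laplacian_cont hg) h3, Res_iter hl hg.continuous h0, integral_const_mul, integral_const_mul]
  have hc := (cG_pos (N := N)).ne'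
  simp only [hm0] at key
  norm_num at key
  change 2 * (cG N)⁻¹ * (∫ s in Ioi (0:ℝ), (s * Real.exp (-l * s ^ 2) * n s)) =
    l * (2 * (cG N)⁻¹ * ∫ s in Ioi (0:ℝ), (s * Real.exp (-l * s ^ 2) * m s)) - g x
  simp only [neg_mul]
  generalize (∫ s in Ioi (0:ℝ), (s * Real.exp (-(l * s ^ 2)) * n s)) = I1 at key ⊢
  generalize (∫ s in Ioi (0:ℝ), (s * Real.exp (-(l * s ^ 2)) * m s)) = I2 at key ⊢
  field_simp
  linarith

lemma Res_const {l : ℝ} (hl : 0 < l) (a : ℝ) (x : Eu N) : Res l (fun _ : Eu N => a) x = a / l := by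
  have h := Res_lap (N := N) hl (g := fun _ => a) contDiff_const (B0 := |a|) (B1 := 0) (B2 := 0) (B3 := 0)
    (fun _ => le_rfl) (by simp) (fun x => by simp; exact (norm_zero (E := Eu N →L[ℝ] Eu N →L[ℝ] ℝ)).le) (fun x => by simp [laplacian_eq_fderiv]) x
  have e : laplacian (fun _ : Eu N => a) = fun _ => 0 := by
    funext x; simp [laplacian_eq_fderiv]
  rw [e] at h
  simp only [Res, smul_zero, integral_zero] at h ⊢
  field_simp
  linarith

lemma rW_norm {l : ℝ} (hl : 0 < l) : ∫ p, ‖rW N l p‖ ∂(rμ N) = 1 / l := by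
  rw [← Res_const (N := N) hl 1 0, Res]
  refine integral_congr_ae ?_
  have hpos : ∀ᵐ p ∂(rμ N), 0 < p.1 := by
    have : rμ N = (volume.prod volume).restrict (Ioi (0:ℝ) ×ˢ univ) := by
      rw [rμ, ← Measure.prod_restrict, Measure.restrict_univ]
    rw [this]
    refine (ae_restrict_iff' (measurableSet_Ioi.prod MeasurableSet.univ)).2 (Eventually.of_forall fun p hp => hp.1)
  filter_upwards [hpos] with p hp
  rw [smul_eq_mul, mul_one, Real.norm_of_nonneg]
  have := gG_pos p.2
  have := cG_pos (N := N)
  unfold rW; positivity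

end PartD2

section PartD3

open scoped Topology
variable {N : ℕ}

lemma Res_cont {l : ℝ} (hl : 0 < l) {g : Eu N → ℝ} (hg : Continuous g) {B : ℝ} (hB : ∀ x, |g x| ≤ B) :
    Continuous (Res l g) := avg_cont (rW_int hl) rτ_cont hg hB

lemma Res_bound {l : ℝ} (hl : 0 < l) {g : Eu N → ℝ} {B : ℝ} (hB : ∀ x, |g x| ≤ B) (x : Eu N) :
    |Res l g x| ≤ B / l := by
  have := avg_bound (rW_int (N := N) hl) (τ := fun p => p.1 • p.2) (h := g) hB x
  rw [rW_norm hl] at this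
  calc _ ≤ _ := this
    _ = _ := by ring

lemma Res_sub {l : ℝ} (hl : 0 < l) {g h : Eu N → ℝ} (hg : Continuous g) (hh : Continuous h) {B : ℝ}
    (hB : ∀ x, |g x| ≤ B) (hB' : ∀ x, |h x| ≤ B) (x : Eu N) :
    Res l g x - Res l h x = Res l (fun y => g y - h y) x := by
  unfold Res
  rw [← integral_sub (avg_int (rW_int hl) rτ_cont hg hB x) (avg_int (rW_int hl) rτ_cont hh hB' x)]
  simp only [smul_eq_mul, mul_sub]

lemma Res_ID_smooth {l : ℝ} (hl : 0 < l) {g : Eu N → ℝ} (hg : ContDiff ℝ 2 g) {B0 B1 B2 : ℝ}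
    (h0 : ∀ x, |g x| ≤ B0) (h1 : ∀ x, ‖fderiv ℝ g x‖ ≤ B1)
    (h2 : ∀ x, ‖fderiv ℝ (fderiv ℝ g) x‖ ≤ B2) (x : Eu N) (r : ℝ) :
    IDat (Res l g) (fun y => g y - l * Res l g y) x r := by
  have h3 : ∀ x, |laplacian g x| ≤ N * B2 := by
    intro x
    rw [laplacian_eq_fderiv]
    refine (Finset.abs_sum_le_sum_abs _ _).trans ?_
    have : ∀ i ∈ (Finset.univ : Finset (Fin N)), |fderiv ℝ (fderiv ℝ g) x (EuclideanSpace.single i 1)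
        (EuclideanSpace.single i 1)| ≤ B2 := by
      intro i _
      have a1 := ContinuousLinearMap.le_opNorm (fderiv ℝ (fderiv ℝ g) x (EuclideanSpace.single i 1))
        (EuclideanSpace.single i 1)
      have a2 := ContinuousLinearMap.le_opNorm (fderiv ℝ (fderiv ℝ g) x) (EuclideanSpace.single i 1)
      simp only [EuclideanSpace.norm_single, norm_one, mul_one] at a1 a2
      exact a1.trans (a2.trans (h2 x))
    refine (Finset.sum_le_card_nsmul _ _ _ this).trans ?_
    simp
  obtain ⟨c1, c2, c3, c4⟩ := avg_contDiff (rW_int (N := N) hl) rτ_cont hg h0 h1 h2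
  have hlap : ∀ x, laplacian (Res l g) x = l * Res l g x - g x := fun x =>
    (c4 x).trans (Res_lap hl hg h0 h1 h2 h3 x)
  have b3 : ∀ x, |laplacian (Res l g) x| ≤ l * (B0 / l) + B0 := by
    intro x
    rw [hlap]
    refine (abs_sub _ _).trans (add_le_add ?_ (h0 x))
    rw [abs_mul, abs_of_pos hl]
    exact mul_le_mul_of_nonneg_left (Res_bound hl h0 x) hl.le
  have := mean_formula c1 (Res_bound hl h0) c2 c3 b3 x r
  change ∫ t in (0:ℝ)..r, t * ∫ z, laplacian (Res l g) (x - t • z) * zt z =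
      (∫ z, (Res l g) (x - r • z) * et z) - (∫ z : Eu N, et z) * (Res l g) x at this
  have e : ∫ s in (0:ℝ)..r, s * ∫ z, (g (x - s • z) - l * Res l g (x - s • z)) * zt z =
      - ∫ t in (0:ℝ)..r, t * ∫ z, laplacian (Res l g) (x - t • z) * zt z := by
    rw [← intervalIntegral.integral_neg]
    refine intervalIntegral.integral_congr fun t _ => ?_
    rw [← mul_neg, ← integral_neg]
    congr 1
    refine integral_congr_ae (Eventually.of_forall fun z => ?_)
    simp only [hlap]; ring
  rw [IDat, e, this]
  ring

lemma Jk_smul_bound {F : Type*} [NormedAddCommGroup F] [NormedSpace ℝ F] [CompleteSpace F]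
    {g : Eu N → ℝ} {B : ℝ} (hB : ∀ x, |g x| ≤ B) {k : Eu N → F} (hk : ContDiff ℝ 1 k)
    (hc : HasCompactSupport k) {a e : ℝ} (ha : 0 < a) (he : 0 < e) (y : Eu N) :
    ‖a⁻¹ • e⁻¹ • e⁻¹ • Jk g (fderiv ℝ k) e y‖ ≤ a⁻¹ * (e⁻¹ * (e⁻¹ * (B * ∫ z, ‖fderiv ℝ k z‖))) := by
  have i2 : Integrable (fderiv ℝ k) :=
    (hk.continuous_fderiv one_ne_zero).integrable_of_hasCompactSupport (hc.fderiv ℝ)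
  simp only [norm_smul, norm_inv, Real.norm_of_nonneg ha.le, Real.norm_of_nonneg he.le]
  gcongr
  exact Jk_bound hB i2 _ _

lemma Res_ID {l : ℝ} (hl : 0 < l) {g : Eu N → ℝ} (hg : Continuous g) {B : ℝ} (hB : ∀ x, |g x| ≤ B)
    (x : Eu N) {r : ℝ} (hr : 0 < r) :
    IDat (Res l g) (fun y => g y - l * Res l g y) x r := by
  have hB0 : 0 ≤ B := (abs_nonneg _).trans (hB 0)
  set a := ∫ z : Eu N, zt z with ha
  have hapos : 0 < a := zt_integral_pos
  set D := ∫ z : Eu N, ‖zt z‖ with hD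
  have hDa : D = a := by
    refine integral_congr_ae (Eventually.of_forall fun z => ?_)
    simp only []; rw [Real.norm_of_nonneg (zt_nonneg z)]
  set ε : ℕ → ℝ := fun k => 1 / ((k : ℝ) + 1) with hε
  have hεp : ∀ k, 0 < ε k := fun k => by simp only [hε]; positivity
  set gk : ℕ → Eu N → ℝ := fun k x => a⁻¹ • Jk g zt (ε k) x with hgk
  have hgB : ∀ k x, |gk k x| ≤ B := by
    intro k x
    have := Jk_bound hB (zt_int (N := N)) (ε k) x
    rw [← hD, hDa] at this
    simp only [hgk]
    rw [smul_eq_mul, abs_mul, abs_inv, abs_of_pos hapos]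
    calc _ ≤ a⁻¹ * (B * a) := mul_le_mul_of_nonneg_left this (by positivity)
      _ = B := by field_simp
  have hz1 : ContDiff ℝ 1 (zt : Eu N → ℝ) := zt_contDiff.of_le (by norm_num)
  have hz2 : ContDiff ℝ 1 (fderiv ℝ (zt : Eu N → ℝ)) := zt_contDiff.fderiv_right (by norm_num)
  have c0 : ∀ k, ContDiff ℝ 2 (gk k) := fun k =>
    (Jk_contDiff hg.measurable hB zt_contDiff zt_hcs (hεp k)).const_smul a⁻¹
  have d1 : ∀ k x, HasFDerivAt (gk k) (a⁻¹ • (ε k)⁻¹ • Jk g (fderiv ℝ zt) (ε k) x) x := fun k x =>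
    (Jk_hasFDerivAt hg.measurable hB hz1 zt_hcs (hεp k) x).const_smul a⁻¹
  have d2 : ∀ k x, HasFDerivAt (fun x => a⁻¹ • (ε k)⁻¹ • Jk g (fderiv ℝ zt) (ε k) x)
      (a⁻¹ • (ε k)⁻¹ • (ε k)⁻¹ • Jk g (fderiv ℝ (fderiv ℝ zt)) (ε k) x) x := fun k x =>
    ((Jk_hasFDerivAt hg.measurable hB hz2 (zt_hcs.fderiv ℝ) (hεp k) x).const_smul (ε k)⁻¹).const_smul a⁻¹
  have e1 : ∀ k, fderiv ℝ (gk k) = fun x => a⁻¹ • (ε k)⁻¹ • Jk g (fderiv ℝ zt) (ε k) x :=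
    fun k => funext fun x => (d1 k x).fderiv
  have i1 : Integrable (fderiv ℝ (zt : Eu N → ℝ)) :=
    hz2.continuous.integrable_of_hasCompactSupport (zt_hcs.fderiv ℝ)
  have hID : ∀ k, IDat (Res l (gk k)) (fun y => gk k y - l * Res l (gk k) y) x r := by
    intro k
    refine Res_ID_smooth hl (c0 k) (hgB k)
      (B1 := a⁻¹ * ((ε k)⁻¹ * (B * ∫ z, ‖fderiv ℝ (zt : Eu N → ℝ) z‖)))
      (B2 := a⁻¹ * ((ε k)⁻¹ * ((ε k)⁻¹ * (B * ∫ z, ‖fderiv ℝ (fderiv ℝ (zt : Eu N → ℝ)) z‖)))) ?_ ?_ x r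
    · intro y
      rw [e1]
      simp only [norm_smul, norm_inv, Real.norm_of_nonneg hapos.le, Real.norm_of_nonneg (hεp k).le]
      have := hεp k
      gcongr
      exact Jk_bound hB i1 _ _
    · intro y
      rw [e1, (d2 k y).fderiv]
      exact Jk_smul_bound hB hz2 (zt_hcs.fderiv ℝ) hapos (hεp k) y
  have lim : ∀ y, Tendsto (fun k => gk k y) atTop (𝓝 (g y)) := by
    intro y
    have hc := (Jk_cont_s hg hB zt_int y).tendsto 0
    have ht : Tendsto ε atTop (𝓝 0) := tendsto_one_div_add_atTop_nhds_zero_nat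
    have := (hc.comp ht).const_mul a⁻¹
    simp only [zero_smul, sub_zero] at this
    rw [integral_const_mul, ← ha] at this
    have e : a⁻¹ * (g y * a) = g y := by field_simp
    rw [e] at this
    exact this
  have limR : ∀ y, Tendsto (fun k => Res l (gk k) y) atTop (𝓝 (Res l g y)) := by
    intro y
    refine tendsto_integral_of_dominated_convergence (fun p => ‖rW N l p‖ * B) ?_
      ((rW_int hl).norm.mul_const _) ?_ ?_
    · exact fun k => (avg_int (rW_int hl) rτ_cont (c0 k).continuous (hgB k) y).aestronglyMeasurable
    · refine fun k => Eventually.of_forall fun p => ?_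
      rw [norm_smul]; exact mul_le_mul_of_nonneg_left (hgB k _) (norm_nonneg _)
    · exact Eventually.of_forall fun p => (lim _).const_smul _
  have mR : ∀ k, Measurable (Res l (gk k)) := fun k => (Res_cont hl (c0 k).continuous (hgB k)).measurable
  refine IDat_limit (M := B / l + 2 * B) mR
    (fun k => (c0 k).continuous.measurable.sub ((mR k).const_mul l)) hr
    (Eventually.of_forall fun k y _ => ?_) (Eventually.of_forall fun k y _ => ?_) (fun y _ => limR y)
    (fun y _ => (lim y).sub ((limR y).const_mul l)) (Eventually.of_forall hID)
  · exact (Res_bound hl (hgB k) y).trans (by linarith)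
  · refine (abs_sub _ _).trans ?_
    rw [abs_mul, abs_of_pos hl]
    have h1 := hgB k y
    have h2 := mul_le_mul_of_nonneg_left (Res_bound hl (hgB k) y) hl.le
    have h3 : l * (B / l) = B := by field_simp
    have : 0 ≤ B / l := by positivity
    linarith

theorem pen_exists {H : Eu N → ℝ → ℝ} (hH : Continuous (fun p : Eu N × ℝ => H p.1 p.2)) {B l κ : ℝ}
    (hB : ∀ x, |H x 0| ≤ B) (hκ : 0 < κ) (hκl : κ < l)
    (h1 : ∀ x s t, s ≤ t → -l * (t - s) ≤ H x t - H x s)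
    (h2 : ∀ x s t, s ≤ t → H x t - H x s ≤ -κ * (t - s)) :
    ∃ w : Eu N → ℝ, Continuous w ∧ (∃ B', ∀ x, |w x| ≤ B') ∧ HasID univ w (fun x => H x (w x)) := by
  have hl : 0 < l := hκ.trans hκl
  have hG : ∀ x s t, |(l * s + H x s) - (l * t + H x t)| ≤ (l - κ) * |s - t| := by
    intro x s t
    rcases le_total s t with h | h
    · have := h1 x s t h; have := h2 x s t h
      rw [abs_of_nonpos (sub_nonpos.2 h), abs_le]
      constructor <;> nlinarith
    · have := h1 x t s h; have := h2 x t s h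
      rw [abs_of_nonneg (sub_nonneg.2 h), abs_le]
      constructor <;> nlinarith
  let G : (BoundedContinuousFunction (Eu N) ℝ) → Eu N → ℝ := fun w x => l * w x + H x (w x)
  have Gc : ∀ w, Continuous (G w) := fun w =>
    (continuous_const.mul w.continuous).add (hH.comp (continuous_id.prodMk w.continuous))
  have Gb : ∀ w : BoundedContinuousFunction (Eu N) ℝ, ∀ x, |G w x| ≤ (l - κ) * ‖w‖ + B := by
    intro w x
    have a1 := hG x (w x) 0
    rw [mul_zero, zero_add, sub_zero] at a1
    have a2 : |w x| ≤ ‖w‖ := w.norm_coe_le_norm x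
    have a3 : (l - κ) * |w x| ≤ (l - κ) * ‖w‖ := mul_le_mul_of_nonneg_left a2 (by linarith)
    have e : G w x = ((l * w x + H x (w x)) - H x 0) + H x 0 := by simp only [G]; ring
    rw [e]
    refine (abs_add_le _ _).trans ?_
    linarith [hB x]
  let T : (BoundedContinuousFunction (Eu N) ℝ) → (BoundedContinuousFunction (Eu N) ℝ) := fun w =>
    BoundedContinuousFunction.ofNormedAddCommGroup (Res l (G w)) (Res_cont hl (Gc w) (Gb w)) _
      (Res_bound hl (Gb w))
  have hT : ContractingWith (Real.toNNReal ((l - κ) / l)) T := by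
    have hq : 0 ≤ (l - κ) / l := div_nonneg (by linarith) hl.le
    refine ⟨?_, LipschitzWith.of_dist_le_mul fun u v => ?_⟩
    · rw [← NNReal.coe_lt_coe, Real.coe_toNNReal _ hq, NNReal.coe_one, div_lt_one hl]
      linarith
    · rw [Real.coe_toNNReal _ hq, BoundedContinuousFunction.dist_le (by positivity)]
      intro x
      rw [Real.dist_eq]
      change |Res l (G u) x - Res l (G v) x| ≤ _
      set Bm := max ((l - κ) * ‖u‖ + B) ((l - κ) * ‖v‖ + B)
      rw [Res_sub hl (Gc u) (Gc v) (B := Bm) (fun x => (Gb u x).trans (le_max_left _ _))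
        (fun x => (Gb v x).trans (le_max_right _ _))]
      have : ∀ x, |G u x - G v x| ≤ (l - κ) * dist u v := by
        intro x
        refine (hG x (u x) (v x)).trans (mul_le_mul_of_nonneg_left ?_ (by linarith))
        rw [← Real.dist_eq]
        exact BoundedContinuousFunction.dist_coe_le_dist x
      refine (Res_bound hl this x).trans (le_of_eq ?_)
      ring
  set w := ContractingWith.fixedPoint T hT
  have hw : T w = w := hT.fixedPoint_isFixedPt
  have hw' : ∀ x, Res l (G w) x = w x := fun x => by
    have := congrArg (fun u : BoundedContinuousFunction (Eu N) ℝ => u x) hw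
    exact this
  refine ⟨w, w.continuous, ⟨‖w‖, fun x => w.norm_coe_le_norm x⟩, ?_⟩
  intro x r hr _
  have := Res_ID hl (Gc w) (Gb w) x hr
  have e : Res l (G w) = w := funext hw'
  rw [e] at this
  have e2 : (fun y => G w y - l * w y) = fun x => H x (w x) := by
    funext y; simp only [G]; ring
  rw [e2] at this
  exact this

end PartD3

section PartD4

open scoped Topology
variable {N : ℕ}

def LocHol (γ : ℝ) (g : Eu N → ℝ) (U : Set (Eu N)) : Prop :=
  ∀ x0 ∈ U, ∃ C : ℝ, 0 ≤ C ∧ ∃ t ∈ 𝓝 x0, ∀ x ∈ t, ∀ y ∈ t, |g x - g y| ≤ C * ‖x - y‖ ^ γ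

def LocLip (g : Eu N → ℝ) (U : Set (Eu N)) : Prop :=
  ∀ x0 ∈ U, ∃ C : NNReal, ∃ t ∈ 𝓝 x0, LipschitzOnWith C g t

def LocBdd (g : Eu N → ℝ) (U : Set (Eu N)) : Prop :=
  ∀ x0 ∈ U, ∃ M : ℝ, ∀ᶠ x in 𝓝 x0, |g x| ≤ M

lemma LocLip.cont {g : Eu N → ℝ} {U : Set (Eu N)} (h : LocLip g U) : ∀ x ∈ U, ContinuousAt g x := by
  intro x hx
  obtain ⟨C, t, ht, hL⟩ := h x hx
  exact hL.continuousOn.continuousAt ht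

lemma LocBdd.of_cont {g : Eu N → ℝ} {U : Set (Eu N)} (h : ∀ x ∈ U, ContinuousAt g x) : LocBdd g U := by
  intro x hx
  refine ⟨|g x| + 1, ?_⟩
  have := (h x hx).abs
  exact (this.eventually (eventually_lt_nhds (by linarith : |g x| < |g x| + 1))).mono fun y hy => le_of_lt hy

lemma LocHol.of_lip {γ : ℝ} (hγ1 : γ ≤ 1) {g : Eu N → ℝ} {U : Set (Eu N)} (h : LocLip g U) :
    LocHol γ g U := by
  intro x hx
  obtain ⟨C, t, ht, hL⟩ := h x hx
  refine ⟨C, C.2, t ∩ ball x (1/2), Filter.inter_mem ht (ball_mem_nhds _ (by norm_num)), ?_⟩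
  intro a ha b hb
  have h1 := hL.dist_le_mul a ha.1 b hb.1
  rw [Real.dist_eq, dist_eq_norm] at h1
  refine h1.trans (mul_le_mul_of_nonneg_left ?_ C.2)
  have h2 : ‖a - b‖ ≤ 1 := by
    rw [← dist_eq_norm]
    have := dist_triangle_right a b x
    have := mem_ball.1 ha.2; have := mem_ball.1 hb.2
    linarith
  rcases (norm_nonneg (a - b)).eq_or_lt with h0 | h0
  · rw [← h0]; positivity
  · calc ‖a - b‖ = ‖a - b‖ ^ (1:ℝ) := (Real.rpow_one _).symm
      _ ≤ _ := Real.rpow_le_rpow_of_exponent_ge h0 h2 hγ1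

lemma LocHol.sub {γ : ℝ} {g h : Eu N → ℝ} {U : Set (Eu N)} (hg : LocHol γ g U) (hh : LocHol γ h U) :
    LocHol γ (fun x => g x - h x) U := by
  intro x hx
  obtain ⟨C, hC, t, ht, hL⟩ := hg x hx
  obtain ⟨C', hC', t', ht', hL'⟩ := hh x hx
  refine ⟨C + C', by positivity, t ∩ t', Filter.inter_mem ht ht', fun a ha b hb => ?_⟩
  have e : g a - h a - (g b - h b) = (g a - g b) - (h a - h b) := by ring
  rw [e, add_mul]
  exact (abs_sub _ _).trans (add_le_add (hL a ha.1 b hb.1) (hL' a ha.2 b hb.2))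

lemma LocHol.mul {γ : ℝ} {g h : Eu N → ℝ} {U : Set (Eu N)} (hg : LocHol γ g U) (hh : LocHol γ h U)
    (bg : LocBdd g U) (bh : LocBdd h U) :
    LocHol γ (fun x => g x * h x) U := by
  intro x hx
  obtain ⟨C, hC, t, ht, hL⟩ := hg x hx
  obtain ⟨C', hC', t', ht', hL'⟩ := hh x hx
  obtain ⟨M, hM⟩ := bg x hx
  obtain ⟨M', hM'⟩ := bh x hx
  have hM0 : 0 ≤ M := (abs_nonneg _).trans hM.self_of_nhds
  have hM0' : 0 ≤ M' := (abs_nonneg _).trans hM'.self_of_nhds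
  refine ⟨M * C' + M' * C, by positivity, (t ∩ t') ∩ ({x | |g x| ≤ M} ∩ {x | |h x| ≤ M'}),
    Filter.inter_mem (Filter.inter_mem ht ht') (Filter.inter_mem hM hM'), ?_⟩
  rintro a ⟨⟨ha1, ha2⟩, ha3, ha4⟩ b ⟨⟨hb1, hb2⟩, hb3, hb4⟩
  have e : g a * h a - g b * h b = g a * (h a - h b) + h b * (g a - g b) := by ring
  rw [e]
  refine (abs_add_le _ _).trans ?_
  rw [abs_mul, abs_mul]
  have := mul_le_mul ha3 (hL' a ha2 b hb2) (abs_nonneg _) hM0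
  have := mul_le_mul hb4 (hL a ha1 b hb1) (abs_nonneg _) hM0'
  nlinarith

lemma LocLip.comp {F : ℝ → ℝ} {g : Eu N → ℝ} {U : Set (Eu N)} (hg : LocLip g U)
    (hF : ∀ x ∈ U, ∃ K : NNReal, ∃ t ∈ 𝓝 (g x), LipschitzOnWith K F t) : LocLip (fun x => F (g x)) U := by
  intro x hx
  obtain ⟨C, t, ht, hL⟩ := hg x hx
  obtain ⟨K, s, hs, hK⟩ := hF x hx
  refine ⟨K * C, t ∩ g ⁻¹' s, Filter.inter_mem ht (hg.cont x hx hs), ?_⟩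
  exact hK.comp (hL.mono inter_subset_left) fun y hy => hy.2

lemma LocHol.comp_holder {γ : NNReal} {φ : ℝ → ℝ}
    (hφ : ∀ s : Set ℝ, IsCompact s → s ⊆ Ioi (0:ℝ) → ∃ C : NNReal, HolderOnWith C γ φ s)
    {g : Eu N → ℝ} {U : Set (Eu N)} (hg : LipschitzWith 1 g) (hp : ∀ x ∈ U, 0 < g x) :
    LocHol (γ : ℝ) (fun x => φ (g x)) U := by
  intro x hx
  have h0 := hp x hx
  obtain ⟨C, hC⟩ := hφ (Icc (g x / 2) (2 * g x)) isCompact_Icc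
    (fun y hy => lt_of_lt_of_le (by positivity) hy.1)
  refine ⟨C, C.2, g ⁻¹' (Icc (g x / 2) (2 * g x)),
    hg.continuous.continuousAt (Icc_mem_nhds (by linarith) (by linarith)), fun a ha b hb => ?_⟩
  have h1 := hC.dist_le ha hb
  rw [Real.dist_eq] at h1
  refine h1.trans (mul_le_mul_of_nonneg_left ?_ C.2)
  refine Real.rpow_le_rpow dist_nonneg ?_ γ.2
  have := hg.dist_le_mul a b
  rw [← dist_eq_norm]
  simpa using this

lemma LocHol.cont {γ : ℝ} (hγ : 0 < γ) {g : Eu N → ℝ} {U : Set (Eu N)} (h : LocHol γ g U) :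
    ∀ x ∈ U, ContinuousAt g x := by
  intro x hx
  obtain ⟨C, hC, t, ht, hL⟩ := h x hx
  rw [ContinuousAt, tendsto_iff_dist_tendsto_zero]
  have hc : Continuous (fun y : Eu N => C * ‖y - x‖ ^ γ) := by
    refine continuous_const.mul (Continuous.rpow_const (by fun_prop) fun _ => Or.inr hγ.le)
  have := hc.tendsto x
  rw [sub_self, norm_zero, Real.zero_rpow hγ.ne', mul_zero] at this
  refine squeeze_zero' (Eventually.of_forall fun _ => dist_nonneg) ?_ this
  filter_upwards [ht] with y hy
  exact hL y hy x (mem_of_mem_nhds ht)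

lemma reg1 (hN : 0 < N) {U : Set (Eu N)} (hU : IsOpen U) {w g : Eu N → ℝ} (h : HasID U w g)
    (hw : Measurable w) (hg : Measurable g) (bw : LocBdd w U) (bg : LocBdd g U) : LocLip w U := by
  intro x hx
  obtain ⟨M, hM⟩ := bw x hx
  obtain ⟨M', hM'⟩ := bg x hx
  obtain ⟨e, he, hb⟩ := Metric.eventually_nhds_iff_ball.1 ((hM.and hM').and (hU.mem_nhds hx))
  obtain ⟨C, hC⟩ := ID_lipschitz (M := max M M') hN h hw hg (x0 := x) (r := e / 4) (by linarith)
    (fun y hy => (hb y (mem_ball.2 (by have := mem_closedBall.1 hy; linarith))).2)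
    (fun y hy => (hb y (mem_ball.2 (by have := mem_ball.1 hy; linarith))).1.1.trans (le_max_left _ _))
    (fun y hy => (hb y (mem_ball.2 (by have := mem_ball.1 hy; linarith))).1.2.trans (le_max_right _ _))
  exact ⟨C, _, ball_mem_nhds _ (by linarith), hC⟩

lemma reg2 (hN : 0 < N) {U : Set (Eu N)} (hU : IsOpen U) {w g : Eu N → ℝ} (h : HasID U w g)
    (hw : Measurable w) (hg : Measurable g) (bw : LocBdd w U) {γ : ℝ} (hγ : 0 < γ) (hγ1 : γ ≤ 1)
    (hH : LocHol γ g U) : ∀ x ∈ U, ContDiffAt ℝ 2 w x ∧ laplacian w x = - g x := by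
  intro x hx
  have bg : LocBdd g U := LocBdd.of_cont (hH.cont hγ)
  obtain ⟨M, hM⟩ := bw x hx
  obtain ⟨M', hM'⟩ := bg x hx
  obtain ⟨C, hC, t, ht, hL⟩ := hH x hx
  obtain ⟨e, he, hb⟩ := Metric.eventually_nhds_iff_ball.1 (((hM.and hM').and (hU.mem_nhds hx)).and ht)
  have hcd := ID_contDiffOn (M := max M M') hN h hw hg (x0 := x) (r := e / 4) (by linarith) hγ hγ1 hC
    (fun y hy => (hb y (mem_ball.2 (by have := mem_closedBall.1 hy; linarith))).1.2)
    (fun y hy => (hb y (mem_ball.2 (by have := mem_ball.1 hy; linarith))).1.1.1.trans (le_max_left _ _))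
    (fun y hy => (hb y (mem_ball.2 (by have := mem_ball.1 hy; linarith))).1.1.2.trans (le_max_right _ _))
    (fun y hy z hz => hL y (hb y (mem_ball.2 (by have := mem_ball.1 hy; linarith))).2 z
      (hb z (mem_ball.2 (by have := mem_ball.1 hz; linarith))).2)
  refine ⟨hcd.contDiffAt (ball_mem_nhds _ (by linarith)), ?_⟩
  refine ID_equation hN h (r := e / 4) (by linarith)
    (fun y hy => (hb y (mem_ball.2 (by have := mem_closedBall.1 hy; linarith))).1.2) hcd ?_
  intro y hy
  exact (hH.cont hγ y (hb y (mem_ball.2 (by have := mem_ball.1 hy; linarith))).1.2).continuousWithinAt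

end PartD4

section PartD5

open scoped Topology
variable {N : ℕ}

structure Dat (φ ft : ℝ → ℝ) (δ : Eu N → ℝ) (γ : NNReal) : Prop where
  φpos : ∀ r : ℝ, 0 < r → 0 < φ r
  φanti : AntitoneOn φ (Ioi (0:ℝ))
  φhold : ∀ s : Set ℝ, IsCompact s → s ⊆ Ioi (0:ℝ) → ∃ C : NNReal, HolderOnWith C γ φ s
  ftpos : ∀ t : ℝ, 0 < t → 0 < ft t
  ftanti : AntitoneOn ft (Ioi (0:ℝ))
  ftlip : ∀ a : ℝ, 0 < a → ∃ L : NNReal, LipschitzOnWith L ft (Ici a)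
  δlip : LipschitzWith 1 δ
  δnn : ∀ x, 0 ≤ δ x
  γ0 : 0 < γ
  γ1 : γ < 1

noncomputable def Hpen (φ ft : ℝ → ℝ) (δ : Eu N → ℝ) (e m : ℝ) (x : Eu N) (t : ℝ) : ℝ :=
  φ (max (δ x) e) * ft (max t 0 + e) - (e + m * max (e - δ x) 0) * t

structure Pen (φ ft : ℝ → ℝ) (δ : Eu N → ℝ) (e m : ℝ) (w : Eu N → ℝ) : Prop where
  cont : Continuous w
  bdd : ∃ B, ∀ x, |w x| ≤ B
  lap : ∀ x, LapAt w x (-(Hpen φ ft δ e m x (w x)))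
  hid : HasID univ w (fun x => Hpen φ ft δ e m x (w x))

section
variable {φ ft : ℝ → ℝ} {δ : Eu N → ℝ} {γ : NNReal}

lemma Dat.φcont (D : Dat φ ft δ γ) : ContinuousOn φ (Ioi 0) := by
  intro x hx
  have hx : 0 < x := hx
  obtain ⟨C, hC⟩ := D.φhold (Icc (x / 2) (2 * x)) isCompact_Icc
    (fun y hy => lt_of_lt_of_le (by positivity) hy.1)
  exact ((hC.continuousOn D.γ0).continuousAt (Icc_mem_nhds (by linarith) (by linarith))).continuousWithinAt

lemma Dat.ftcont (D : Dat φ ft δ γ) {t : ℝ} (ht : 0 < t) : ContinuousAt ft t := by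
  obtain ⟨C, hC⟩ := D.ftlip (t / 2) (by linarith)
  exact hC.continuousOn.continuousAt (Ici_mem_nhds (by linarith))

lemma Dat.δmax_lip (D : Dat φ ft δ γ) (e : ℝ) : LipschitzWith 1 (fun x => max (δ x) e) :=
  D.δlip.max_const e

lemma Dat.Hcont (D : Dat φ ft δ γ) {e m : ℝ} (he : 0 < e) :
    Continuous (fun p : Eu N × ℝ => Hpen φ ft δ e m p.1 p.2) := by
  have hδ := D.δlip.continuous
  have h1 : Continuous (fun p : Eu N × ℝ => φ (max (δ p.1) e)) :=
    D.φcont.comp_continuous (by fun_prop) (fun p => lt_of_lt_of_le he (le_max_right _ _))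
  have h2 : Continuous (fun p : Eu N × ℝ => ft (max p.2 0 + e)) := by
    refine continuous_iff_continuousAt.2 fun p => ?_
    have : ContinuousAt ft (max p.2 0 + e) := D.ftcont (by have := le_max_right p.2 0; linarith)
    exact this.comp (f := fun p : Eu N × ℝ => max p.2 0 + e) (by fun_prop : Continuous fun p : Eu N × ℝ => max p.2 0 + e).continuousAt
  have h3 : Continuous (fun p : Eu N × ℝ => (e + m * max (e - δ p.1) 0) * p.2) := by fun_prop
  exact (h1.mul h2).sub h3

lemma pen_sol (hN : 0 < N) (D : Dat φ ft δ γ) {e m : ℝ} (he : 0 < e) (hm : 0 ≤ m) :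
    ∃ w, Pen φ ft δ e m w := by
  obtain ⟨L, hL⟩ := D.ftlip e he
  have hφe := D.φpos e he
  have hφ : ∀ x, 0 < φ (max (δ x) e) ∧ φ (max (δ x) e) ≤ φ e := fun x =>
    have : 0 < max (δ x) e := lt_of_lt_of_le he (le_max_right _ _)
    ⟨D.φpos _ this, D.φanti he this (le_max_right _ _)⟩
  have hb : ∀ x, 0 ≤ max (e - δ x) 0 ∧ max (e - δ x) 0 ≤ e := fun x =>
    ⟨le_max_right _ _, max_le (by linarith [D.δnn x]) he.le⟩
  have hH0 : ∀ x, |Hpen φ ft δ e m x 0| ≤ φ e * ft e := by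
    intro x
    simp only [Hpen, max_self, zero_add, mul_zero, sub_zero]
    have := D.ftpos e he
    rw [abs_of_pos (mul_pos (hφ x).1 this)]
    exact mul_le_mul_of_nonneg_right (hφ x).2 this.le
  obtain ⟨w, wc, ⟨B, wb⟩, wid⟩ := pen_exists (D.Hcont (m := m) he) hH0 he
    (l := φ e * L + e + m * e + 1) (by have : 0 ≤ φ e * L := mul_nonneg hφe.le L.2
                                       nlinarith [mul_nonneg hm he.le])
    (by
      intro x s t hst
      have a1 := hL.dist_le_mul (max t 0 + e) (by simp) (max s 0 + e) (by simp)
      rw [Real.dist_eq, Real.dist_eq] at a1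
      have a2 : |max t 0 + e - (max s 0 + e)| ≤ t - s := by
        have := abs_max_sub_max_le_abs t s 0
        rw [abs_of_nonneg (sub_nonneg.2 hst)] at this
        calc _ = |max t 0 - max s 0| := by congr 1; ring
          _ ≤ _ := this
      have a3 : -(L * (t - s)) ≤ ft (max t 0 + e) - ft (max s 0 + e) :=
        (abs_le.1 (a1.trans (mul_le_mul_of_nonneg_left a2 L.2))).1
      have a4 : φ (max (δ x) e) * (L * (t - s)) ≤ φ e * (L * (t - s)) :=
        mul_le_mul_of_nonneg_right (hφ x).2 (mul_nonneg L.2 (by linarith))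
      have a5 := mul_le_mul_of_nonneg_left a3 (hφ x).1.le
      have a6 : m * max (e - δ x) 0 * (t - s) ≤ m * e * (t - s) :=
        mul_le_mul_of_nonneg_right (mul_le_mul_of_nonneg_left (hb x).2 hm) (by linarith)
      unfold Hpen
      nlinarith)
    (by
      intro x s t hst
      have a1 : ft (max t 0 + e) ≤ ft (max s 0 + e) := by
        refine D.ftanti ?_ ?_ ?_
        · have := le_max_right s 0; exact mem_Ioi.2 (by linarith)
        · have := le_max_right t 0; exact mem_Ioi.2 (by linarith)
        · have := max_le_max_right 0 hst; linarith
      have a5 := mul_le_mul_of_nonneg_left a1 (hφ x).1.le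
      have a6 := mul_nonneg (mul_nonneg hm (hb x).1) (sub_nonneg.2 hst)
      unfold Hpen
      nlinarith)
  refine ⟨w, wc, ⟨B, wb⟩, ?_, wid⟩
  have hgc : Continuous (fun x => Hpen φ ft δ e m x (w x)) :=
    (D.Hcont he).comp (continuous_id.prodMk wc)
  have bw : LocBdd w univ := LocBdd.of_cont fun x _ => wc.continuousAt
  have wl : LocLip w univ := reg1 hN isOpen_univ wid wc.measurable hgc.measurable bw
    (LocBdd.of_cont fun x _ => hgc.continuousAt)
  have hγ1 : (γ : ℝ) ≤ 1 := by exact_mod_cast D.γ1.le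
  have l1 : LocLip (fun x => ft (max (w x) 0 + e)) univ := by
    refine wl.comp (F := fun t => ft (max t 0 + e)) fun x _ => ⟨L, univ, univ_mem, ?_⟩
    refine LipschitzOnWith.of_dist_le_mul fun s _ t _ => ?_
    have a1 := hL.dist_le_mul (max s 0 + e) (by simp) (max t 0 + e) (by simp)
    refine a1.trans (mul_le_mul_of_nonneg_left ?_ L.2)
    rw [Real.dist_eq, Real.dist_eq]
    calc _ = |max s 0 - max t 0| := by congr 1; ring
          _ ≤ _ := abs_max_sub_max_le_abs s t 0
  have l2 : LocHol (γ : ℝ) (fun x => φ (max (δ x) e)) univ :=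
    LocHol.comp_holder D.φhold (D.δmax_lip e) fun x _ => lt_of_lt_of_le he (le_max_right _ _)
  have l3 : LocLip (fun x => e + m * max (e - δ x) 0) univ := by
    intro x _
    refine ⟨m.toNNReal, univ, univ_mem, LipschitzOnWith.of_dist_le_mul fun s _ t _ => ?_⟩
    rw [Real.coe_toNNReal _ hm, Real.dist_eq]
    have : e + m * max (e - δ s) 0 - (e + m * max (e - δ t) 0) = m * (max (e - δ s) 0 - max (e - δ t) 0) := by ring
    rw [this, abs_mul, abs_of_nonneg hm]
    refine mul_le_mul_of_nonneg_left ((abs_max_sub_max_le_abs _ _ _).trans ?_) hm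
    have h := D.δlip.dist_le_mul s t
    rw [Real.dist_eq, NNReal.coe_one, one_mul] at h
    calc _ = |-(δ s - δ t)| := by congr 1; ring
      _ ≤ _ := by rwa [abs_neg]
  have hol : LocHol (γ : ℝ) (fun x => Hpen φ ft δ e m x (w x)) univ := by
    unfold Hpen
    have g0 : (0:ℝ) < γ := by exact_mod_cast D.γ0
    exact ((l2.mul (LocHol.of_lip hγ1 l1) (LocBdd.of_cont (l2.cont g0)) (LocBdd.of_cont l1.cont))).sub
      ((LocHol.of_lip hγ1 l3).mul (LocHol.of_lip hγ1 wl) (LocBdd.of_cont l3.cont) bw)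
  intro x
  obtain ⟨c1, c2⟩ := reg2 hN isOpen_univ wid wc.measurable hgc.measurable bw
    (by exact_mod_cast D.γ0) hγ1 hol x (mem_univ _)
  rw [← c2]
  exact LapAt.of_contDiffAt c1

lemma Pen.nonneg (D : Dat φ ft δ γ) {e m : ℝ} (he : 0 < e) (hm : 0 ≤ m) {w : Eu N → ℝ}
    (P : Pen φ ft δ e m w) (x : Eu N) : 0 ≤ w x := by
  obtain ⟨B, hB⟩ := P.bdd
  have := compare_whole (v := fun x => -1 * w x) (B := B) (continuous_const.mul P.cont) he
    (fun x => by have := (abs_le.1 (hB x)).1; linarith) (fun x hx => ⟨_, (P.lap x).const_mul (-1), ?_⟩) x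
  · linarith
  · simp only [Hpen]
    have hx : w x < 0 := by linarith
    rw [max_eq_right hx.le, zero_add]
    have h1 := mul_pos (D.φpos (max (δ x) e) (lt_of_lt_of_le he (le_max_right _ _))) (D.ftpos e he)
    have h2 : 0 ≤ m * max (e - δ x) 0 := mul_nonneg hm (le_max_right _ _)
    nlinarith

lemma Pen.mono (D : Dat φ ft δ γ) {e e' m m' : ℝ} (he : 0 < e') (hee : e' ≤ e) (hm : 0 ≤ m') (hmm : m' ≤ m)
    {w w' : Eu N → ℝ} (P : Pen φ ft δ e m w) (P' : Pen φ ft δ e' m' w') (x : Eu N) : w x ≤ w' x := by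
  obtain ⟨B, hB⟩ := P.bdd
  obtain ⟨B', hB'⟩ := P'.bdd
  have := compare_whole (v := fun x => w x - w' x) (B := B + B') (P.cont.sub P'.cont) he
    (fun x => by have := (abs_le.1 (hB x)).2; have := (abs_le.1 (hB' x)).1; linarith)
    (fun x hx => ⟨_, (P.lap x).sub (P'.lap x), ?_⟩) x
  · linarith
  · simp only [Hpen]
    have n1 := P.nonneg D (he.trans_le hee) (hm.trans hmm) x
    have n2 := P'.nonneg D he hm x
    rw [max_eq_left n1, max_eq_left n2]
    have p1 : 0 < max (δ x) e := lt_of_lt_of_le (he.trans_le hee) (le_max_right _ _)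
    have p2 : 0 < max (δ x) e' := lt_of_lt_of_le he (le_max_right _ _)
    have h1 : φ (max (δ x) e) ≤ φ (max (δ x) e') := D.φanti p2 p1 (max_le_max_left _ hee)
    have h2 : φ (max (δ x) e) * ft (w x + e) ≤ φ (max (δ x) e') * ft (w' x + e') := by
      refine mul_le_mul h1 (D.ftanti ?_ ?_ (by linarith)) (D.ftpos _ (by linarith)).le (D.φpos _ p2).le
      · exact mem_Ioi.2 (by linarith)
      · exact mem_Ioi.2 (by linarith)
    have h3 : m' * max (e' - δ x) 0 ≤ m * max (e - δ x) 0 :=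
      mul_le_mul hmm (max_le_max_right _ (by linarith)) (le_max_right _ _) (hm.trans hmm)
    have h4 : 0 ≤ m' * max (e' - δ x) 0 := mul_nonneg hm (le_max_right _ _)
    set b := m * max (e - δ x) 0
    set b' := m' * max (e' - δ x) 0
    have h5 : (e' + b') * w x ≤ (e + b) * w x := mul_le_mul_of_nonneg_right (by linarith) n1
    have h6 : 0 ≤ b' * (w x - w' x) := mul_nonneg h4 hx.le
    nlinarith

lemma Pen.le_const (D : Dat φ ft δ γ) {e m : ℝ} (he : 0 < e) (hm : 0 ≤ m) {w : Eu N → ℝ}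
    (P : Pen φ ft δ e m w) (x : Eu N) : w x ≤ φ e * ft e / e := by
  obtain ⟨B, hB⟩ := P.bdd
  set C := φ e * ft e / e with hC
  have hC0 : 0 ≤ C := div_nonneg (mul_nonneg (D.φpos e he).le (D.ftpos e he).le) he.le
  have hCe : C * e = φ e * ft e := by rw [hC]; field_simp
  have := compare_whole (v := fun x => w x - C) (B := B) (P.cont.sub continuous_const) he
    (fun x => by have := (abs_le.1 (hB x)).2; linarith)
    (fun x hx => ⟨_, (P.lap x).sub (LapAt.const C x), ?_⟩) x
  · linarith
  · simp only [Hpen]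
    have n1 := P.nonneg D he hm x
    rw [max_eq_left n1]
    have p1 : 0 < max (δ x) e := lt_of_lt_of_le he (le_max_right _ _)
    have h2 : φ (max (δ x) e) * ft (w x + e) ≤ φ e * ft e := by
      refine mul_le_mul (D.φanti he p1 (le_max_right _ _)) (D.ftanti he ?_ (by linarith))
        (D.ftpos _ (by linarith)).le (D.φpos _ he).le
      exact mem_Ioi.2 (by linarith)
    have h3 : 0 ≤ m * max (e - δ x) 0 * w x := mul_nonneg (mul_nonneg hm (le_max_right _ _)) n1
    nlinarith

lemma Pen.small (D : Dat φ ft δ γ) {e : ℝ} (he : 0 < e) : ∃ A : ℝ, 0 ≤ A ∧ ∀ m : ℝ, 0 < m → ∀ w : Eu N → ℝ,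
    Pen φ ft δ e m w → ∀ x, δ x ≤ e / 2 → w x ≤ A / m := by
  set C := φ e * ft e / e with hC
  have hC0 : 0 ≤ C := div_nonneg (mul_nonneg (D.φpos e he).le (D.ftpos e he).le) he.le
  set Q := C * (16 / e ^ 2) with hQ
  have hQ0 : 0 ≤ Q := by positivity
  have hfe := mul_nonneg (D.φpos e he).le (D.ftpos e he).le
  refine ⟨(φ e * ft e + Q * (2 * N)) * 4 / e, by positivity, ?_⟩
  intro m hm w P x0 hx0
  obtain ⟨B, hB⟩ := P.bdd
  set θ := (φ e * ft e + Q * (2 * N)) * 4 / e / m with hθ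
  have hθ0 : 0 ≤ θ := by positivity
  have hθm : m * (e / 4) * θ = φ e * ft e + Q * (2 * N) := by rw [hθ]; field_simp
  have := compare_whole (v := fun x => w x - Q * ‖x - x0‖ ^ 2 - θ) (B := B)
    (by have := P.cont; fun_prop) he
    (fun x => by have := (abs_le.1 (hB x)).2; have : 0 ≤ Q * ‖x - x0‖ ^ 2 := by positivity
                 linarith)
    (fun x hx => ⟨_, ((P.lap x).sub ((LapAt.norm_sq x0 x).const_mul Q)).sub (LapAt.const θ x), ?_⟩) x0
  · simp at this; linarith
  · simp only [Hpen]
    have n1 := P.nonneg D he hm.le x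
    rw [max_eq_left n1]
    have hwC := P.le_const D he hm.le x
    rw [← hC] at hwC
    have hd : ‖x - x0‖ ≤ e / 4 := by
      by_contra hlt
      push Not at hlt
      have h1 : (e / 4) ^ 2 ≤ ‖x - x0‖ ^ 2 := pow_le_pow_left₀ (by positivity) hlt.le 2
      have h2 := mul_le_mul_of_nonneg_left h1 hQ0
      have h3 : Q * (e / 4) ^ 2 = C := by rw [hQ]; field_simp; norm_num
      linarith
    have hδ : δ x ≤ 3 * e / 4 := by
      have h := D.δlip.dist_le_mul x x0
      rw [Real.dist_eq, NNReal.coe_one, one_mul, dist_eq_norm] at h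
      have := (abs_le.1 h).2
      linarith
    have hmx : e / 4 ≤ max (e - δ x) 0 := le_max_of_le_left (by linarith)
    have p1 : 0 < max (δ x) e := lt_of_lt_of_le he (le_max_right _ _)
    have h2 : φ (max (δ x) e) * ft (w x + e) ≤ φ e * ft e := by
      refine mul_le_mul (D.φanti he p1 (le_max_right _ _)) (D.ftanti he ?_ (by linarith))
        (D.ftpos _ (by linarith)).le (D.φpos _ he).le
      exact mem_Ioi.2 (by linarith)
    have hq : 0 ≤ Q * ‖x - x0‖ ^ 2 := by positivity
    have h3 : m * (e / 4) * θ ≤ m * max (e - δ x) 0 * w x :=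
      mul_le_mul (mul_le_mul_of_nonneg_left hmx hm.le) (by linarith) hθ0
        (mul_nonneg hm.le (le_max_right _ _))
    nlinarith

lemma Pen.barrier (D : Dat φ ft δ γ) {e m : ℝ} (he : 0 < e) (hm : 0 ≤ m) {w : Eu N → ℝ}
    (P : Pen φ ft δ e m w) {s τ : ℝ} (hs : 0 < s) (hτ : 0 ≤ τ) {S : Set (Eu N)} (hS : IsClosed S)
    {b : Eu N → ℝ} (hbc : ContinuousOn b S) (hb0 : ∀ x ∈ S, 0 ≤ b x)
    (h : ∀ x ∈ S, w x ≤ s + ft s * b x + τ ∨ (S ∈ 𝓝 x ∧ 0 < δ x ∧ ∃ L, LapAt b x L ∧ L ≤ - φ (δ x))) :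
    ∀ x ∈ S, w x ≤ s + ft s * b x + τ := by
  intro x1 hx1
  by_contra hlt
  push Not at hlt
  obtain ⟨B, hB⟩ := P.bdd
  have hfs := D.ftpos s hs
  have hB0 : 0 ≤ B := (abs_nonneg _).trans (hB x1)
  set v : Eu N → ℝ := fun x => w x - (ft s * b x + (s + τ)) with hv
  set σ := v x1 with hσ
  have hσ0 : 0 < σ := by simp only [hσ, hv]; linarith
  set ε := e * σ / (4 * (N + 1)) with hε
  have hε0 : 0 < ε := by positivity
  have hεN : ε * (2 * N) < e * σ := by
    have : ε * (4 * (N + 1)) = e * σ := by rw [hε]; field_simp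
    have : 0 ≤ ε * N := by positivity
    nlinarith
  set g : Eu N → ℝ := fun x => v x - ε * ‖x - x1‖ ^ 2 with hg
  have hvc : ContinuousOn v S := by
    simp only [hv]; exact P.cont.continuousOn.sub ((continuousOn_const.mul hbc).add continuousOn_const)
  have hgc : ContinuousOn g S := hvc.sub (by fun_prop)
  have hvB : ∀ x ∈ S, v x ≤ B := fun x hx => by
    have := (abs_le.1 (hB x)).2
    have := mul_nonneg hfs.le (hb0 x hx)
    simp only [hv]; linarith
  set R := B / ε + 1 with hR
  have hR1 : 1 ≤ R := by have : 0 ≤ B / ε := by positivity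
                         linarith
  have hK : IsCompact (S ∩ closedBall x1 R) := (isCompact_closedBall x1 R).inter_left hS
  obtain ⟨x0, hx0, hmax⟩ := hK.exists_isMaxOn ⟨x1, hx1, mem_closedBall_self (by linarith)⟩
    (hgc.mono inter_subset_left)
  have hg1 : g x1 = σ := by simp [hg, hσ]
  have hg0 : σ ≤ g x0 := hg1 ▸ hmax ⟨hx1, mem_closedBall_self (by linarith)⟩
  have hq0 : 0 ≤ ε * ‖x0 - x1‖ ^ 2 := by positivity
  have hv0 : σ ≤ v x0 := by simp only [hg] at hg0; linarith
  rcases h x0 hx0.1 with h1 | ⟨hn, hδ, L, hL, hLφ⟩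
  · simp only [hv] at hv0; linarith
  · have hloc : IsLocalMax g x0 := by
      filter_upwards [hn] with y hy
      by_cases hyR : y ∈ closedBall x1 R
      · exact hmax ⟨hy, hyR⟩
      · have h1 : R < ‖y - x1‖ := by
          rw [mem_closedBall, dist_eq_norm] at hyR; exact not_le.1 hyR
        have h2 : R ≤ ‖y - x1‖ ^ 2 := by nlinarith
        have h3 : ε * R ≤ ε * ‖y - x1‖ ^ 2 := mul_le_mul_of_nonneg_left h2 hε0.le
        have h4 : ε * R = B + ε := by rw [hR]; field_simp
        have := hvB y hy
        simp only [hg] at hg0 ⊢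
        linarith
    have hl := (((P.lap x0).sub ((hL.const_mul (ft s)).add (LapAt.const (s + τ) x0))).sub
      ((LapAt.norm_sq x1 x0).const_mul ε)).nonpos hloc
    simp only [Hpen] at hl
    have n1 := P.nonneg D he hm x0
    rw [max_eq_left n1] at hl
    have hbb := mul_nonneg hfs.le (hb0 x0 hx0.1)
    have hwσ : s + σ ≤ w x0 := by simp only [hv] at hv0; linarith
    have h2 : φ (max (δ x0) e) * ft (w x0 + e) ≤ φ (δ x0) * ft s := by
      refine mul_le_mul (D.φanti hδ (lt_of_lt_of_le hδ (le_max_left _ _)) (le_max_left _ _))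
        (D.ftanti hs ?_ (by linarith))
        (D.ftpos _ (by linarith)).le (D.φpos _ hδ).le
      exact mem_Ioi.2 (by linarith)
    have h3 : 0 ≤ m * max (e - δ x0) 0 * w x0 := mul_nonneg (mul_nonneg hm (le_max_right _ _)) n1
    have h4 : ft s * L ≤ ft s * (- φ (δ x0)) := mul_le_mul_of_nonneg_left hLφ hfs.le
    have h5 : e * σ ≤ e * w x0 := mul_le_mul_of_nonneg_left (by linarith) he.le
    nlinarith
end

end PartD5

section PartD6

open scoped Topology
variable {N : ℕ}

lemma LocHol.congr {γ : ℝ} {g g' : Eu N → ℝ} {U : Set (Eu N)} (hU : IsOpen U) (h : LocHol γ g U)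
    (he : EqOn g g' U) : LocHol γ g' U := by
  intro x hx
  obtain ⟨C, hC, t, ht, hL⟩ := h x hx
  refine ⟨C, hC, t ∩ U, Filter.inter_mem ht (hU.mem_nhds hx), fun a ha b hb => ?_⟩
  rw [← he ha.2, ← he hb.2]
  exact hL a ha.1 b hb.1

section
variable {φ ft : ℝ → ℝ} {δ : Eu N → ℝ} {γ : NNReal}

lemma Pen.lower (D : Dat φ ft δ γ) {e m : ℝ} (he : 0 < e) (he1 : e ≤ 1) (hm : 0 ≤ m) {w : Eu N → ℝ}
    (P : Pen φ ft δ e m w) {y0 : Eu N} {d D0 a : ℝ} (ha : 0 < a) (hd : 0 < d) (had : a * d ^ 2 ≤ 1)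
    (hδ1 : ∀ y ∈ ball y0 d, e ≤ δ y) (hδ2 : ∀ y ∈ ball y0 d, δ y ≤ D0)
    (hc : a * (2 * N + d ^ 2) ≤ φ D0 * ft 2) : a * d ^ 2 ≤ w y0 := by
  have := compare_whole (v := fun x => a * d ^ 2 - a * ‖x - y0‖ ^ 2 - w x) (B := a * d ^ 2)
    (by have := P.cont; fun_prop) he
    (fun x => by have := P.nonneg D he hm x; have : 0 ≤ a * ‖x - y0‖ ^ 2 := by positivity
                 linarith)
    (fun x hx => ⟨_, ((LapAt.const (a * d ^ 2) x).sub ((LapAt.norm_sq y0 x).const_mul a)).sub (P.lap x), ?_⟩) y0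
  · simp at this; linarith
  · have n1 := P.nonneg D he hm x
    have hq : 0 ≤ a * ‖x - y0‖ ^ 2 := by positivity
    have hxb : x ∈ ball y0 d := by
      rw [mem_ball, dist_eq_norm]
      have h1 : a * ‖x - y0‖ ^ 2 < a * d ^ 2 := by linarith
      have h2 := lt_of_mul_lt_mul_left h1 ha.le
      exact lt_of_pow_lt_pow_left₀ 2 hd.le h2
    have e1 := hδ1 x hxb
    have e2 := hδ2 x hxb
    simp only [Hpen]
    rw [max_eq_left n1, max_eq_left e1, max_eq_right (by linarith : e - δ x ≤ 0)]
    have p0 : 0 < δ x := he.trans_le e1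
    have h2 : φ D0 * ft 2 ≤ φ (δ x) * ft (w x + e) := by
      refine mul_le_mul (D.φanti p0 (mem_Ioi.2 (p0.trans_le e2)) e2)
        (D.ftanti (mem_Ioi.2 (by linarith)) (mem_Ioi.2 two_pos) (by linarith))
        (D.ftpos 2 two_pos).le (D.φpos _ p0).le
    have h3 : e * (a * d ^ 2) ≤ 1 * (a * d ^ 2) := mul_le_mul_of_nonneg_right he1 (by positivity)
    have h4 : 0 ≤ e * (a * ‖x - y0‖ ^ 2) := by positivity
    nlinarith

theorem limit_exist (hN : 0 < N) (D : Dat φ ft δ γ) {V : Eu N → ℝ} {M : ℝ}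
    (hVc : ∀ x, 0 < δ x → ContinuousAt V x) (hV0 : ∀ x, 0 < δ x → 0 ≤ V x)
    (hVM : ∀ x, 0 < δ x → V x ≤ M)
    (hVL : ∀ x, 0 < δ x → ∃ L, LapAt V x L ∧ L ≤ - φ (δ x)) :
    ∃ w : Eu N → ℝ, (∀ x, δ x = 0 → w x = 0) ∧
      (∀ x, 0 < δ x → 0 < w x ∧ ContDiffAt ℝ 2 w x ∧ laplacian w x = - (φ (δ x) * ft (w x))) ∧
      (∀ x, 0 < δ x → ∀ s, 0 < s → w x ≤ s + ft s * V x) ∧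
      (∀ (R : Set (Eu N)) (b : Eu N → ℝ), IsClosed R → (∀ x ∈ R, 0 < δ x → ContinuousAt b x) →
        (∀ x ∈ R, 0 < δ x → 0 ≤ b x) →
        (∀ x ∈ R, 0 < δ x → M ≤ b x ∨ (R ∈ 𝓝 x ∧ ∃ L, LapAt b x L ∧ L ≤ - φ (δ x))) →
        ∀ x ∈ R, 0 < δ x → ∀ s, 0 < s → w x ≤ s + ft s * b x) := by
  have hδc := D.δlip.continuous
  set e : ℕ → ℝ := fun n => 1 / ((n : ℝ) + 1) with he
  have hep : ∀ n, 0 < e n := fun n => by simp only [he]; positivity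
  have he1 : ∀ n, e n ≤ 1 := fun n => by
    simp only [he]; rw [div_le_one (by positivity)]; have : (0:ℝ) ≤ n := by positivity
    linarith
  have hem : ∀ {n n'}, n ≤ n' → e n' ≤ e n := fun {n n'} h => by
    simp only [he]; have : (n:ℝ) ≤ n' := by exact_mod_cast h
    gcongr
  have het : Tendsto e atTop (𝓝 0) := tendsto_one_div_add_atTop_nhds_zero_nat
  have hex : ∀ n j : ℕ, ∃ w, Pen φ ft δ (e n) ((j : ℝ) + 1) w := fun n j =>
    pen_sol hN D (hep n) (by positivity)
  choose W hW using hex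
  have W0 : ∀ n j x, 0 ≤ W n j x := fun n j x => (hW n j).nonneg D (hep n) (by positivity) x
  have Wanti : ∀ n x, Antitone (fun j => W n j x) := fun n x j j' h =>
    (hW n j').mono D (hep n) le_rfl (by positivity) (by have : (j:ℝ) ≤ j' := by exact_mod_cast h
                                                        linarith) (hW n j) x
  have Wbdd : ∀ n x, BddBelow (range fun j => W n j x) := fun n x => ⟨0, by rintro _ ⟨j, rfl⟩; exact W0 n j x⟩
  set wn : ℕ → Eu N → ℝ := fun n x => ⨅ j, W n j x with hwn
  have Wt : ∀ n x, Tendsto (fun j => W n j x) atTop (𝓝 (wn n x)) := fun n x =>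
    tendsto_atTop_ciInf (Wanti n x) (Wbdd n x)
  have wn0 : ∀ n x, 0 ≤ wn n x := fun n x => le_ciInf fun j => W0 n j x
  have wnmono : ∀ x, Monotone (fun n => wn n x) := by
    intro x n n' h
    refine ciInf_mono (Wbdd n x) fun j => ?_
    exact (hW n j).mono D (hep n') (hem h) (by positivity) le_rfl (hW n' j) x
  have hA : ∀ n, ∃ A : ℝ, 0 ≤ A ∧ ∀ j x, δ x ≤ e n / 2 → W n j x ≤ A / ((j : ℝ) + 1) := by
    intro n
    obtain ⟨A, hA, h⟩ := Pen.small D (hep n)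
    exact ⟨A, hA, fun j x hx => h _ (by positivity) _ (hW n j) x hx⟩
  choose A hA0 hAW using hA
  have At : ∀ n, Tendsto (fun j : ℕ => A n / ((j : ℝ) + 1)) atTop (𝓝 0) := fun n => by
    have := (tendsto_one_div_add_atTop_nhds_zero_nat (𝕜 := ℝ)).const_mul (A n)
    simpa [div_eq_mul_inv] using this
  have wnz : ∀ n x, δ x ≤ e n / 2 → wn n x = 0 := fun n x hx =>
    le_antisymm (le_of_tendsto_of_tendsto' (Wt n x) (At n) fun j => hAW n j x hx) (wn0 n x)
  -- barrier in terms of W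
  have Wbar : ∀ n j x, e n / 2 ≤ δ x → ∀ s, 0 < s → W n j x ≤ s + ft s * V x + A n / ((j:ℝ)+1) := by
    intro n j x hx s hs
    have hen := hep n
    refine (hW n j).barrier D (hep n) (by positivity) hs (div_nonneg (hA0 n) (by positivity))
      (S := {x | e n / 2 ≤ δ x}) (isClosed_le continuous_const hδc)
      (fun y hy => (hVc y (lt_of_lt_of_le (by positivity) hy)).continuousWithinAt)
      (fun y hy => hV0 y (lt_of_lt_of_le (by positivity) hy)) (fun y hy => ?_) x hx
    have hy0 : 0 < δ y := lt_of_lt_of_le (by positivity) hy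
    rcases (show e n / 2 ≤ δ y from hy).eq_or_lt with h | h
    · left
      have := hAW n j y h.ge
      have := mul_nonneg (D.ftpos s hs).le (hV0 y hy0)
      linarith
    · exact Or.inr ⟨Filter.mem_of_superset ((isOpen_lt continuous_const hδc).mem_nhds h)
        (fun z (hz : e n / 2 < δ z) => (show e n / 2 ≤ δ z from hz.le)), hy0, hVL y hy0⟩
  have lim_le : ∀ n x q, (∀ j, W n j x ≤ q + A n / ((j:ℝ)+1)) → wn n x ≤ q := by
    intro n x q h
    have := (At n).const_add q
    rw [add_zero] at this
    exact le_of_tendsto_of_tendsto' (Wt n x) this h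
  have wnbar : ∀ n x, 0 < δ x → ∀ s, 0 < s → wn n x ≤ s + ft s * V x := by
    intro n x hx s hs
    rcases le_total (e n / 2) (δ x) with h | h
    · exact lim_le n x _ fun j => Wbar n j x h s hs
    · rw [wnz n x h]
      have := mul_nonneg (D.ftpos s hs).le (hV0 x hx)
      linarith
  have wnR : ∀ (R : Set (Eu N)) (b : Eu N → ℝ), IsClosed R → (∀ x ∈ R, 0 < δ x → ContinuousAt b x) →
        (∀ x ∈ R, 0 < δ x → 0 ≤ b x) →
        (∀ x ∈ R, 0 < δ x → M ≤ b x ∨ (R ∈ 𝓝 x ∧ ∃ L, LapAt b x L ∧ L ≤ - φ (δ x))) →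
        ∀ n, ∀ x ∈ R, 0 < δ x → ∀ s, 0 < s → wn n x ≤ s + ft s * b x := by
    intro R b hR hbc hb0 hbL n x hxR hx s hs
    have hen := hep n
    rcases le_total (e n / 2) (δ x) with h | h
    · refine lim_le n x _ fun j => ?_
      refine (hW n j).barrier D (hep n) (by positivity) hs (div_nonneg (hA0 n) (by positivity))
        (S := R ∩ {x | e n / 2 ≤ δ x}) (hR.inter (isClosed_le continuous_const hδc))
        (fun y hy => (hbc y hy.1 (lt_of_lt_of_le (by positivity) hy.2)).continuousWithinAt)
        (fun y hy => hb0 y hy.1 (lt_of_lt_of_le (by positivity) hy.2)) (fun y hy => ?_) x ⟨hxR, h⟩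
      have hy0 : 0 < δ y := lt_of_lt_of_le (by positivity) hy.2
      rcases hbL y hy.1 hy0 with hM | ⟨hRn, hL⟩
      · left
        have h1 := Wbar n j y hy.2 s hs
        have h2 := mul_le_mul_of_nonneg_left ((hVM y hy0).trans hM) (D.ftpos s hs).le
        linarith
      · rcases (show e n / 2 ≤ δ y from hy.2).eq_or_lt with h | h
        · left
          have := hAW n j y h.ge
          have := mul_nonneg (D.ftpos s hs).le (hb0 y hy.1 hy0)
          linarith
        · exact Or.inr ⟨Filter.inter_mem hRn (Filter.mem_of_superset
            ((isOpen_lt continuous_const hδc).mem_nhds h) (fun z (hz : e n / 2 < δ z) => (show e n / 2 ≤ δ z from hz.le))), hy0, hL⟩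
    · rw [wnz n x h]
      have := mul_nonneg (D.ftpos s hs).le (hb0 x hxR hx)
      linarith
  set M1 := max (1 + ft 1 * M) 0 with hM1
  have wnM : ∀ n x, wn n x ≤ M1 := by
    intro n x
    rcases (D.δnn x).eq_or_lt with h | h
    · rw [wnz n x (by rw [← h]; have := hep n; positivity)]; exact le_max_right _ _
    · refine (wnbar n x h 1 one_pos).trans (le_max_of_le_left ?_)
      have := mul_le_mul_of_nonneg_left (hVM x h) (D.ftpos 1 one_pos).le
      linarith
  have wnB : ∀ x, BddAbove (range fun n => wn n x) := fun x => ⟨M1, by rintro _ ⟨n, rfl⟩; exact wnM n x⟩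
  set w : Eu N → ℝ := fun x => ⨆ n, wn n x with hw
  have wt : ∀ x, Tendsto (fun n => wn n x) atTop (𝓝 (w x)) := fun x =>
    tendsto_atTop_ciSup (wnmono x) (wnB x)
  have wnle : ∀ n x, wn n x ≤ w x := fun n x => le_ciSup (wnB x) n
  have wM : ∀ x, |w x| ≤ M1 := fun x => by
    rw [abs_of_nonneg ((wn0 0 x).trans (wnle 0 x))]
    exact ciSup_le fun n => wnM n x
  have Wmeas : ∀ n j, Measurable (W n j) := fun n j => (hW n j).cont.measurable
  have wnmeas : ∀ n, Measurable (wn n) := fun n => measurable_of_tendsto_metrizable (Wmeas n)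
    (tendsto_pi_nhds.2 fun x => Wt n x)
  have wmeas : Measurable w := measurable_of_tendsto_metrizable wnmeas (tendsto_pi_nhds.2 wt)
  -- local lower bound
  have low : ∀ x r, 0 < r → (∀ y ∈ closedBall x r, 0 < δ y) → ∃ c > 0, ∃ d > 0, ∃ n0, ∀ n ≥ n0,
      e n < d ∧ ∀ y ∈ closedBall x r, d ≤ δ y ∧ c ≤ wn n y := by
    intro x r hr hpos
    obtain ⟨y1, hy1, hmin⟩ := (isCompact_closedBall x r).exists_isMinOn ⟨x, mem_closedBall_self hr.le⟩
      hδc.continuousOn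
    set d0 := δ y1 with hd0
    have hd0p : 0 < d0 := hpos y1 hy1
    set d := d0 / 2 with hd
    have hdp : 0 < d := by positivity
    set D0 := δ x + r + d with hD0
    have hD0p : 0 < D0 := by have := D.δnn x; positivity
    have hq : 0 < φ D0 * ft 2 := mul_pos (D.φpos _ hD0p) (D.ftpos 2 two_pos)
    set a := min (1 / d ^ 2) (φ D0 * ft 2 / (2 * N + d ^ 2)) with ha
    have hap : 0 < a := lt_min (by positivity) (by positivity)
    have ha1 : a * d ^ 2 ≤ 1 := by
      have := min_le_left (1 / d ^ 2) (φ D0 * ft 2 / (2 * N + d ^ 2))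
      rw [← ha, le_div_iff₀ (by positivity)] at this; exact this
    have ha2 : a * (2 * N + d ^ 2) ≤ φ D0 * ft 2 := by
      have := min_le_right (1 / d ^ 2) (φ D0 * ft 2 / (2 * N + d ^ 2))
      rw [← ha, le_div_iff₀ (by positivity)] at this; exact this
    obtain ⟨n0, hn0⟩ := (het.eventually (eventually_lt_nhds hdp)).exists_forall_of_atTop
    refine ⟨a * d ^ 2, by positivity, d, hdp, n0, fun n hn => ⟨hn0 n hn, fun y hy => ⟨?_, ?_⟩⟩⟩
    · have : d0 ≤ δ y := hmin hy
      linarith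
    · refine le_ciInf fun j => (hW n j).lower D (hep n) (he1 n) (by positivity) hap hdp ha1
        (D0 := D0) (fun z hz => ?_) (fun z hz => ?_) ha2
      · have h1 : d0 ≤ δ y := hmin hy
        have h := D.δlip.dist_le_mul z y
        rw [Real.dist_eq, NNReal.coe_one, one_mul] at h
        have h2 := (abs_le.1 h).1
        have h3 := mem_ball.1 hz
        have := hn0 n hn
        linarith
      · have h := D.δlip.dist_le_mul z x
        rw [Real.dist_eq, NNReal.coe_one, one_mul] at h
        have h2 := (abs_le.1 h).2
        have h3 := mem_ball.1 hz
        have h4 := mem_closedBall.1 hy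
        have := dist_triangle z y x
        linarith
  set Ω : Set (Eu N) := {x | 0 < δ x} with hΩ
  have hΩo : IsOpen Ω := isOpen_lt continuous_const hδc
  classical
  set φh : ℝ → ℝ := (Ioi (0:ℝ)).piecewise φ (fun _ => 0) with hφh
  set fh : ℝ → ℝ := (Ioi (0:ℝ)).piecewise ft (fun _ => 0) with hfh
  have φhm : Measurable φh := D.φcont.measurable_piecewise continuousOn_const measurableSet_Ioi
  have fhm : Measurable fh := ContinuousOn.measurable_piecewise
    (fun t ht => (D.ftcont ht).continuousWithinAt) continuousOn_const measurableSet_Ioi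
  have φhe : ∀ t, 0 < t → φh t = φ t := fun t ht => piecewise_eq_of_mem _ _ _ ht
  have fhe : ∀ t, 0 < t → fh t = ft t := fun t ht => piecewise_eq_of_mem _ _ _ ht
  set g : Eu N → ℝ := fun x => φh (δ x) * fh (w x) with hg
  have gm : Measurable g := (φhm.comp hδc.measurable).mul (fhm.comp wmeas)
  have wpos : ∀ x, 0 < δ x → 0 < w x := by
    intro x hx
    obtain ⟨r, hr, hrΩ⟩ := Metric.nhds_basis_closedBall.mem_iff.1 (hΩo.mem_nhds hx)
    obtain ⟨c, hc, d, hd, n0, h⟩ := low x r hr hrΩ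
    exact hc.trans_le (((h n0 le_rfl).2 x (mem_closedBall_self hr.le)).2.trans (wnle n0 x))
  have gle : ∀ x r, 0 < r → (∀ y ∈ closedBall x r, 0 < δ y) → ∃ Mg, ∀ y ∈ closedBall x r, |g y| ≤ Mg := by
    intro x r hr hrΩ
    obtain ⟨c, hc, d, hd, n0, h⟩ := low x r hr hrΩ
    refine ⟨φ d * ft c, fun y hy => ?_⟩
    have h1 := (h n0 le_rfl).2 y hy
    have hw1 : c ≤ w y := h1.2.trans (wnle n0 y)
    have hδy : 0 < δ y := hd.trans_le h1.1
    simp only [hg]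
    rw [φhe _ hδy, fhe _ (hc.trans_le hw1)]
    rw [abs_of_pos (mul_pos (D.φpos _ hδy) (D.ftpos _ (hc.trans_le hw1)))]
    exact mul_le_mul (D.φanti hd hδy h1.1) (D.ftanti hc (mem_Ioi.2 (hc.trans_le hw1)) hw1)
      (D.ftpos _ (hc.trans_le hw1)).le (D.φpos _ hd).le
  have hID : HasID Ω w g := by
    intro x r hr hrΩ
    obtain ⟨c, hc, d, hd, n0, h⟩ := low x r hr hrΩ
    -- first limit
    have ID1 : ∀ n ≥ n0, IDat (wn n) (fun y => Hpen φ ft δ (e n) 0 y (wn n y)) x r := by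
      intro n hn
      obtain ⟨h1, h2⟩ := h n hn
      have hen := hep n
      have hfe : 0 ≤ φ (e n) * ft (e n) := mul_nonneg (D.φpos _ (hep n)).le (D.ftpos _ (hep n)).le
      set Cn := φ (e n) * ft (e n) / e n with hCn
      have hCn0 : 0 ≤ Cn := by positivity
      have hCe : e n * Cn = φ (e n) * ft (e n) := by rw [hCn]; field_simp
      have hWC : ∀ j y, W n j y ≤ Cn := fun j y => (hW n j).le_const D (hep n) (by positivity) y
      have heq : ∀ j : ℕ, ∀ y ∈ closedBall x r, Hpen φ ft δ (e n) ((j:ℝ)+1) y (W n j y) =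
          φ (δ y) * ft (W n j y + e n) - e n * W n j y := by
        intro j y hy
        have := (h2 y hy).1
        simp only [Hpen]
        rw [max_eq_left (W0 n j y), max_eq_left (by linarith : e n ≤ δ y),
          max_eq_right (by linarith : e n - δ y ≤ 0), mul_zero, add_zero]
      refine IDat_limit (M := Cn + 2 * (φ (e n) * ft (e n))) (wk := fun j => W n j)
        (gk := fun j y => Hpen φ ft δ (e n) ((j:ℝ)+1) y (W n j y)) (Wmeas n)
        (fun j => (D.Hcont (hep n)).measurable.comp (measurable_id.prodMk (Wmeas n j))) hr
        (Eventually.of_forall fun j y _ => ?_) (Eventually.of_forall fun j y hy => ?_)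
        (fun y _ => Wt n y) (fun y hy => ?_) (Eventually.of_forall fun j => (hW n j).hid x r hr (subset_univ _))
      · rw [abs_of_nonneg (W0 n j y)]; linarith [hWC j y]
      · rw [heq j y hy]
        have b0 := W0 n j y
        have hδy := (h2 y hy).1
        have p0 : 0 < δ y := hd.trans_le hδy
        have b1 : φ (δ y) * ft (W n j y + e n) ≤ φ (e n) * ft (e n) :=
          mul_le_mul (D.φanti (hep n) p0 (by linarith)) (D.ftanti (hep n) (mem_Ioi.2 (by linarith)) (by linarith))
            (D.ftpos _ (by linarith)).le (D.φpos _ (hep n)).le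
        have b2 : 0 ≤ φ (δ y) * ft (W n j y + e n) :=
          mul_nonneg (D.φpos _ p0).le (D.ftpos _ (by linarith)).le
        have b3 : e n * W n j y ≤ e n * Cn := mul_le_mul_of_nonneg_left (hWC j y) (hep n).le
        have b4 : 0 ≤ e n * W n j y := by positivity
        rw [abs_le]; constructor <;> linarith
      · have hc1 : Tendsto (fun j => Hpen φ ft δ (e n) 0 y (W n j y)) atTop
            (𝓝 (Hpen φ ft δ (e n) 0 y (wn n y))) := by
          have c1 : Continuous (fun t => Hpen φ ft δ (e n) 0 y t) :=
            (D.Hcont (m := 0) (hep n)).comp (continuous_const.prodMk continuous_id)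
          exact (c1.tendsto _).comp (Wt n y)
        refine hc1.congr fun j => ?_
        have := (h2 y hy).1
        simp only [Hpen]
        rw [max_eq_right (by linarith : e n - δ y ≤ 0)]
        ring
    have hM10 : 0 ≤ M1 := le_max_right _ _
    have heq : ∀ n ≥ n0, ∀ y ∈ closedBall x r, Hpen φ ft δ (e n) 0 y (wn n y) =
          φ (δ y) * ft (wn n y + e n) - e n * wn n y := by
      intro n hn y hy
      obtain ⟨h1, h2⟩ := h n hn
      have := (h2 y hy).1
      simp only [Hpen]
      rw [max_eq_left (wn0 n y), max_eq_left (by linarith : e n ≤ δ y),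
          max_eq_right (by linarith : e n - δ y ≤ 0), mul_zero, add_zero]
    refine IDat_limit (M := M1 + φ d * ft c) (wk := wn)
        (gk := fun n y => Hpen φ ft δ (e n) 0 y (wn n y)) wnmeas
        (fun n => (D.Hcont (hep n)).measurable.comp (measurable_id.prodMk (wnmeas n))) hr
        (Eventually.of_forall fun n y _ => ?_) (eventually_atTop.2 ⟨n0, fun n hn y hy => ?_⟩)
        (fun y _ => wt y) (fun y hy => ?_) (eventually_atTop.2 ⟨n0, ID1⟩)
    · rw [abs_of_nonneg (wn0 n y)]
      have := mul_nonneg (D.φpos _ hd).le (D.ftpos _ hc).le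
      linarith [wnM n y]
    · rw [heq n hn y hy]
      obtain ⟨h1, h2⟩ := h n hn
      have b0 := wn0 n y
      have hen := hep n
      obtain ⟨hδy, hcy⟩ := h2 y hy
      have p0 : 0 < δ y := hd.trans_le hδy
      have b1 : φ (δ y) * ft (wn n y + e n) ≤ φ d * ft c :=
          mul_le_mul (D.φanti hd p0 hδy) (D.ftanti hc (mem_Ioi.2 (by linarith)) (by linarith))
            (D.ftpos _ (by linarith)).le (D.φpos _ hd).le
      have b2 : 0 ≤ φ (δ y) * ft (wn n y + e n) :=
          mul_nonneg (D.φpos _ p0).le (D.ftpos _ (by linarith)).le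
      have b3 : e n * wn n y ≤ 1 * M1 := mul_le_mul (he1 n) (wnM n y) b0 zero_le_one
      have b4 : 0 ≤ e n * wn n y := by positivity
      rw [abs_le]; constructor <;> linarith
    · have hy0 : 0 < δ y := hrΩ hy
      have wy := wpos y hy0
      have t1 : Tendsto (fun n => wn n y + e n) atTop (𝓝 (w y)) := by
        have := (wt y).add het
        rwa [add_zero] at this
      have t2 : Tendsto (fun n => φ (δ y) * ft (wn n y + e n) - e n * wn n y) atTop (𝓝 (g y)) := by
        have := (((D.ftcont wy).tendsto.comp t1).const_mul (φ (δ y))).sub (het.mul (wt y))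
        simp only [hg]
        rw [φhe _ hy0, fhe _ wy]
        rwa [zero_mul, sub_zero] at this
      exact t2.congr' (eventually_atTop.2 ⟨n0, fun n hn => (heq n hn y hy).symm⟩)
  have bw : LocBdd w Ω := fun x _ => ⟨M1, Eventually.of_forall wM⟩
  have bg : LocBdd g Ω := by
    intro x hx
    obtain ⟨r, hr, hrΩ⟩ := Metric.nhds_basis_closedBall.mem_iff.1 (hΩo.mem_nhds hx)
    obtain ⟨Mg, hMg⟩ := gle x r hr hrΩ
    exact ⟨Mg, Filter.mem_of_superset (closedBall_mem_nhds x hr) hMg⟩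
  have wl := reg1 hN hΩo hID wmeas gm bw bg
  have g0 : (0:ℝ) < γ := by exact_mod_cast D.γ0
  have g1 : (γ : ℝ) ≤ 1 := by exact_mod_cast D.γ1.le
  have l1 : LocLip (fun x => ft (w x)) Ω := wl.comp fun x hx => by
    obtain ⟨L, hL⟩ := D.ftlip (w x / 2) (by have := wpos x hx; positivity)
    exact ⟨L, _, Ici_mem_nhds (by have := wpos x hx; linarith), hL⟩
  have l2 : LocHol (γ : ℝ) (fun x => φ (δ x)) Ω := LocHol.comp_holder D.φhold D.δlip fun x hx => hx
  have l3 : LocHol (γ : ℝ) g Ω := by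
    refine ((l2.mul (LocHol.of_lip g1 l1) (LocBdd.of_cont (l2.cont g0)) (LocBdd.of_cont l1.cont))).congr hΩo ?_
    intro x hx
    simp only [hg]
    rw [φhe _ hx, fhe _ (wpos x hx)]
  refine ⟨w, fun x hx => ?_, fun x hx => ⟨wpos x hx, ?_⟩, fun x hx s hs => ?_, ?_⟩
  · have : ∀ n, wn n x = 0 := fun n => wnz n x (by rw [hx]; have := hep n; positivity)
    simp [hw, this]
  · obtain ⟨c1, c2⟩ := reg2 hN hΩo hID wmeas gm bw g0 g1 l3 x hx
    refine ⟨c1, ?_⟩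
    rw [c2]; simp only [hg]
    rw [φhe _ hx, fhe _ (wpos x hx)]
  · exact ciSup_le fun n => wnbar n x hx s hs
  · intro R b hR h1 h2 h3 x hxR hx s hs
    exact ciSup_le fun n => wnR R b hR h1 h2 h3 n x hxR hx s hs
end

end PartD6

section PartE

open scoped Topology
variable {N : ℕ}

noncomputable def uu (k : ℕ) (ρ r : ℝ) : ℝ := (ρ / r) ^ k

lemma uu_deriv (k : ℕ) (ρ : ℝ) {r : ℝ} (hr : 0 < r) :
    HasDerivAt (uu k ρ) (-(k / r * uu k ρ r)) r := by
  have h1 : HasDerivAt (fun r : ℝ => ρ / r) (-(ρ / r ^ 2)) r := by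
    have := (hasDerivAt_inv hr.ne').const_mul ρ
    refine (this.congr_deriv ?_)
    rw [mul_neg]; rfl
  have h2 := h1.pow k
  refine h2.congr_deriv ?_
  unfold uu
  rcases k with _ | k
  · simp
  · simp only [Nat.add_sub_cancel, pow_succ]
    field_simp

lemma uu_deriv2 (k : ℕ) (ρ : ℝ) {r : ℝ} (hr : 0 < r) :
    HasDerivAt (fun r => -(k / r * uu k ρ r)) (k * (k + 1) / r ^ 2 * uu k ρ r) r := by
  have h1 : HasDerivAt (fun r : ℝ => (k : ℝ) / r) (-(k / r ^ 2)) r := by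
    have := (hasDerivAt_inv hr.ne').const_mul (k : ℝ)
    refine (this.congr_deriv ?_)
    rw [mul_neg]; rfl
  refine ((h1.mul (uu_deriv k ρ hr)).neg).congr_deriv ?_
  field_simp
  ring

lemma uu_anti (k : ℕ) {ρ : ℝ} (hρ : 0 < ρ) {r s : ℝ} (hr : 0 < r) (hrs : r ≤ s) : uu k ρ s ≤ uu k ρ r := by
  unfold uu
  have : 0 < s := hr.trans_le hrs
  gcongr

lemma uu_pos (k : ℕ) {ρ : ℝ} (hρ : 0 < ρ) {r : ℝ} (hr : 0 < r) : 0 < uu k ρ r := by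
  unfold uu; positivity

lemma uu_le (k : ℕ) {ρ : ℝ} (hρ : 0 < ρ) {r : ℝ} (hr : ρ ≤ r) : uu k ρ r ≤ 1 := by
  unfold uu
  have : 0 < r := hρ.trans_le hr
  exact pow_le_one₀ (by positivity) ((div_le_one this).2 hr)

lemma uu_lt {k : ℕ} (hk : k ≠ 0) {ρ : ℝ} (hρ : 0 < ρ) {r : ℝ} (hr : ρ < r) : uu k ρ r < 1 := by
  unfold uu
  have : 0 < r := hρ.trans hr
  exact pow_lt_one₀ (by positivity) ((div_lt_one this).2 hr) hk

lemma uu_tendsto {k : ℕ} (hk : k ≠ 0) (ρ : ℝ) : Tendsto (uu k ρ) atTop (𝓝 0) := by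
  have : Tendsto (fun r : ℝ => ρ / r) atTop (𝓝 0) := tendsto_id.const_div_atTop ρ
  have := this.pow k
  rwa [zero_pow hk] at this

lemma uu_one (k : ℕ) {ρ : ℝ} (hρ : 0 < ρ) : uu k ρ ρ = 1 := by
  unfold uu; rw [div_self hρ.ne', one_pow]

theorem radial_exist (hN : 3 ≤ N) {φ : ℝ → ℝ} (hφpos : ∀ r : ℝ, 0 < r → 0 < φ r)
    (hφc : ContinuousOn φ (Ioi 0))
    (hφint : IntegrableOn (fun r : ℝ => r * φ r) (Ioi (0:ℝ)) volume) {ρ : ℝ} (hρ : 0 < ρ) :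
    ∃ v h : ℝ → ℝ, (∃ M, ∀ r, ρ < r → 0 ≤ v r ∧ v r ≤ M) ∧ Tendsto v atTop (𝓝 0) ∧
      Tendsto v (𝓝[>] ρ) (𝓝 0) ∧ (∀ r, ρ < r → ContinuousAt v r) ∧
      (∀ c x : Eu N, ρ < ‖x - c‖ → LapAt (fun y => v ‖y - c‖) x (- φ (‖x - c‖ - ρ))) ∧
      (∀ r, ρ < r → 0 < h r) ∧ Tendsto h (𝓝[>] ρ) (𝓝 0) ∧ (∀ r, ρ < r → ContinuousAt h r) ∧
      (∀ c x : Eu N, ρ < ‖x - c‖ → LapAt (fun y => h ‖y - c‖) x 0) := by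
  obtain ⟨k, rfl⟩ : ∃ k, N = k + 2 := ⟨N - 2, by omega⟩
  have hk0 : k ≠ 0 := by omega
  have hkp : (0:ℝ) < k := by positivity
  set u := uu k ρ with hu
  have hrp : ∀ {r}, ρ < r → 0 < r := fun h => hρ.trans h
  have u0 : ∀ {r}, ρ < r → 0 < u r := fun h => uu_pos k hρ (hrp h)
  have u1 : ∀ {r}, ρ < r → u r < 1 := fun h => uu_lt hk0 hρ h
  have uc : ∀ {r}, ρ < r → ContinuousAt u r := fun h => (uu_deriv k ρ (hrp h)).continuousAt
  have uρ : Tendsto u (𝓝[>] ρ) (𝓝 1) := by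
    have := (uu_deriv k ρ hρ).continuousAt.tendsto
    rw [uu_one k hρ] at this
    exact this.mono_left nhdsWithin_le_nhds
  set q : ℝ → ℝ := fun s => s ^ (k + 1) * φ (s - ρ) with hq
  have q0 : ∀ {s}, ρ < s → 0 ≤ q s := fun h => mul_nonneg (pow_nonneg (hrp h).le _) (hφpos _ (sub_pos.2 h)).le
  have qc : ∀ {s}, ρ < s → ContinuousAt q s := fun {s} h => by
    have h1 : ContinuousAt φ (s - ρ) := hφc.continuousAt (Ioi_mem_nhds (sub_pos.2 h))
    have h2 : ContinuousAt (fun s => φ (s - ρ)) s :=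
      ContinuousAt.comp (f := fun s => s - ρ) (x := s) h1 (by fun_prop)
    exact (by fun_prop : ContinuousAt (fun s : ℝ => s ^ (k+1)) s).mul h2
  -- dominating function
  set d : ℝ → ℝ := fun s => ρ ^ k * k * ((s - ρ) * φ (s - ρ)) with hd
  have dint : IntegrableOn d (Ioi ρ) := by
    have h1 : IntegrableOn (fun s => (s - ρ) * φ (s - ρ)) (Ioi ρ) := by
      have := ((measurePreserving_sub_right volume ρ).integrableOn_comp_preimage
        (MeasurableEquiv.subRight ρ).measurableEmbedding (f := fun r => r * φ r) (s := Ioi 0)).2 hφint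
      have e : (fun s : ℝ => s - ρ) ⁻¹' (Ioi 0) = Ioi ρ := by ext s; simp
      rwa [e] at this
    exact h1.const_mul _
  have dle : ∀ {s}, ρ < s → u s * (1 - u s) * q s ≤ d s := by
    intro s hs
    have hs0 := hrp hs
    have hb : 1 - u s ≤ k * ((s - ρ) / s) := by
      have := one_add_mul_le_pow (a := ρ / s - 1) (by have : 0 < ρ / s := by positivity
                                                      linarith) k
      have e : (1 + (ρ / s - 1)) ^ k = u s := by simp only [hu, uu]; congr 1; ring
      rw [e] at this
      have e2 : (s - ρ) / s = 1 - ρ / s := by field_simp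
      rw [e2]; linarith
    have huq : u s * q s = ρ ^ k * (s * φ (s - ρ)) := by
      simp only [hu, hq, uu, div_pow, pow_succ]; field_simp
    calc u s * (1 - u s) * q s = (1 - u s) * (u s * q s) := by ring
      _ ≤ (k * ((s - ρ) / s)) * (u s * q s) :=
          mul_le_mul_of_nonneg_right hb (mul_nonneg (u0 hs).le (q0 hs))
      _ = d s := by rw [huq]; simp only [hd]; field_simp
  have pint : ∀ {r}, ρ < r → IntegrableOn (fun s => (1 - u s) * q s) (Ioc ρ r) := by
    intro r hr
    have := (dint.mono_set (Ioc_subset_Ioi_self : Ioc ρ r ⊆ Ioi ρ)).const_mul ((u r)⁻¹)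
    refine this.mono' (ContinuousOn.aestronglyMeasurable (fun s hs =>
      ((continuousAt_const.sub (uc hs.1)).mul (qc hs.1)).continuousWithinAt) measurableSet_Ioc) ?_
    refine (ae_restrict_iff' measurableSet_Ioc).2 (Eventually.of_forall fun s hs => ?_)
    have a1 : 0 ≤ (1 - u s) * q s := mul_nonneg (sub_nonneg.2 (u1 hs.1).le) (q0 hs.1)
    rw [Real.norm_of_nonneg a1, ← div_eq_inv_mul, le_div_iff₀ (u0 hr)]
    refine le_trans ?_ (dle hs.1)
    have : u r ≤ u s := uu_anti k hρ (hrp hs.1) hs.2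
    nlinarith
  have Qint : ∀ {r}, ρ < r → IntegrableOn (fun s => u s * q s) (Ioi r) := by
    intro r hr
    have := (dint.mono_set (Ioi_subset_Ioi hr.le)).const_mul ((1 - u r)⁻¹)
    have hlt : ∀ {s}, s ∈ Ioi r → ρ < s := fun h => hr.trans h
    refine this.mono' (ContinuousOn.aestronglyMeasurable (fun s hs =>
      ((uc (hlt hs)).mul (qc (hlt hs))).continuousWithinAt) measurableSet_Ioi) ?_
    refine (ae_restrict_iff' measurableSet_Ioi).2 (Eventually.of_forall fun s hs => ?_)
    have a1 : 0 ≤ u s * q s := mul_nonneg (u0 (hlt hs)).le (q0 (hlt hs))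
    rw [Real.norm_of_nonneg a1, ← div_eq_inv_mul, le_div_iff₀ (sub_pos.2 (u1 hr))]
    refine le_trans ?_ (dle (hlt hs))
    have : u s ≤ u r := uu_anti k hρ (hrp hr) (le_of_lt hs)
    nlinarith
  set P : ℝ → ℝ := fun r => ∫ s in ρ..r, (1 - u s) * q s with hP
  set Q : ℝ → ℝ := fun r => ∫ s in Ioi r, u s * q s with hQ
  have pcont : ∀ {r}, ρ < r → ContinuousAt (fun s => (1 - u s) * q s) r := fun h =>
    (continuousAt_const.sub (uc h)).mul (qc h)
  have ccont : ∀ {r}, ρ < r → ContinuousAt (fun s => u s * q s) r := fun h => (uc h).mul (qc h)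
  have smf : ∀ {F : ℝ → ℝ}, (∀ {r}, ρ < r → ContinuousAt F r) → ∀ {r}, ρ < r →
      StronglyMeasurableAtFilter F (𝓝 r) volume := by
    intro F hF r hr
    exact ContinuousOn.stronglyMeasurableAtFilter isOpen_Ioi
      (fun s hs => (hF hs).continuousWithinAt) r hr
  have Pd : ∀ {r}, ρ < r → HasDerivAt P ((1 - u r) * q r) r := by
    intro r hr
    exact intervalIntegral.integral_hasDerivAt_right
      ((intervalIntegrable_iff_integrableOn_Ioc_of_le hr.le).2 (pint hr)) (smf pcont hr) (pcont hr)
  have Qd : ∀ {r}, ρ < r → HasDerivAt Q (-(u r * q r)) r := by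
    intro r hr
    set a := (ρ + r) / 2 with ha
    have ha1 : ρ < a := by rw [ha]; linarith
    have ha2 : a < r := by rw [ha]; linarith
    have hi : ∀ {t}, a < t → IntervalIntegrable (fun s => u s * q s) volume a t := fun ht =>
      (intervalIntegrable_iff_integrableOn_Ioc_of_le ht.le).2 ((Qint ha1).mono_set Ioc_subset_Ioi_self)
    have h1 := (intervalIntegral.integral_hasDerivAt_right (hi ha2) (smf ccont hr) (ccont hr)).const_sub
      (∫ s in Ioi a, u s * q s)
    refine h1.congr_of_eventuallyEq ?_
    filter_upwards [Ioi_mem_nhds ha2] with t ht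
    have := intervalIntegral.integral_interval_add_Ioi (Qint ha1) (Qint (ha1.trans ht))
    simp only [hQ]; linarith
  set C := 1 / (k * ρ ^ k) with hC
  have hC0 : 0 < C := by positivity
  set v : ℝ → ℝ := fun r => C * (u r * P r + (1 - u r) * Q r) with hv
  set v1 : ℝ → ℝ := fun r => C * ((-(k / r * u r)) * (P r - Q r)) with hv1
  have vd : ∀ {r}, ρ < r → HasDerivAt v (v1 r) r := by
    intro r hr
    have hud := uu_deriv k ρ (hrp hr)
    have := (((hud.mul (Pd hr)).add ((hud.const_sub 1).mul (Qd hr))).const_mul C)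
    refine this.congr_deriv ?_
    simp only [hv1, ← hu]
    ring
  have v1d : ∀ {r}, ρ < r → HasDerivAt v1 (C * (k * (k + 1) / r ^ 2 * u r * (P r - Q r)
      + (-(k / r * u r)) * q r)) r := by
    intro r hr
    have := ((uu_deriv2 k ρ (hrp hr)).mul ((Pd hr).sub (Qd hr))).const_mul C
    refine this.congr_deriv ?_
    simp only [← hu, Pi.sub_apply]
    ring
  -- Green function representation
  set G : ℝ → ℝ → ℝ := fun r s => (min (u r) (u s) - u r * u s) * q s with hG
  have Gb : ∀ {r s}, ρ < r → ρ < s → 0 ≤ G r s ∧ G r s ≤ d s := by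
    intro r s hr hs
    have a1 := u0 hr; have a2 := u1 hr; have a3 := u0 hs; have a4 := u1 hs
    have a5 := q0 hs
    have b1 : 0 ≤ min (u r) (u s) - u r * u s := by
      rcases le_total (u r) (u s) with h | h
      · rw [min_eq_left h]; nlinarith
      · rw [min_eq_right h]; nlinarith
    have b2 : min (u r) (u s) - u r * u s ≤ u s * (1 - u s) := by
      rcases le_total (u r) (u s) with h | h
      · rw [min_eq_left h]; nlinarith
      · rw [min_eq_right h]; nlinarith
    exact ⟨mul_nonneg b1 a5, (mul_le_mul_of_nonneg_right b2 a5).trans (dle hs)⟩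
  have Gm : ∀ {r}, ρ < r → AEStronglyMeasurable (G r) (volume.restrict (Ioi ρ)) := by
    intro r hr
    refine ContinuousOn.aestronglyMeasurable (fun s hs => ContinuousAt.continuousWithinAt ?_) measurableSet_Ioi
    exact ((continuousAt_const.min (uc hs)).sub (continuousAt_const.mul (uc hs))).mul (qc hs)
  have Gint : ∀ {r}, ρ < r → IntegrableOn (G r) (Ioi ρ) := by
    intro r hr
    refine dint.mono' (Gm hr) ((ae_restrict_iff' measurableSet_Ioi).2 (Eventually.of_forall fun s hs => ?_))
    rw [Real.norm_of_nonneg (Gb hr hs).1]; exact (Gb hr hs).2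
  have vG : ∀ {r}, ρ < r → v r = C * ∫ s in Ioi ρ, G r s := by
    intro r hr
    simp only [hv]
    congr 1
    rw [← Ioc_union_Ioi_eq_Ioi hr.le, setIntegral_union Ioc_disjoint_Ioi_same measurableSet_Ioi
      ((Gint hr).mono_set Ioc_subset_Ioi_self) ((Gint hr).mono_set (Ioi_subset_Ioi hr.le))]
    congr 1
    · simp only [hP]
      rw [intervalIntegral.integral_of_le hr.le, ← integral_const_mul]
      refine setIntegral_congr_fun measurableSet_Ioc fun s hs => ?_
      have : u r ≤ u s := uu_anti k hρ (hrp hs.1) hs.2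
      simp only [hG]
      rw [min_eq_left this]; ring
    · simp only [hQ]
      rw [← integral_const_mul]
      refine setIntegral_congr_fun measurableSet_Ioi fun s hs => ?_
      have : u s ≤ u r := uu_anti k hρ (hrp hr) (le_of_lt hs)
      simp only [hG]
      rw [min_eq_right this]; ring
  have lim : ∀ (l : Filter ℝ) [l.IsCountablyGenerated] (a : ℝ), (∀ᶠ r in l, ρ < r) → Tendsto u l (𝓝 a) →
      (∀ s, ρ < s → min a (u s) - a * u s = 0) → Tendsto v l (𝓝 0) := by
    intro l _ a hl hua hz
    have : Tendsto (fun r => ∫ s in Ioi ρ, G r s) l (𝓝 (∫ s in Ioi ρ, (0:ℝ))) := by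
      refine tendsto_integral_filter_of_dominated_convergence d ?_ ?_ dint ?_
      · filter_upwards [hl] with r hr using Gm hr
      · filter_upwards [hl] with r hr
        refine (ae_restrict_iff' measurableSet_Ioi).2 (Eventually.of_forall fun s hs => ?_)
        rw [Real.norm_of_nonneg (Gb hr hs).1]; exact (Gb hr hs).2
      · refine (ae_restrict_iff' measurableSet_Ioi).2 (Eventually.of_forall fun s hs => ?_)
        have := ((hua.min (tendsto_const_nhds (x := u s))).sub (hua.mul_const (u s))).mul_const (q s)
        rw [hz s hs, zero_mul] at this
        exact this
    have := this.const_mul C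
    rw [integral_zero, mul_zero] at this
    refine this.congr' ?_
    filter_upwards [hl] with r hr using (vG hr).symm
  refine ⟨v, fun r => 1 - u r, ⟨C * ∫ s in Ioi ρ, d s, fun r hr => ⟨?_, ?_⟩⟩, ?_, ?_,
    fun r hr => (vd hr).continuousAt, ?_, fun r hr => sub_pos.2 (u1 hr), ?_,
    fun r hr => continuousAt_const.sub (uc hr), ?_⟩
  · rw [vG hr]
    exact mul_nonneg hC0.le (setIntegral_nonneg measurableSet_Ioi fun s hs => (Gb hr hs).1)
  · rw [vG hr]
    exact mul_le_mul_of_nonneg_left (setIntegral_mono_on (Gint hr) dint measurableSet_Ioi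
      fun s hs => (Gb hr hs).2) hC0.le
  · refine lim atTop 0 (eventually_gt_atTop ρ) (uu_tendsto hk0 ρ) fun s hs => ?_
    rw [min_eq_left (u0 hs).le]; ring
  · refine lim (𝓝[>] ρ) 1 self_mem_nhdsWithin uρ fun s hs => ?_
    rw [min_eq_right (u1 hs).le]; ring
  · intro c x hx
    have hx0 := hrp hx
    have hxc : x ≠ c := fun h => by rw [h, sub_self, norm_zero] at hx0; exact lt_irrefl _ hx0
    have := LapAt.radial (v := v) (v1 := v1) c x hxc
      ((eventually_gt_nhds hx).mono fun r hr => vd hr) (v1d hx)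
    convert this using 1
    simp only [hv1, hq, hC, hu, uu, div_pow]
    push_cast
    field_simp
    ring
  · have := (tendsto_const_nhds (x := (1:ℝ))).sub uρ
    rwa [sub_self] at this
  · intro c x hx
    have hx0 := hrp hx
    have hxc : x ≠ c := fun h => by rw [h, sub_self, norm_zero] at hx0; exact lt_irrefl _ hx0
    have := LapAt.radial (v := fun r => 1 - u r) (v1 := fun r => -(-(k / r * u r))) c x hxc
      ((eventually_gt_nhds hx).mono fun r hr => (uu_deriv k ρ (hrp hr)).const_sub 1)
      ((uu_deriv2 k ρ hx0).neg)
    convert this using 1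
    simp only [← hu]
    push_cast
    field_simp
    ring

end PartE

section PartG

open scoped Topology
variable {N : ℕ}

lemma ft_lip {f : ℝ → ℝ} (hf : ContDiffOn ℝ 1 f (Ioi (0:ℝ))) {M0 : ℝ} (hM0 : 0 < M0) (a : ℝ)
    (ha : 0 < a) : ∃ L : NNReal, LipschitzOnWith L (fun t => f (min t M0)) (Ici a) := by
  set b := min a M0 with hb
  have hb0 : 0 < b := lt_min ha hM0
  have hloc : LocallyLipschitzOn (Icc b M0) f := by
    intro x hx
    have hx0 : 0 < x := hb0.trans_le hx.1
    obtain ⟨K, t, ht, hK⟩ :=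
      (hf.contDiffAt (Ioi_mem_nhds hx0)).exists_lipschitzOnWith
    exact ⟨K, t, mem_nhdsWithin_of_mem_nhds ht, hK⟩
  obtain ⟨L, hL⟩ := hloc.exists_lipschitzOnWith_of_compact isCompact_Icc
  refine ⟨L * 1, ?_⟩
  have h1 : LipschitzOnWith 1 (fun t : ℝ => min t M0) (Ici a) :=
    (LipschitzWith.id.min_const M0).lipschitzOnWith
  exact hL.comp h1 (fun t ht => ⟨min_le_min_right _ ht, min_le_right _ _⟩)

lemma ball_gap {k : ℕ} (c : Fin k → Eu N) (ρ : Fin k → ℝ) (hρ : ∀ i, 0 < ρ i)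
    (hdisj : Pairwise fun i j => Disjoint (closedBall (c i) (ρ i)) (closedBall (c j) (ρ j)))
    (i : Fin k) : ∃ d, 0 < d ∧ ∀ x, ρ i < ‖x - c i‖ → ‖x - c i‖ ≤ ρ i + d →
      ‖x - c i‖ - ρ i ≤ infDist x (⋃ i, closedBall (c i) (ρ i)) := by
  have h1 : ∀ᶠ d : ℝ in 𝓝[>] 0, ∀ j, j ≠ i → ρ i + ρ j + 2 * d ≤ dist (c i) (c j) := by
    rw [eventually_all]
    intro j
    by_cases hj : j = i
    · exact Eventually.of_forall fun d h => absurd hj h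
    have h2 := (disjoint_closedBall_closedBall_iff (hρ i).le (hρ j).le).1 (hdisj (Ne.symm hj))
    have h3 : Tendsto (fun d : ℝ => ρ i + ρ j + 2 * d) (𝓝[>] 0) (𝓝 (ρ i + ρ j + 2 * 0)) :=
      (Continuous.tendsto (by fun_prop) _).mono_left nhdsWithin_le_nhds
    filter_upwards [h3.eventually_lt_const (by linarith : _ < dist (c i) (c j))] with d hd _
    exact hd.le
  obtain ⟨d, hd, hd0⟩ := (h1.and self_mem_nhdsWithin).exists
  refine ⟨d, hd0, fun x hx1 hx2 => ?_⟩
  have hne : (⋃ i, closedBall (c i) (ρ i)).Nonempty :=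
    ⟨c i, mem_iUnion.2 ⟨i, mem_closedBall_self (hρ i).le⟩⟩
  rw [le_infDist hne]
  intro y hy
  obtain ⟨j, hj⟩ := mem_iUnion.1 hy
  rw [mem_closedBall] at hj
  rw [← dist_eq_norm] at hx1 hx2 ⊢
  by_cases hji : j = i
  · subst hji
    have := dist_triangle x y (c j)
    linarith
  · have h4 := hd j hji
    have h5 := dist_triangle4 (c i) x y (c j)
    rw [dist_comm (c i) x] at h5
    linarith

lemma minimal_aux {K : Set (Eu N)} (hK : IsClosed K) {g : Eu N → ℝ} {f : ℝ → ℝ} {w u : Eu N → ℝ}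
    (hg : ∀ x ∈ Kᶜ, 0 < g x) (hfanti : StrictAntiOn f (Ioi (0:ℝ)))
    (hwc : Continuous w) (hw0 : ∀ x ∈ K, w x = 0) (hwt : Tendsto w (cocompact (Eu N)) (𝓝 0))
    (hw2 : ContDiffOn ℝ 2 w Kᶜ) (hw : ∀ x ∈ Kᶜ, 0 < w x ∧ -laplacian w x = g x * f (w x))
    (hu2 : ContDiffOn ℝ 2 u Kᶜ) (hu : ∀ x ∈ Kᶜ, 0 < u x ∧ g x * f (u x) ≤ -laplacian u x) :
    ∀ x ∈ Kᶜ, w x ≤ u x := by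
  intro x1 hx1
  by_contra hcon
  push Not at hcon
  set σ := w x1 - u x1 with hσ
  have hσ0 : 0 < σ := sub_pos.2 hcon
  have hKo : IsOpen Kᶜ := hK.isOpen_compl
  set S := {x | σ ≤ w x} with hS
  have hSc : IsClosed S := isClosed_le continuous_const hwc
  have hSK : S ⊆ Kᶜ := fun x (hx : σ ≤ w x) hxK => by
    rw [hw0 x hxK] at hx; linarith
  have hScomp : IsCompact S := by
    have h1 := hwt.eventually_lt_const hσ0
    obtain ⟨T, hT, hT2⟩ := mem_cocompact.1 h1
    refine hT.of_isClosed_subset hSc fun x (hx : σ ≤ w x) => ?_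
    by_contra hxT
    have : w x < σ := hT2 hxT
    linarith
  have hx1S : x1 ∈ S := show σ ≤ w x1 by have := (hu x1 hx1).1; linarith
  have hcont : ContinuousOn (fun x => w x - u x) S :=
    hwc.continuousOn.sub (hu2.continuousOn.mono hSK)
  obtain ⟨x0, hx0, hmax⟩ := hScomp.exists_isMaxOn ⟨x1, hx1S⟩ hcont
  have h01 : σ ≤ w x0 - u x0 := hmax hx1S
  have hx0K := hSK hx0
  have hloc : IsLocalMax (fun x => w x - u x) x0 := by
    filter_upwards [hKo.mem_nhds hx0K] with x hx
    by_cases hxS : x ∈ S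
    · exact hmax hxS
    · have h2 : w x < σ := not_le.1 hxS
      have := (hu x hx).1
      show w x - u x ≤ w x0 - u x0
      linarith
  have hL := ((LapAt.of_contDiffAt (hw2.contDiffAt (hKo.mem_nhds hx0K))).sub
    (LapAt.of_contDiffAt (hu2.contDiffAt (hKo.mem_nhds hx0K)))).nonpos hloc
  have h3 := (hw x0 hx0K).2
  have h4 := (hu x0 hx0K).2
  have h5 : f (w x0) < f (u x0) := hfanti (hu x0 hx0K).1 (hw x0 hx0K).1 (by linarith)
  have h6 := mul_lt_mul_of_pos_left h5 (hg x0 hx0K)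
  linarith

end PartG

section PartH

open scoped Topology
variable {N : ℕ}

lemma main_aux (hN : 3 ≤ N) (k : ℕ) (hk : 1 ≤ k)
    (c : Fin k → Eu N) (ρ : Fin k → ℝ) (hρ : ∀ i, 0 < ρ i)
    (hdisj : Pairwise fun i j => Disjoint (closedBall (c i) (ρ i)) (closedBall (c j) (ρ j)))
    (γ : NNReal) (hγ0 : 0 < γ) (hγ1 : γ < 1) (φ f : ℝ → ℝ)
    (hφpos : ∀ r : ℝ, 0 < r → 0 < φ r) (hφanti : AntitoneOn φ (Ioi (0:ℝ)))
    (hφhold : ∀ s : Set ℝ, IsCompact s → s ⊆ Ioi (0:ℝ) → ∃ C : NNReal, HolderOnWith C γ φ s)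
    (hφint : IntegrableOn (fun r : ℝ => r * φ r) (Ioi (0:ℝ)) volume)
    (hf : ContDiffOn ℝ 1 f (Ioi (0:ℝ))) (hfanti : StrictAntiOn f (Ioi (0:ℝ)))
    (hfpos : ∀ t : ℝ, 0 < t → 0 < f t) {K : Set (Eu N)}
    (hKdef : K = ⋃ i, closedBall (c i) (ρ i)) :
    ∃ w : Eu N → ℝ, Continuous w ∧ (∀ x ∈ K, w x = 0) ∧ ContDiffOn ℝ 2 w Kᶜ ∧
      (∀ x ∈ Kᶜ, 0 < w x ∧ -laplacian w x = φ (infDist x K) * f (w x)) ∧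
      Tendsto w (Filter.cocompact (Eu N)) (𝓝 0) := by
  have hKc : IsClosed K := by
    rw [hKdef]; exact isClosed_iUnion_of_finite fun i => isClosed_closedBall
  have hKne : K.Nonempty := by
    refine ⟨c ⟨0, hk⟩, ?_⟩
    rw [hKdef]; exact mem_iUnion.2 ⟨_, mem_closedBall_self (hρ _).le⟩
  set δ : Eu N → ℝ := fun x => infDist x K with hδ
  have hδpos : ∀ x, x ∉ K ↔ 0 < δ x := fun x => hKc.notMem_iff_infDist_pos hKne
  have hδ0 : ∀ x, x ∈ K → δ x = 0 := fun x hx => infDist_zero_of_mem hx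
  have hd1 : ∀ x, 0 < δ x → ∀ i, ρ i < ‖x - c i‖ := by
    intro x hx i
    by_contra h
    push Not at h
    refine (hδpos x).2 hx ?_
    rw [hKdef]
    exact mem_iUnion.2 ⟨i, by rw [mem_closedBall, dist_eq_norm]; exact h⟩
  have hd2 : ∀ x, 0 < δ x → ∃ i, ‖x - c i‖ - ρ i ≤ δ x := by
    intro x hx
    obtain ⟨y, hy, hxy⟩ := hKc.exists_infDist_eq_dist hKne x
    have hy' := hy
    rw [hKdef] at hy'
    obtain ⟨i, hi⟩ := mem_iUnion.1 hy'
    refine ⟨i, ?_⟩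
    rw [mem_closedBall] at hi
    rw [← dist_eq_norm]
    show _ ≤ infDist x K
    rw [hxy]
    have := dist_triangle x y (c i)
    linarith
  have hφc : ContinuousOn φ (Ioi 0) := by
    intro x hx
    have hx0 : 0 < x := hx
    obtain ⟨C, hC⟩ := hφhold (Icc (x/2) (x+1)) isCompact_Icc
      (fun y hy => lt_of_lt_of_le (by linarith) hy.1)
    have h1 := (hC.continuousOn hγ0) x ⟨by linarith, by linarith⟩
    exact (h1.continuousAt (Icc_mem_nhds (by linarith) (by linarith))).continuousWithinAt
  choose v h hvM hvtop hvρ hvc hvL hhpos hhρ hhc hhL using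
    fun i => radial_exist (N := N) hN hφpos hφc hφint (hρ i)
  choose Mi hMi using hvM
  set V : Eu N → ℝ := fun x => ∑ i, v i ‖x - c i‖ with hV
  set M : ℝ := ∑ i, Mi i with hM
  have hMi0 : ∀ i, 0 ≤ Mi i := fun i =>
    (hMi i (ρ i + 1) (by linarith)).1.trans (hMi i (ρ i + 1) (by linarith)).2
  have hM0 : 0 ≤ M := Finset.sum_nonneg fun i _ => hMi0 i
  have hnc : ∀ i x, ContinuousAt (fun y : Eu N => ‖y - c i‖) x := fun i x => by fun_prop
  have hVc : ∀ x, 0 < δ x → ContinuousAt V x := by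
    intro x hx
    refine tendsto_finsetSum _ fun i _ => ?_
    exact ContinuousAt.comp' (f := fun y : Eu N => ‖y - c i‖) (g := v i) (hvc i _ (hd1 x hx i)) (hnc i x)
  have hV0 : ∀ x, 0 < δ x → 0 ≤ V x := fun x hx =>
    Finset.sum_nonneg fun i _ => (hMi i _ (hd1 x hx i)).1
  have hVM : ∀ x, 0 < δ x → V x ≤ M := fun x hx =>
    Finset.sum_le_sum fun i _ => (hMi i _ (hd1 x hx i)).2
  have hVL : ∀ x, 0 < δ x → ∃ L, LapAt V x L ∧ L ≤ - φ (δ x) := by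
    intro x hx
    refine ⟨_, LapAt.sum Finset.univ (fun i _ => hvL i (c i) x (hd1 x hx i)), ?_⟩
    rw [Finset.sum_neg_distrib, neg_le_neg_iff]
    obtain ⟨i, hi⟩ := hd2 x hx
    have hp : ∀ j, 0 < ‖x - c j‖ - ρ j := fun j => sub_pos.2 (hd1 x hx j)
    calc φ (δ x) ≤ φ (‖x - c i‖ - ρ i) := hφanti (hp i) hx hi
      _ ≤ _ := Finset.single_le_sum (f := fun j => φ (‖x - c j‖ - ρ j))
        (fun j _ => (hφpos _ (hp j)).le) (Finset.mem_univ i)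
  set M0 : ℝ := 1 + f 1 * M with hM0d
  have hf1 := hfpos 1 one_pos
  have hM01 : 1 ≤ M0 := by have := mul_nonneg hf1.le hM0; linarith
  have hM0p : 0 < M0 := by linarith
  set ft : ℝ → ℝ := fun t => f (min t M0) with hft
  have D : Dat φ ft δ γ :=
    { φpos := hφpos
      φanti := hφanti
      φhold := hφhold
      ftpos := fun t ht => hfpos _ (lt_min ht hM0p)
      ftanti := fun s hs t ht hst =>
        hfanti.antitoneOn (lt_min hs hM0p) (lt_min ht hM0p) (min_le_min_right _ hst)
      ftlip := ft_lip hf hM0p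
      δlip := lipschitz_infDist_pt K
      δnn := fun x => infDist_nonneg
      γ0 := hγ0
      γ1 := hγ1 }
  obtain ⟨w, hwK, hwΩ, hwV, hwb⟩ := limit_exist (by omega) D hVc hV0 hVM hVL
  have hw0 : ∀ x ∈ K, w x = 0 := fun x hx => hwK x (hδ0 x hx)
  have hwnn : ∀ x, 0 ≤ w x := fun x => by
    by_cases hx : x ∈ K
    · exact (hw0 x hx).ge
    · exact (hwΩ x ((hδpos x).1 hx)).1.le
  -- general squeeze
  have sq : ∀ (l : Filter (Eu N)) (b : Eu N → ℝ), (∀ ε, 0 < ε → ∀ᶠ x in l, x ∉ K → b x < ε) →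
      (∀ᶠ x in l, x ∉ K → ∀ s, 0 < s → w x ≤ s + ft s * b x) → Tendsto w l (𝓝 0) := by
    intro l b hb hwb
    rw [tendsto_order]
    refine ⟨fun a ha => Eventually.of_forall fun x => ha.trans_le (hwnn x), fun a ha => ?_⟩
    have hs := D.ftpos (a/2) (by linarith)
    filter_upwards [hb (a / 2 / ft (a/2)) (by positivity), hwb] with x h1 h2
    by_cases hx : x ∈ K
    · rw [hw0 x hx]; exact ha
    · have h3 := h2 hx (a/2) (by linarith)
      have h4 := h1 hx
      rw [lt_div_iff₀ hs] at h4
      nlinarith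
  have hVt : Tendsto V (cocompact (Eu N)) (𝓝 0) := by
    have : Tendsto V (cocompact (Eu N)) (𝓝 (∑ _i : Fin k, (0:ℝ))) := by
      refine tendsto_finsetSum _ fun i _ => (hvtop i).comp ?_
      have h1 := tendsto_dist_right_cocompact_atTop (c i)
      simpa only [dist_eq_norm] using h1
    simpa using this
  have hwt : Tendsto w (cocompact (Eu N)) (𝓝 0) :=
    sq _ V (fun ε hε => (hVt.eventually_lt_const hε).mono fun x h _ => h)
      (Eventually.of_forall fun x hx => hwV x ((hδpos x).1 hx))
  have hwc : Continuous w := by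
    rw [continuous_iff_continuousAt]
    intro p
    by_cases hp : p ∈ K
    swap
    · exact (hwΩ p ((hδpos p).1 hp)).2.1.continuousAt
    have hp' := hp
    rw [hKdef] at hp'
    obtain ⟨i, hi⟩ := mem_iUnion.1 hp'
    rw [mem_closedBall, dist_eq_norm] at hi
    obtain ⟨d, hd, hgap⟩ := ball_gap c ρ hρ hdisj i
    rw [← hKdef] at hgap
    have hh0 := hhpos i (ρ i + d) (by linarith)
    set A := M / h i (ρ i + d) with hA
    have hA0 : 0 ≤ A := div_nonneg hM0 hh0.le
    set R : Set (Eu N) := {x | ‖x - c i‖ ≤ ρ i + d} with hR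
    set b : Eu N → ℝ := fun x => v i ‖x - c i‖ + A * h i ‖x - c i‖ with hb
    have hRc : IsClosed R := isClosed_le (by fun_prop) continuous_const
    have key := hwb R b hRc
      (fun x _ hx => by
        have h1 := hd1 x hx i
        have e1 : ContinuousAt (fun y => v i ‖y - c i‖) x := ContinuousAt.comp' (hvc i _ h1) (hnc i x)
        have e2 : ContinuousAt (fun y => h i ‖y - c i‖) x := ContinuousAt.comp' (hhc i _ h1) (hnc i x)
        exact e1.add (continuousAt_const.mul e2))
      (fun x _ hx => add_nonneg (hMi i _ (hd1 x hx i)).1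
        (mul_nonneg hA0 (hhpos i _ (hd1 x hx i)).le))
      (fun x (hxR : ‖x - c i‖ ≤ ρ i + d) hx => by
        have h1 := hd1 x hx i
        rcases hxR.eq_or_lt with he | hlt
        · left
          have h2 := (hMi i _ h1).1
          have h3 : A * h i ‖x - c i‖ = M := by rw [he, hA]; field_simp
          show M ≤ v i ‖x - c i‖ + A * h i ‖x - c i‖
          linarith
        · right
          refine ⟨?_, _, (hvL i (c i) x h1).add ((hhL i (c i) x h1).const_mul A), ?_⟩
          · filter_upwards [(hnc i x).eventually_lt_const hlt] with y hy
            exact le_of_lt (show ‖y - c i‖ < ρ i + d from hy)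
          · rw [mul_zero, add_zero, neg_le_neg_iff]
            exact hφanti (sub_pos.2 h1) hx (hgap x h1 hxR))
    have hbt : Tendsto (fun r => v i r + A * h i r) (𝓝[>] (ρ i)) (𝓝 0) := by
      simpa using (hvρ i).add ((hhρ i).const_mul A)
    show Tendsto w (𝓝 p) (𝓝 (w p))
    rw [hw0 p hp]
    refine sq _ b (fun ε hε => ?_) ?_
    · have h1 := hbt.eventually_lt_const hε
      rw [eventually_nhdsWithin_iff] at h1
      rcases hi.eq_or_lt with he | hlt
      · rw [← he] at h1
        filter_upwards [(hnc i p).eventually h1] with x hx hxK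
        exact hx (by rw [he]; exact hd1 x ((hδpos x).1 hxK) i)
      · filter_upwards [(hnc i p).eventually_lt_const hlt] with x hx hxK
        exact absurd (hd1 x ((hδpos x).1 hxK) i) (not_lt.2 hx.le)
    · filter_upwards [(hnc i p).eventually_lt_const (show ‖p - c i‖ < ρ i + d by linarith)] with x hx hxK
      exact key x (show ‖x - c i‖ ≤ ρ i + d from le_of_lt hx) ((hδpos x).1 hxK)
  refine ⟨w, hwc, hw0, fun x hx => (hwΩ x ((hδpos x).1 hx)).2.1.contDiffWithinAt,
    fun x hx => ?_, hwt⟩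
  have hx' := (hδpos x).1 hx
  obtain ⟨h1, -, h3⟩ := hwΩ x hx'
  refine ⟨h1, ?_⟩
  have h4 : w x ≤ M0 := by
    have h5 := hwV x hx' 1 one_pos
    have h6 : ft 1 = f 1 := by simp only [hft]; rw [min_eq_left hM01]
    rw [h6] at h5
    have := mul_le_mul_of_nonneg_left (hVM x hx') hf1.le
    linarith
  rw [h3, neg_neg]
  show φ (δ x) * f (min (w x) M0) = _
  rw [min_eq_left h4]

end PartH

/-- Theorem 3.4 (for a finite union of disjoint closed balls): existence of a minimal
ground-state solution when `∫₀^∞ r φ(r) dr < ∞`. -/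
theorem statement_6 {N : ℕ} (hN : 3 ≤ N) (k : ℕ) (hk : 1 ≤ k)
    (c : Fin k → EuclideanSpace ℝ (Fin N)) (ρ : Fin k → ℝ) (hρ : ∀ i, 0 < ρ i)
    (hdisj : Pairwise fun i j => Disjoint (closedBall (c i) (ρ i)) (closedBall (c j) (ρ j)))
    (γ : NNReal) (hγ0 : 0 < γ) (hγ1 : γ < 1) (φ f : ℝ → ℝ)
    (hφpos : ∀ r : ℝ, 0 < r → 0 < φ r) (hφanti : AntitoneOn φ (Ioi (0:ℝ)))
    (hφhold : ∀ s : Set ℝ, IsCompact s → s ⊆ Ioi (0:ℝ) → ∃ C : NNReal, HolderOnWith C γ φ s)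
    (hφint : IntegrableOn (fun r : ℝ => r * φ r) (Ioi (0:ℝ)) volume)
    (hf : ContDiffOn ℝ 1 f (Ioi (0:ℝ))) (hfanti : StrictAntiOn f (Ioi (0:ℝ)))
    (hfpos : ∀ t : ℝ, 0 < t → 0 < f t) :
    ∃ w : EuclideanSpace ℝ (Fin N) → ℝ,
      ContinuousOn w (interior (⋃ i, closedBall (c i) (ρ i)))ᶜ ∧
      ContDiffOn ℝ 2 w (⋃ i, closedBall (c i) (ρ i))ᶜ ∧
      (∀ x ∈ (⋃ i, closedBall (c i) (ρ i))ᶜ,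
        0 < w x ∧ -laplacian w x = φ (infDist x (⋃ i, closedBall (c i) (ρ i))) * f (w x)) ∧
      (∀ x ∈ frontier (⋃ i, closedBall (c i) (ρ i)), w x = 0) ∧
      Tendsto w (Filter.cocompact (EuclideanSpace ℝ (Fin N))) (nhds 0) ∧
      (∀ u : EuclideanSpace ℝ (Fin N) → ℝ,
        ContDiffOn ℝ 2 u (⋃ i, closedBall (c i) (ρ i))ᶜ →
        (∀ x ∈ (⋃ i, closedBall (c i) (ρ i))ᶜ,
          0 < u x ∧ φ (infDist x (⋃ i, closedBall (c i) (ρ i))) * f (u x) ≤ -laplacian u x) →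
        ∀ x ∈ (⋃ i, closedBall (c i) (ρ i))ᶜ, w x ≤ u x) := by
  obtain ⟨w, hwc, hw0, hw2, hw, hwt⟩ := main_aux hN k hk c ρ hρ hdisj γ hγ0 hγ1 φ f hφpos hφanti
    hφhold hφint hf hfanti hfpos rfl
  have hKc : IsClosed (⋃ i, closedBall (c i) (ρ i)) :=
    isClosed_iUnion_of_finite fun i => isClosed_closedBall
  refine ⟨w, hwc.continuousOn, hw2, hw, fun x hx => hw0 x (hKc.frontier_subset hx), hwt,
    fun u hu2 hu => ?_⟩
  refine minimal_aux hKc (fun x hx => hφpos _ ?_) hfanti hwc hw0 hwt hw2 hw hu2 hu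
  exact (hKc.notMem_iff_infDist_pos
    ⟨c ⟨0, hk⟩, mem_iUnion.2 ⟨_, mem_closedBall_self (hρ _).le⟩⟩).1 hx
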